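/- arXiv:1701.05726 — 7 statements merged into one kernel-verified Lean document; each statement's English description precedes it below -/
import Mathlib

section
/- Let Ω be a domain (open connected set) in ℂ and let f : Ω → ℂ be a continuous, light, and open map. Then for each z ∈ Ω there exist a positive integer k, an open neighborhood U ⊆ Ω of z, and homeomorphisms ψ : U → 𝔻 and φ : f(U) → 𝔻 onto the open unit disk 𝔻 ⊂ ℂ such that φ(f(x)) = (ψ(x))^k for all x ∈ U. -/
/-!
Let `f` be light and open. The proof has two parts, which both rest on the same counting estimate.

**Counting fibres** (`fibre_card_lt`). Let `F` be an open map on an open set `W` whose complement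
in the sphere is connected, and let `y` be a value. The preimage of a horizontal ray ending at `y`
is connected to infinity, by the maximum principle, so for a point `a` of the fibre over `y` the
function `z - a` has a continuous logarithm off the preimage of the right ray, and another one off
the preimage of the left ray. Their difference, divided by `2πi`, is an integer on each component
of the complement of the preimage of the whole line. If there are `s` such components and at least
`s` points in the fibre, then some nontrivial integer combination of these differences is constant,
so some `∏ (z - a) ^ g a` with `g ≠ 0` has a continuous logarithm off the fibre. This is impossible
on the boundary of a small neighbourhood of a point `a` with `g a ≠ 0`. Hence the fibre has fewer
than `s` points.

**Discreteness** (`exists_isolated`). Since the fibre through `z` is totally disconnected, `z` has a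
normal neighbourhood `W`, mapped properly to a disc around `f z`. Each component of the preimage of
an open half disc is mapped onto it, so by properness there are finitely many, and the estimate
shows that the fibre is finite in `W`.

**Power structure** (`exists_power`). Take `z = f z = 0` and lift `f` to logarithmic coordinates:
`exp (G ζ) = f (exp ζ)` with `G (ζ + 2πi) = G ζ + 2πi n`. The winding number `n` is nonzero by a
maximum argument, and positive after composing `f` with complex conjugation if necessary. Then `G`
is proper over a half plane, and the preimages of the two sides of a horizontal line are connected.
By the estimate, the fibres of `G` have fewer than two points, so `G` is a homeomorphism, and the
required `ψ` is `exp ((G - log r) / n)`.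
-/

namespace Stoilow

open Set Filter Topology

/-! ### Continuous logarithms -/

/-- Continuous logarithms are unique on connected sets as soon as they agree at one point. -/
lemma log_unique {S : Set ℂ} (hS : IsPreconnected S) {u v : ℂ → ℂ} (hu : ContinuousOn u S)
    (hv : ContinuousOn v S) (h : ∀ x ∈ S, Complex.exp (u x) = Complex.exp (v x))
    {a : ℂ} (ha : a ∈ S) (hav : u a = v a) : ∀ x ∈ S, u x = v x := by
  have key := (Complex.isCoveringMap_exp).eqOn_of_comp_eqOn (g₁ := u) (g₂ := v) hS hu hv
    (fun x hx => Subtype.ext (h x hx)) ha hav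
  exact fun x hx => key hx

/-- Two continuous logarithms of one function differ by a constant on a connected set. -/
lemma log_sub_const {S : Set ℂ} (hS : IsPreconnected S) {u v : ℂ → ℂ} (hu : ContinuousOn u S)
    (hv : ContinuousOn v S) (h : ∀ x ∈ S, Complex.exp (u x) = Complex.exp (v x))
    {a b : ℂ} (ha : a ∈ S) (hb : b ∈ S) : u a - v a = u b - v b := by
  have := log_unique hS (u := u) (v := fun x => v x + (u a - v a)) hu
    (hv.add continuousOn_const) (fun x hx => by
      rw [h x hx, Complex.exp_add, Complex.exp_sub, h a ha, div_self (Complex.exp_ne_zero _),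
        mul_one]) ha (by ring) b hb
  rw [this]; ring

/-- Every nowhere vanishing continuous function on the plane has a continuous logarithm. -/
lemma exists_log {F : ℂ → ℂ} (hF : Continuous F) (h0 : ∀ z, F z ≠ 0) :
    ∃ u : ℂ → ℂ, Continuous u ∧ ∀ z, Complex.exp (u z) = F z := by
  obtain ⟨u, hu, -⟩ := Complex.isCoveringMapOn_exp.existsUnique_continuousMap_lifts
    (⟨F, hF⟩ : C(ℂ, ℂ)) (a₀ := 0) (e₀ := Complex.log (F 0)) (Complex.exp_log (h0 0)) (fun x => h0 x)
  exact ⟨u, u.continuous, fun z => congrFun hu.2 z⟩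

/-- The monodromy of the logarithm: `(z - a) ^ c` on a circle about `a` is not the restriction of
a nowhere vanishing continuous function on the plane. -/
lemma no_extension_circle {F : ℂ → ℂ} (hF : Continuous F) (h0 : ∀ z, F z ≠ 0) {a : ℂ} {ρ : ℝ}
    (hρ : 0 < ρ) {c : ℤ} (hc : c ≠ 0) (h : ∀ z ∈ Metric.sphere a ρ, F z = (z - a) ^ c) : False := by
  obtain ⟨u, hu, hue⟩ := exists_log hF h0
  -- Compare `u` along the circle with the linear logarithm `c * (log ρ + iζ)`.
  set γ : ℂ → ℂ := fun ζ => a + ρ * Complex.exp (ζ.re * Complex.I) with hγ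
  have hγc : Continuous γ := by fun_prop
  have hγs : ∀ ζ, γ ζ ∈ Metric.sphere a ρ := by
    intro ζ
    simp [hγ, Complex.norm_exp_ofReal_mul_I, abs_of_pos hρ]
  have key := log_sub_const (S := univ) isPreconnected_univ (u := fun ζ => u (γ ζ))
    (v := fun ζ => c * (Complex.log ρ + ζ.re * Complex.I)) (by fun_prop) (by fun_prop)
    (fun ζ _ => by
      rw [hue, h _ (hγs ζ), Complex.exp_int_mul, Complex.exp_add,
        Complex.exp_log (by exact_mod_cast hρ.ne')]
      simp [hγ]) (mem_univ (0 : ℂ)) (mem_univ (2 * Real.pi : ℂ))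
  have h1 : γ (2 * Real.pi) = γ 0 := by
    have : ((2 * Real.pi : ℂ)).re = 2 * Real.pi := by simp
    simp only [hγ, this]
    push_cast
    rw [Complex.exp_two_pi_mul_I]; simp
  have h2 : ((2 * Real.pi : ℂ)).re = 2 * Real.pi := by simp
  rw [h1] at key
  simp only [h2, Complex.zero_re] at key
  have : (c : ℂ) * (2 * Real.pi * Complex.I) = 0 := by
    push_cast at key
    linear_combination key
  simp [hc, Real.pi_ne_zero] at this

/-- If `N` is a bounded open neighbourhood of `a`, then `(z - a) ^ c` has no continuous logarithm
on the frontier of `N`: otherwise Tietze extension over `N` would give a nowhere vanishing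
extension of `(z - a) ^ c` from a large circle to the plane. -/
lemma no_log_frontier {N : Set ℂ} (hN : IsOpen N) {a : ℂ} (ha : a ∈ N) {ρ : ℝ} (hρ : 0 < ρ)
    (hNρ : N ⊆ Metric.ball a ρ) {c : ℤ} (hc : c ≠ 0) {g : ℂ → ℂ} (hg : ContinuousOn g (frontier N))
    (hge : ∀ z ∈ frontier N, Complex.exp (g z) = (z - a) ^ c) : False := by
  classical
  obtain ⟨G, hG⟩ := ContinuousMap.exists_restrict_eq (s := frontier N) isClosed_frontier
    ⟨(frontier N).domRestrict g, continuousOn_iff_continuous_domRestrict.mp hg⟩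
  have hGg : ∀ z ∈ frontier N, G z = g z := fun z hz => by
    have := congrArg (fun φ : C(frontier N, ℂ) => φ ⟨z, hz⟩) hG
    simpa using this
  have hna : ∀ z, z ∉ N → z - a ≠ 0 := fun z hz h => hz (by rwa [sub_eq_zero.mp h])
  refine no_extension_circle (a := a) (F := N.piecewise (fun z => Complex.exp (G z)) (fun z => (z - a) ^ c))
    ?_ ?_ hρ hc ?_
  · refine continuous_piecewise (fun z hz => ?_) (by fun_prop) ?_
    · rw [hGg z hz, hge z hz]
    · rw [hN.isClosed_compl.closure_eq]
      exact (continuousOn_id.sub continuousOn_const).zpow₀ c (fun z hz => Or.inl (hna z hz))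
  · intro z
    by_cases hz : z ∈ N
    · simp [hz, Complex.exp_ne_zero]
    · simpa [hz] using zpow_ne_zero c (hna z hz)
  · intro z hz
    have : z ∉ N := fun h => by
      have := hNρ h
      rw [Metric.mem_ball] at this
      exact absurd (Metric.mem_sphere.mp hz) this.ne
    simp [this]

/-- `E` together with the point at infinity is connected, for closed `E`: no nonempty compact
subset of `E` is relatively open in `E`. -/
def EndsAtInfinity (E : Set ℂ) : Prop :=
  ∀ H O : Set ℂ, IsCompact H → IsOpen O → E ∩ O = H → H = ∅

/-- If `X` connects `a` to infinity, then `z - a` has a continuous logarithm on every compact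
set `C` disjoint from `X`: move `a` to infinity along `X` in steps shorter than the distance
from `X` to `C`. -/
lemma exists_log_compact {X : Set ℂ} (hX : IsClosed X) (hXi : EndsAtInfinity X) {a : ℂ}
    (ha : a ∈ X) {C : Set ℂ} (hC : IsCompact C) (hCX : Disjoint C X) :
    ∃ u : ℂ → ℂ, ContinuousOn u C ∧ ∀ z ∈ C, Complex.exp (u z) = z - a := by
  obtain ⟨δ, hδ, hd⟩ := Metric.exists_pos_forall_lt_edist hC hX hCX
  have hd' : ∀ z ∈ C, ∀ b ∈ X, (δ : ℝ) < ‖z - b‖ := fun z hz b hb => by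
    have := hd z hz b hb
    rw [edist_nndist] at this
    have h2 : δ < nndist z b := by exact_mod_cast this
    rw [← dist_eq_norm]
    exact_mod_cast h2
  have hne : ∀ z ∈ C, ∀ b ∈ X, z - b ≠ 0 := fun z hz b hb h => by
    have := hd' z hz b hb
    rw [h, norm_zero] at this
    exact absurd this (not_lt.mpr δ.2)
  set Z : Set ℂ := {b ∈ X | ∃ u : ℂ → ℂ, ContinuousOn u C ∧
    ∀ z ∈ C, Complex.exp (u z) = (z - a) / (z - b)} with hZ
  have haZ : a ∈ Z := ⟨ha, fun _ => 0, continuousOn_const, fun z hz => by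
    rw [div_self (hne z hz a ha), Complex.exp_zero]⟩
  have step : ∀ b ∈ Z, ∀ b' ∈ X, dist b' b < δ → b' ∈ Z := by
    rintro b ⟨hb, u, hu, hue⟩ b' hb' hbb
    have hs : ∀ z ∈ C, (z - b) / (z - b') ∈ Complex.slitPlane := fun z hz => by
      have e : (z - b) / (z - b') = 1 + (b' - b) / (z - b') := by
        field_simp [hne z hz b' hb']; ring
      rw [e]
      apply Complex.mem_slitPlane_of_norm_lt_one
      rw [norm_div, div_lt_one (norm_pos_iff.mpr (hne z hz b' hb')), ← dist_eq_norm]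
      exact hbb.trans (hd' z hz b' hb')
    refine ⟨hb', fun z => u z + Complex.log ((z - b) / (z - b')), ?_, fun z hz => ?_⟩
    · refine hu.add (ContinuousOn.clog ?_ hs)
      exact (continuousOn_id.sub continuousOn_const).div (continuousOn_id.sub continuousOn_const)
        (fun z hz => hne z hz b' hb')
    · rw [Complex.exp_add, hue z hz, Complex.exp_log (Complex.slitPlane_ne_zero (hs z hz))]
      field_simp [hne z hz b' hb', hne z hz b hb]
  have hδ' : (0 : ℝ) < δ := hδ
  have hZc : IsClosed Z := by
    rw [← closure_subset_iff_isClosed]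
    intro b hb
    have hbX : b ∈ X := hX.closure_subset_iff.mpr (fun x hx => hx.1) hb
    obtain ⟨b', hb', hbb⟩ := Metric.mem_closure_iff.mp hb δ hδ'
    exact step b' hb' b hbX hbb
  have hunb : ¬ Bornology.IsBounded Z := by
    intro hbd
    have hcomp := Metric.isCompact_of_isClosed_isBounded hZc hbd
    have := hXi Z (⋃ b ∈ Z, Metric.ball b δ) hcomp
      (isOpen_biUnion fun _ _ => Metric.isOpen_ball) (by
        ext x
        simp only [mem_inter_iff, mem_iUnion, Metric.mem_ball]
        constructor
        · rintro ⟨hx, b, hb, hxb⟩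
          exact step b hb x hx hxb
        · intro hx
          exact ⟨hx.1, x, hx, by simpa using hδ'⟩)
    rw [this] at haZ
    exact haZ
  obtain ⟨M, hM⟩ := hC.isBounded.subset_ball 0
  obtain ⟨b, hb, hbM⟩ : ∃ b ∈ Z, M < ‖b‖ ∧ 0 < ‖b‖ := by
    by_contra! hcon
    apply hunb
    refine (Metric.isBounded_closedBall (x := (0 : ℂ)) (r := max M 0)).subset fun b hb => ?_
    rw [mem_closedBall_zero_iff]
    by_cases h : M < ‖b‖
    · exact (hcon b hb h).trans (le_max_right _ _)
    · exact (not_lt.mp h).trans (le_max_left _ _)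
  obtain ⟨hbX, u, hu, hue⟩ := hb
  have hb0 : b ≠ 0 := norm_pos_iff.mp hbM.2
  have hs : ∀ z ∈ C, 1 + -(z / b) ∈ Complex.slitPlane := fun z hz => by
    apply Complex.mem_slitPlane_of_norm_lt_one
    rw [norm_neg, norm_div, div_lt_one hbM.2]
    exact (mem_ball_zero_iff.mp (hM hz)).trans hbM.1
  refine ⟨fun z => u z + (Complex.log (-b) + Complex.log (1 + -(z / b))), ?_, fun z hz => ?_⟩
  · exact hu.add (continuousOn_const.add (ContinuousOn.clog (by fun_prop) hs))
  · rw [Complex.exp_add, Complex.exp_add, hue z hz, Complex.exp_log (neg_ne_zero.mpr hb0),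
      Complex.exp_log (Complex.slitPlane_ne_zero (hs z hz))]
    have := hne z hz b hbX
    field_simp
    ring

/-- If `X` connects `a` to infinity, then `z - a` has a continuous logarithm off `X`. -/
lemma exists_log_compl {X : Set ℂ} (hX : IsClosed X) (hXi : EndsAtInfinity X) {a : ℂ}
    (ha : a ∈ X) :
    ∃ u : ℂ → ℂ, ContinuousOn u Xᶜ ∧ ∀ z ∈ Xᶜ, Complex.exp (u z) = z - a := by
  classical
  -- A base point in every component of the complement.
  let base : Set ℂ → ℂ := fun D => if h : D.Nonempty then h.some else 0
  have hO : IsOpen Xᶜ := hX.isOpen_compl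
  let b : ℂ → ℂ := fun x => base (connectedComponentIn Xᶜ x)
  have hbmem : ∀ x ∈ Xᶜ, b x ∈ connectedComponentIn Xᶜ x := fun x hx => by
    have hne : (connectedComponentIn Xᶜ x).Nonempty := ⟨x, mem_connectedComponentIn hx⟩
    simp only [b, base, dif_pos hne]
    exact hne.some_mem
  -- Each point has a compact connected set joining it to its base point, containing a ball.
  have hC : ∀ x ∈ Xᶜ, ∃ (C : Set ℂ) (δ : ℝ), 0 < δ ∧ IsCompact C ∧ IsPreconnected C ∧ C ⊆ Xᶜ ∧
      b x ∈ C ∧ Metric.ball x δ ⊆ C := by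
    intro x hx
    have hD : IsOpen (connectedComponentIn Xᶜ x) := hO.connectedComponentIn
    have hpc : IsPathConnected (connectedComponentIn Xᶜ x) :=
      hD.isConnected_iff_isPathConnected.mp (isConnected_connectedComponentIn_iff.mpr hx)
    obtain ⟨γ, hγ⟩ := hpc.joinedIn (b x) (hbmem x hx) x (mem_connectedComponentIn hx)
    obtain ⟨δ, hδ, hball⟩ := Metric.isOpen_iff.mp hO x hx
    refine ⟨range γ ∪ Metric.closedBall x (δ / 2), δ / 2, by positivity,
      (isCompact_range γ.continuous).union (isCompact_closedBall _ _), ?_, ?_, ?_, ?_⟩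
    · refine IsPreconnected.union x ⟨1, γ.target⟩ (Metric.mem_closedBall_self (by positivity))
        (isPreconnected_range γ.continuous) (convex_closedBall _ _).isPreconnected
    · rintro y (⟨t, rfl⟩ | hy)
      · exact connectedComponentIn_subset _ _ (hγ t)
      · exact hball (Metric.closedBall_subset_ball (by linarith) hy)
    · exact Or.inl ⟨0, γ.source⟩
    · exact fun y hy => Or.inr (Metric.ball_subset_closedBall hy)
  choose! C δ hδ hCc hCp hCX hCb hCball using hC
  have hlog : ∀ K : Set ℂ, IsCompact K → K ⊆ Xᶜ → ∀ p ∈ K, ∃ u : ℂ → ℂ, ContinuousOn u K ∧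
      (∀ z ∈ K, Complex.exp (u z) = z - a) ∧ u p = Complex.log (p - a) := by
    intro K hK hKX p hp
    obtain ⟨u, hu, hue⟩ := exists_log_compact hX hXi ha hK (disjoint_left.mpr fun z hz => hKX hz)
    have hpa : p - a ≠ 0 := by rw [← hue p hp]; exact Complex.exp_ne_zero _
    refine ⟨fun z => u z + (Complex.log (p - a) - u p), hu.add continuousOn_const,
      fun z hz => ?_, by ring⟩
    rw [Complex.exp_add, Complex.exp_sub, Complex.exp_log hpa, hue p hp, div_self hpa, mul_one,
      hue z hz]
  have hu : ∀ x ∈ Xᶜ, ∃ u : ℂ → ℂ, ContinuousOn u (C x) ∧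
      (∀ z ∈ C x, Complex.exp (u z) = z - a) ∧ u (b x) = Complex.log (b x - a) := fun x hx =>
    hlog _ (hCc x hx) (hCX x hx) _ (hCb x hx)
  choose! u huc hue hub using hu
  have hmem : ∀ x ∈ Xᶜ, x ∈ C x := fun x hx => hCball x hx (Metric.mem_ball_self (hδ x hx))
  have agree : ∀ x ∈ Xᶜ, ∀ y ∈ Metric.ball x (δ x), u y y = u x y := by
    intro x hx y hy
    have hyC := hCball x hx hy
    have hyX : y ∈ Xᶜ := hCX x hx hyC
    have hbb : b y = b x := by
      have : y ∈ connectedComponentIn Xᶜ x :=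
        (hCp x hx).subset_connectedComponentIn (hmem x hx) (hCX x hx) hyC
      simp only [b, connectedComponentIn_eq this]
    obtain ⟨v, hv, hve, hvb⟩ := hlog (C x ∪ C y) ((hCc x hx).union (hCc y hyX))
      (union_subset (hCX x hx) (hCX y hyX)) (b x) (Or.inl (hCb x hx))
    have e1 := log_unique (hCp x hx) (huc x hx) (hv.mono subset_union_left)
      (fun z hz => by rw [hue x hx z hz, hve z (Or.inl hz)]) (hCb x hx) (by rw [hub x hx, hvb])
      y hyC
    have e2 := log_unique (hCp y hyX) (huc y hyX) (hv.mono subset_union_right)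
      (fun z hz => by rw [hue y hyX z hz, hve z (Or.inr hz)]) (hCb y hyX)
      (by rw [hub y hyX, hbb, hvb]) y (hmem y hyX)
    rw [e1, e2]
  refine ⟨fun x => u x x, fun x hx => ?_, fun z hz => hue z hz z (hmem z hz)⟩
  have hnb : Metric.ball x (δ x) ∈ 𝓝 x := Metric.ball_mem_nhds x (hδ x hx)
  have : ContinuousAt (u x) x := (huc x hx).continuousAt (mem_of_superset hnb (hCball x hx))
  refine (this.congr ?_).continuousWithinAt
  filter_upwards [hnb] with y hy
  exact (agree x hx y hy).symm

/-! ### Counting fibres by cutting along a line -/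

/-- `F` is open at every point of `W`. -/
def OpenOn (F : ℂ → ℂ) (W : Set ℂ) : Prop := ∀ x ∈ W, 𝓝 (F x) ≤ map F (𝓝 x)

lemma OpenOn.exists_add {F : ℂ → ℂ} {W : Set ℂ} (h : OpenOn F W) {x : ℂ} (hx : x ∈ W)
    {N : Set ℂ} (hN : N ∈ 𝓝 x) (d : ℂ) : ∃ t : ℝ, 0 < t ∧ ∃ x' ∈ N, F x' = F x + t * d := by
  have h1 : F '' N ∈ 𝓝 (F x) := h x hx (image_mem_map hN)
  have h2 : Tendsto (fun t : ℝ => F x + t * d) (𝓝[>] 0) (𝓝 (F x)) := by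
    have : Continuous (fun t : ℝ => F x + t * d) := by fun_prop
    have h3 := this.tendsto 0
    simp only [Complex.ofReal_zero, zero_mul, add_zero] at h3
    exact h3.mono_left nhdsWithin_le_nhds
  obtain ⟨t, ht, ht0⟩ := ((h2.eventually h1).and self_mem_nhdsWithin).exists
  obtain ⟨x', hx', he⟩ := ht
  exact ⟨t, ht0, x', hx', he⟩

/-- The preimage of a horizontal ray under an open map reaches the complement of the domain, by the
maximum principle. -/
lemma endsAtInfinity_ray {W : Set ℂ} (hW : IsOpen W) (hE : EndsAtInfinity Wᶜ) {F : ℂ → ℂ}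
    (hF : ContinuousOn F W) (hFo : OpenOn F W) (y : ℂ) (σ : ℝ) (hσ : σ * σ = 1) :
    EndsAtInfinity (W ∩ F ⁻¹' {w | w.im = y.im ∧ 0 ≤ σ * (w.re - y.re)}ᶜ)ᶜ := by
  intro H O hH hO hHO
  have hHE : H ∩ Wᶜ = ∅ := by
    refine hE _ O (hH.inter_right hW.isClosed_compl) hO ?_
    rw [← hHO]
    ext x
    simp only [mem_inter_iff, mem_compl_iff]
    tauto
  by_contra hne
  have hHW : H ⊆ W := fun x hx => by
    by_contra hxW
    have : x ∈ H ∩ Wᶜ := ⟨hx, hxW⟩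
    rw [hHE] at this
    exact this
  obtain ⟨x, hx, hmax⟩ := hH.exists_isMaxOn (nonempty_iff_ne_empty.mpr hne)
    (f := fun x => σ * (F x).re)
    (continuousOn_const.mul (Complex.continuous_re.comp_continuousOn (hF.mono hHW)))
  have hxO : x ∈ O := by rw [← hHO] at hx; exact hx.2
  have hxX : (F x).im = y.im ∧ 0 ≤ σ * ((F x).re - y.re) := by
    have h1 := hHW hx
    rw [← hHO] at hx
    by_contra h
    exact hx.1 ⟨h1, h⟩
  obtain ⟨t, ht, x', ⟨hx'O, hx'W⟩, hx'⟩ := hFo.exists_add (hHW hx)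
    ((hO.inter hW).mem_nhds ⟨hxO, hHW hx⟩) (σ : ℂ)
  have hre : (F x').re = (F x).re + t * σ := by simp [hx']
  have him : (F x').im = (F x).im := by simp [hx']
  have hx'H : x' ∈ H := by
    rw [← hHO]
    refine ⟨fun hmem => hmem.2 ⟨him.trans hxX.1, ?_⟩, hx'O⟩
    rw [hre]
    nlinarith [hxX.2]
  have := hmax hx'H
  simp only [mem_ofPred_eq, hre] at this
  nlinarith

set_option maxHeartbeats 1000000 in
/-- The key counting estimate. Cut the domain of an open map `F` along the preimage of the
horizontal line through `y`. If `S` meets every component of what remains, the fibre over `y` has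
fewer than `S.card` points.

For a point `a` of the fibre, `z - a` has a logarithm `u a` off the preimage of the right ray from
`y`, and a logarithm `v a` off the preimage of the left ray. The jumps `u a - v a` are locally
constant off the preimage of the line, hence are vectors in `ℤ ^ S`; with too many points in the
fibre, some combination of the jumps is constant, and a nontrivial product of powers of the `z - a`
acquires a logarithm on the complement of the fibre. -/
lemma fibre_card_lt {W : Set ℂ} (hW : IsOpen W) (hE : EndsAtInfinity Wᶜ) {F : ℂ → ℂ}
    (hF : ContinuousOn F W) (hFo : OpenOn F W) (y : ℂ)
    (hK : ∀ a ∈ W, F a = y → ∀ ρ > 0, ∃ N : Set ℂ, IsOpen N ∧ a ∈ N ∧ N ⊆ Metric.ball a ρ ∧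
      ∀ x ∈ frontier N, x ∈ W → F x ≠ y)
    (S : Finset ℂ) (hSne : S.Nonempty) (hSD : ∀ s ∈ S, s ∈ W ∧ (F s).im ≠ y.im)
    (hS : ∀ x ∈ W, (F x).im ≠ y.im →
      ∃ s ∈ S, x ∈ connectedComponentIn (W ∩ F ⁻¹' {w | w.im ≠ y.im}) s)
    (T : Finset ℂ) (hT : ∀ a ∈ T, a ∈ W ∧ F a = y) : T.card < S.card := by
  classical
  by_contra! hcard
  have hray : ∀ σ : ℝ, IsClosed {w : ℂ | w.im = y.im ∧ 0 ≤ σ * (w.re - y.re)} := fun σ =>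
    (isClosed_eq Complex.continuous_im continuous_const).inter
      (isClosed_le continuous_const (continuous_const.mul
        (Complex.continuous_re.sub continuous_const)))
  set P : ℝ → Set ℂ := fun σ => W ∩ F ⁻¹' {w | w.im = y.im ∧ 0 ≤ σ * (w.re - y.re)}ᶜ with hP
  set D : Set ℂ := W ∩ F ⁻¹' {w | w.im ≠ y.im} with hD
  have hPo : ∀ σ, IsOpen (P σ) := fun σ => hF.isOpen_inter_preimage hW (hray σ).isOpen_compl
  have hDP : ∀ σ, D ⊆ P σ := fun σ x hx => ⟨hx.1, fun h => hx.2 h.1⟩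
  have hPD : P 1 ∩ P (-1) ⊆ D := by
    rintro x ⟨⟨hx, h1⟩, -, h2⟩
    refine ⟨hx, fun h => ?_⟩
    rcases le_total 0 ((F x).re - y.re) with h0 | h0
    · exact h1 ⟨h, by linarith⟩
    · exact h2 ⟨h, by linarith⟩
  have hcover : ∀ x ∈ W, F x ≠ y → x ∈ P 1 ∨ x ∈ P (-1) := by
    intro x hx hxy
    by_contra! hcon
    have h1 : (F x).im = y.im ∧ 0 ≤ 1 * ((F x).re - y.re) := by
      by_contra h; exact hcon.1 ⟨hx, h⟩
    have h2 : (F x).im = y.im ∧ 0 ≤ -1 * ((F x).re - y.re) := by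
      by_contra h; exact hcon.2 ⟨hx, h⟩
    exact hxy (Complex.ext (by linarith [h1.2, h2.2]) h1.1)
  have hlog : ∀ σ : ℝ, σ * σ = 1 → ∀ a ∈ T, ∃ u : ℂ → ℂ, ContinuousOn u (P σ) ∧
      ∀ z ∈ P σ, Complex.exp (u z) = z - a := by
    intro σ hσ a ha
    have := exists_log_compl (X := (P σ)ᶜ) (hPo σ).isClosed_compl
      (endsAtInfinity_ray hW hE hF hFo y σ hσ) (a := a) (fun h => h.2 (by simp [(hT a ha).2]))
    rwa [compl_compl] at this
  choose! u huc hue using hlog 1 (by norm_num)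
  choose! v hvc hve using hlog (-1) (by norm_num)
  have hw : ∀ a ∈ T, ∀ s ∈ D, ∃ m : ℤ, u a s = v a s + m * (2 * Real.pi * Complex.I) :=
    fun a ha s hs => Complex.exp_eq_exp_iff_exists_int.mp
      (by rw [hue a ha s (hDP 1 hs), hve a ha s (hDP _ hs)])
  choose! w hw using hw
  -- More than `S.card` vectors in `ℤ ^ S`: the jumps, and the constant vector.
  let vec : Option T → (S → ℤ) := fun o => o.elim (fun _ => 1) (fun a s => w a s)
  have hdep : ¬ LinearIndependent ℤ vec := fun h => by
    have := h.fintype_card_le_finrank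
    simp at this
    omega
  obtain ⟨g, hg, o, ho⟩ := Fintype.not_linearIndependent_iff.mp hdep
  have hrel : ∀ s (hs : s ∈ S), g none + ∑ a : T, g (some a) * w a s = 0 := by
    intro s hs
    have := congrFun hg ⟨s, hs⟩
    simpa [Fintype.sum_option, vec] using this
  obtain ⟨a₀, ha₀⟩ : ∃ a : T, g (some a) ≠ 0 := by
    by_contra! hcon
    obtain ⟨s, hs⟩ := hSne
    have h1 := hrel s hs
    simp only [hcon, zero_mul, Finset.sum_const_zero, add_zero] at h1
    cases o with
    | none => exact ho h1
    | some a => exact ho (hcon a)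
  let U : ℂ → ℂ := fun x => ∑ a : T, (g (some a) : ℂ) * u a x
  let V : ℂ → ℂ := fun x => ∑ a : T, (g (some a) : ℂ) * v a x - g none * (2 * Real.pi * Complex.I)
  have hUc : ContinuousOn U (P 1) :=
    continuousOn_finsetSum _ fun (a : T) _ => continuousOn_const.mul (huc a a.2)
  have hVc : ContinuousOn V (P (-1)) :=
    (continuousOn_finsetSum _ fun (a : T) _ => continuousOn_const.mul (hvc a a.2)).sub
      continuousOn_const
  have hUV : ∀ x ∈ D, U x = V x := by
    intro x hx
    obtain ⟨s, hs, hxs⟩ := hS x hx.1 hx.2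
    have hsD : s ∈ D := hSD s hs
    have hjump : ∀ a : T, u a x - v a x = w a s * (2 * Real.pi * Complex.I) := by
      intro a
      have hsub := connectedComponentIn_subset D s
      rw [log_sub_const isPreconnected_connectedComponentIn
        (((huc a a.2).mono (hDP 1)).mono hsub) (((hvc a a.2).mono (hDP _)).mono hsub)
        (fun z hz => by rw [hue a a.2 z (hDP 1 (hsub hz)), hve a a.2 z (hDP _ (hsub hz))])
        hxs (mem_connectedComponentIn hsD), hw a a.2 s hsD]
      ring
    have h1 : U x - V x = (∑ a : T, (g (some a) : ℂ) * (u a x - v a x)) +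
        g none * (2 * Real.pi * Complex.I) := by
      simp only [U, V, mul_sub, Finset.sum_sub_distrib]
      ring
    have h2 : (g none : ℂ) + ∑ a : T, (g (some a) : ℂ) * w a s = 0 := by
      exact_mod_cast hrel s hs
    rw [← sub_eq_zero, h1]
    simp only [hjump, ← mul_assoc, ← Finset.sum_mul] at h2 ⊢
    linear_combination (2 * Real.pi * Complex.I) * h2
  let Λ : ℂ → ℂ := fun x => if x ∈ P 1 then U x else V x
  have hΛU : ∀ x ∈ P 1, Λ x = U x := fun x hx => if_pos hx
  have hΛV : ∀ x ∈ P (-1), Λ x = V x := fun x hx => by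
    by_cases h : x ∈ P 1
    · rw [hΛU x h, hUV x (hPD ⟨h, hx⟩)]
    · exact if_neg h
  have hΛc : ∀ x ∈ W, F x ≠ y → ContinuousAt Λ x := by
    intro x hx hxy
    rcases hcover x hx hxy with h | h
    · refine (hUc.continuousAt ((hPo _).mem_nhds h)).congr ?_
      filter_upwards [(hPo _).mem_nhds h] with z hz using (hΛU z hz).symm
    · refine (hVc.continuousAt ((hPo _).mem_nhds h)).congr ?_
      filter_upwards [(hPo _).mem_nhds h] with z hz using (hΛV z hz).symm
  have hΛe : ∀ x ∈ W, F x ≠ y → Complex.exp (Λ x) = ∏ a : T, (x - a) ^ g (some a) := by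
    intro x hx hxy
    rcases hcover x hx hxy with h | h
    · rw [hΛU x h]
      simp only [U]
      rw [Complex.exp_sum]
      exact Finset.prod_congr rfl fun a _ => by rw [Complex.exp_int_mul, hue a a.2 x h]
    · rw [hΛV x h]
      simp only [V]
      rw [Complex.exp_sub, Complex.exp_int_mul, Complex.exp_two_pi_mul_I, one_zpow, div_one,
        Complex.exp_sum]
      exact Finset.prod_congr rfl fun a _ => by rw [Complex.exp_int_mul, hve a a.2 x h]
  -- Contradiction near `a₀`: the other factors have logarithms there.
  have hopen : IsOpen (W \ (T.erase (a₀ : ℂ) : Set ℂ)) :=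
    hW.sdiff (T.erase (a₀ : ℂ)).finite_toSet.isClosed
  obtain ⟨ρ, hρ, hball⟩ := Metric.isOpen_iff.mp hopen a₀ ⟨(hT a₀ a₀.2).1, by simp⟩
  obtain ⟨N, hNo, haN, hNρ, hNf⟩ := hK a₀ (hT a₀ a₀.2).1 (hT a₀ a₀.2).2 (ρ / 2) (by positivity)
  have hfr : ∀ x ∈ frontier N, x ∈ Metric.ball (a₀ : ℂ) ρ := fun x hx =>
    Metric.closedBall_subset_ball (by linarith : ρ / 2 < ρ)
      (Metric.closure_ball_subset_closedBall (closure_mono hNρ (frontier_subset_closure hx)))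
  have hfW : ∀ x ∈ frontier N, x ∈ W ∧ F x ≠ y := fun x hx =>
    ⟨(hball (hfr x hx)).1, hNf x hx (hball (hfr x hx)).1⟩
  have hdist : ∀ a : T, a ≠ a₀ → ρ ≤ ‖(a₀ : ℂ) - a‖ := by
    intro a ha
    by_contra! hlt
    rw [← dist_eq_norm, dist_comm] at hlt
    exact (hball (Metric.mem_ball.mpr hlt)).2 (by simp [Subtype.coe_injective.ne ha])
  have hslit : ∀ a : T, a ≠ a₀ → ∀ x ∈ frontier N,
      1 + (x - a₀) / ((a₀ : ℂ) - a) ∈ Complex.slitPlane := by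
    intro a ha x hx
    apply Complex.mem_slitPlane_of_norm_lt_one
    rw [norm_div, div_lt_one (hρ.trans_le (hdist a ha))]
    have := hfr x hx
    rw [Metric.mem_ball, dist_eq_norm] at this
    exact this.trans_le (hdist a ha)
  let ℓ : T → ℂ → ℂ := fun a x => Complex.log (a₀ - a) + Complex.log (1 + (x - a₀) / (a₀ - a))
  have hℓe : ∀ a : T, a ≠ a₀ → ∀ x ∈ frontier N, Complex.exp (ℓ a x) = x - a := by
    intro a ha x hx
    have h0 : (a₀ : ℂ) - a ≠ 0 := norm_pos_iff.mp (hρ.trans_le (hdist a ha))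
    simp only [ℓ]
    rw [Complex.exp_add, Complex.exp_log h0, Complex.exp_log (Complex.slitPlane_ne_zero
      (hslit a ha x hx))]
    field_simp
    ring
  have hℓc : ∀ a : T, a ≠ a₀ → ContinuousOn (ℓ a) (frontier N) := fun a ha =>
    continuousOn_const.add (ContinuousOn.clog (by fun_prop) (hslit a ha))
  refine no_log_frontier hNo haN (ρ := ρ / 2) (by positivity) hNρ ha₀
    (g := fun x => Λ x - ∑ a ∈ Finset.univ.erase a₀, (g (some a) : ℂ) * ℓ a x) ?_ ?_
  · refine ContinuousOn.sub (fun x hx => (hΛc x (hfW x hx).1 (hfW x hx).2).continuousWithinAt)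
      (continuousOn_finsetSum _ fun a ha => continuousOn_const.mul
        (hℓc a (Finset.ne_of_mem_erase ha)))
  · intro x hx
    have hprod : Complex.exp (∑ a ∈ Finset.univ.erase a₀, (g (some a) : ℂ) * ℓ a x) =
        ∏ a ∈ Finset.univ.erase a₀, (x - a) ^ g (some a) := by
      rw [Complex.exp_sum]
      exact Finset.prod_congr rfl fun a ha => by
        rw [Complex.exp_int_mul, hℓe a (Finset.ne_of_mem_erase ha) x hx]
    rw [Complex.exp_sub, hΛe x (hfW x hx).1 (hfW x hx).2,
      ← Finset.mul_prod_erase _ _ (Finset.mem_univ a₀), ← hprod,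
      mul_div_assoc, div_self (Complex.exp_ne_zero _), mul_one]

/-! ### Proper open maps and normal domains -/

/-- A connected component of `A` is relatively closed in `A`. -/
lemma mem_component_of_mem_closure {A : Set ℂ} {x p : ℂ} (hp : p ∈ A)
    (hpc : p ∈ closure (connectedComponentIn A x)) : p ∈ connectedComponentIn A x := by
  by_cases hx : x ∈ A
  · have h1 : IsPreconnected (insert p (connectedComponentIn A x)) :=
      isPreconnected_connectedComponentIn.subset_closure (subset_insert _ _)
        (insert_subset hpc subset_closure)
    exact h1.subset_connectedComponentIn (mem_insert_of_mem _ (mem_connectedComponentIn hx))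
      (insert_subset hp (connectedComponentIn_subset _ _)) (mem_insert _ _)
  · rw [connectedComponentIn_eq_empty hx] at hpc
    simp at hpc

lemma OpenOn.isOpen_image {F : ℂ → ℂ} {W : Set ℂ} (h : OpenOn F W) {P : Set ℂ} (hP : IsOpen P)
    (hPW : P ⊆ W) : IsOpen (F '' P) := by
  rw [isOpen_iff_mem_nhds]
  rintro _ ⟨x, hx, rfl⟩
  exact h x (hPW hx) (image_mem_map (hP.mem_nhds hx))

/-- `F : W → V` is proper. -/
def ProperOver (F : ℂ → ℂ) (W V : Set ℂ) : Prop :=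
  ∀ C ⊆ V, IsCompact C → IsCompact (W ∩ F ⁻¹' C)

/-- A proper open map sends each component of the preimage of a connected open set `O` onto `O`. -/
lemma subset_image_component {W V : Set ℂ} (hW : IsOpen W) {F : ℂ → ℂ} (hF : ContinuousOn F W)
    (hFo : OpenOn F W) (hp : ProperOver F W V) {O : Set ℂ} (hO : IsOpen O) (hOc : IsPreconnected O)
    (hOV : O ⊆ V) {x : ℂ} (hx : x ∈ W) (hxO : F x ∈ O) :
    O ⊆ F '' connectedComponentIn (W ∩ F ⁻¹' O) x := by
  have hAo : IsOpen (W ∩ F ⁻¹' O) := hF.isOpen_inter_preimage hW hO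
  set P := connectedComponentIn (W ∩ F ⁻¹' O) x with hP
  have hPA : P ⊆ W ∩ F ⁻¹' O := connectedComponentIn_subset _ _
  have hPo : IsOpen P := hAo.connectedComponentIn
  refine hOc.subset_of_closure_inter_subset
    (hFo.isOpen_image hPo (hPA.trans inter_subset_left))
    ⟨F x, hxO, x, mem_connectedComponentIn ⟨hx, hxO⟩, rfl⟩ ?_
  rintro y ⟨hyc, hyO⟩
  obtain ⟨C, hC, hyC, hCO⟩ := exists_compact_subset hO hyO
  have hK := hp C (hCO.trans hOV) hC
  have hcomp : IsCompact (F '' (closure P ∩ (W ∩ F ⁻¹' C))) :=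
    (hK.inter_left isClosed_closure).image_of_continuousOn
      (hF.mono (inter_subset_right.trans inter_subset_left))
  have h1 : y ∈ closure (F '' P ∩ interior C) :=
    isOpen_interior.closure_inter ⟨hyc, hyC⟩
  have h2 : F '' P ∩ interior C ⊆ F '' (closure P ∩ (W ∩ F ⁻¹' C)) := by
    rintro _ ⟨⟨p, hp, rfl⟩, hpC⟩
    exact ⟨p, ⟨subset_closure hp, (hPA hp).1, interior_subset (s := C) hpC⟩, rfl⟩
  obtain ⟨p, ⟨hpP, hpW, hpC⟩, rfl⟩ := closure_minimal h2 hcomp.isClosed h1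
  exact ⟨p, mem_component_of_mem_closure ⟨hpW, hyO⟩ hpP, rfl⟩

/-- In a normal domain `W` compactly contained in a ball `B`, the maximum principle shows that the
complement has no bounded components. -/
lemma endsAtInfinity_component {z : ℂ} {R r : ℝ} {f : ℂ → ℂ}
    (hf : ContinuousOn f (Metric.ball z R)) (hfo : OpenOn f (Metric.ball z R)) :
    EndsAtInfinity
      (connectedComponentIn {x ∈ Metric.ball z R | dist (f x) (f z) < r} z)ᶜ := by
  set A : Set ℂ := {x ∈ Metric.ball z R | dist (f x) (f z) < r} with hA
  set W := connectedComponentIn A z with hW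
  have hWA : W ⊆ A := connectedComponentIn_subset _ _
  intro H O hH hO hHO
  by_contra hne
  have hne : H.Nonempty := nonempty_iff_ne_empty.mpr hne
  have hmem : ∀ x ∈ O, x ∉ W → x ∈ H := fun x hx hxW => hHO ▸ ⟨hxW, hx⟩
  have hHO' : ∀ x ∈ H, x ∈ O ∧ x ∉ W := fun x hx => by
    rw [← hHO] at hx; exact ⟨hx.2, hx.1⟩
  have hHB : H ⊆ Metric.ball z R := by
    obtain ⟨x, hx, hmax⟩ := hH.exists_isMaxOn hne (f := fun x => dist x z) (by fun_prop)
    suffices h : dist x z < R from fun x' hx' => (hmax hx').trans_lt h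
    by_contra! hxR
    by_cases hxz : x = z
    · subst hxz
      -- Then `H = {x}` and `W` is empty, so a neighbourhood of `x` lies in `H`.
      rw [dist_self] at hxR
      have hWe : W = ∅ := by
        rw [eq_empty_iff_forall_notMem]
        intro w hw
        have := (hWA hw).1
        rw [Metric.mem_ball] at this
        linarith [dist_nonneg (x := w) (y := x)]
      have hHO2 : H = O := by rw [← hHO, hWe]; simp
      rcases isClopen_iff.mp ⟨hH.isClosed, hHO2 ▸ hO⟩ with h | h
      · simp [h] at hne
      · exact noncompact_univ ℂ (h ▸ hH)
    have htend : Tendsto (fun t : ℝ => x + t * (x - z)) (𝓝[>] 0) (𝓝 x) := by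
      have : Continuous (fun t : ℝ => x + t * (x - z)) := by fun_prop
      have h3 := this.tendsto 0
      simp only [Complex.ofReal_zero, zero_mul, add_zero] at h3
      exact h3.mono_left nhdsWithin_le_nhds
    obtain ⟨t, ht, ht0⟩ := ((htend.eventually (hO.mem_nhds (hHO' x hx).1)).and
      self_mem_nhdsWithin).exists
    have ht0 : 0 < t := ht0
    have hd : dist (x + t * (x - z)) z = (1 + t) * dist x z := by
      rw [dist_eq_norm, dist_eq_norm, show x + t * (x - z) - z = ((1 + t : ℝ) : ℂ) * (x - z) by
        push_cast; ring, norm_mul, Complex.norm_real, Real.norm_of_nonneg (by linarith)]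
    have hpos : 0 < dist x z := dist_pos.mpr hxz
    have hH' : x + t * (x - z) ∈ H := hmem _ ht fun h => by
      have := (hWA h).1
      rw [Metric.mem_ball, hd] at this
      nlinarith
    have := hmax hH'
    simp only [mem_ofPred_eq, hd] at this
    nlinarith
  have hHA : H ⊆ A := by
    obtain ⟨x, hx, hmax⟩ := hH.exists_isMaxOn hne (f := fun x => dist (f x) (f z))
      ((continuous_id.dist continuous_const).comp_continuousOn (hf.mono hHB))
    suffices h : dist (f x) (f z) < r from fun x' hx' => ⟨hHB hx', (hmax hx').trans_lt h⟩
    obtain ⟨d, hd⟩ : ∃ d : ℂ, ∀ t : ℝ, 0 < t → dist (f x) (f z) < dist (f x + t * d) (f z) := by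
      by_cases h0 : f x = f z
      · refine ⟨1, fun t ht => ?_⟩
        rw [h0]
        simpa using ht.ne'
      · refine ⟨f x - f z, fun t ht => ?_⟩
        have hpos : 0 < ‖f x - f z‖ := norm_pos_iff.mpr (sub_ne_zero.mpr h0)
        rw [dist_eq_norm, dist_eq_norm, show f x + t * (f x - f z) - f z =
          ((1 + t : ℝ) : ℂ) * (f x - f z) by push_cast; ring, norm_mul, Complex.norm_real,
          Real.norm_of_nonneg (by linarith)]
        nlinarith
    obtain ⟨t, ht, x', hx'O, hx'⟩ := hfo.exists_add (hHB hx) (hO.mem_nhds (hHO' x hx).1) d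
    have hlt := hd t ht
    rw [← hx'] at hlt
    by_cases hx'W : x' ∈ W
    · exact hlt.trans (hWA hx'W).2
    · exact absurd (hmax (hmem x' hx'O hx'W)) (not_le.mpr hlt)
  have hHeq : H = O ∩ (closure W)ᶜ := by
    ext x
    constructor
    · exact fun hx => ⟨(hHO' x hx).1, fun hc =>
        (hHO' x hx).2 (mem_component_of_mem_closure (hHA hx) hc)⟩
    · exact fun hx => hmem x hx.1 fun h => hx.2 (subset_closure h)
  have hHo : IsOpen H := hHeq ▸ hO.inter isClosed_closure.isOpen_compl
  rcases isClopen_iff.mp ⟨hH.isClosed, hHo⟩ with h | h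
  · simp [h] at hne
  · exact noncompact_univ ℂ (h ▸ hH)

/-- A neighbourhood `N` of `z` whose frontier misses the fibre through `z` contains a normal
domain `W`: a connected neighbourhood of `z` mapped properly to a disc. -/
lemma exists_normal_domain {z : ℂ} {R : ℝ} {f : ℂ → ℂ}
    (hf : ContinuousOn f (Metric.ball z R)) (hfo : OpenOn f (Metric.ball z R))
    {N : Set ℂ} (hN : IsOpen N) (hzN : z ∈ N) (hNR : closure N ⊆ Metric.ball z R)
    (hNf : ∀ x ∈ frontier N, f x ≠ f z) :
    ∃ r > 0, ∃ W : Set ℂ, IsOpen W ∧ IsConnected W ∧ z ∈ W ∧ W ⊆ N ∧ EndsAtInfinity Wᶜ ∧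
      MapsTo f W (Metric.ball (f z) r) ∧ ProperOver f W (Metric.ball (f z) r) := by
  have hcN : IsCompact (closure N) :=
    (isCompact_closedBall z R).of_isClosed_subset isClosed_closure
      (hNR.trans Metric.ball_subset_closedBall)
  have hfr : IsCompact (f '' frontier N) :=
    (hcN.of_isClosed_subset isClosed_frontier frontier_subset_closure).image_of_continuousOn
      (hf.mono (frontier_subset_closure.trans hNR))
  obtain ⟨r, hr, hball⟩ := Metric.isOpen_iff.mp hfr.isClosed.isOpen_compl (f z)
    (by rintro ⟨x, hx, hxz⟩; exact hNf x hx hxz)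
  set A : Set ℂ := {x ∈ Metric.ball z R | dist (f x) (f z) < r} with hA
  have hAo : IsOpen A := hf.isOpen_inter_preimage Metric.isOpen_ball
    (Metric.isOpen_ball (x := f z) (ε := r))
  have hzA : z ∈ A := ⟨hNR (subset_closure hzN), by simpa using hr⟩
  have hWA : connectedComponentIn A z ⊆ A := connectedComponentIn_subset _ _
  have hWN : connectedComponentIn A z ⊆ N := by
    refine isPreconnected_connectedComponentIn.subset_of_closure_inter_subset hN
      ⟨z, mem_connectedComponentIn hzA, hzN⟩ ?_
    rintro x ⟨hxc, hxW⟩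
    by_contra hxN
    exact hball (hWA hxW).2 ⟨x, ⟨hxc, by rwa [hN.interior_eq]⟩, rfl⟩
  have hcW : closure (connectedComponentIn A z) ⊆ closure N := closure_mono hWN
  refine ⟨r, hr, connectedComponentIn A z, hAo.connectedComponentIn,
    isConnected_connectedComponentIn_iff.mpr hzA, mem_connectedComponentIn hzA, hWN,
    endsAtInfinity_component hf hfo, fun x hx => (hWA hx).2, fun C hC hCc => ?_⟩
  have heq : connectedComponentIn A z ∩ f ⁻¹' C = closure (connectedComponentIn A z) ∩ f ⁻¹' C := by
    refine Subset.antisymm (inter_subset_inter_left _ subset_closure) ?_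
    exact fun x hx => ⟨mem_component_of_mem_closure ⟨hNR (hcW hx.1), hC hx.2⟩ hx.1, hx.2⟩
  rw [heq]
  exact hcN.of_isClosed_subset ((hf.mono (hcW.trans hNR)).preimage_isClosed_of_isClosed
    isClosed_closure hCc.isClosed) (inter_subset_left.trans hcW)

/-! ### Light open maps are discrete -/

/-- In a totally disconnected fibre, each point has arbitrarily small neighbourhoods whose frontier
misses the fibre. -/
lemma exists_nhd_frontier {Ω : Set ℂ} (hΩ : IsOpen Ω) {f : ℂ → ℂ} (hf : ContinuousOn f Ω)
    {a : ℂ} (hl : IsTotallyDisconnected (Ω ∩ f ⁻¹' {f a})) (ha : a ∈ Ω) {ρ : ℝ} (hρ : 0 < ρ) :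
    ∃ N : Set ℂ, IsOpen N ∧ a ∈ N ∧ N ⊆ Metric.ball a ρ ∧ closure N ⊆ Ω ∧
      ∀ x ∈ frontier N, f x ≠ f a := by
  obtain ⟨ε, hε, hεΩ⟩ := Metric.nhds_basis_closedBall.mem_iff.mp (hΩ.mem_nhds ha)
  set δ := min ε ρ with hδ
  have hδ0 : 0 < δ := lt_min hε hρ
  have hδΩ : Metric.closedBall a δ ⊆ Ω :=
    (Metric.closedBall_subset_closedBall (min_le_left _ _)).trans hεΩ
  set K := Metric.closedBall a δ ∩ f ⁻¹' {f a} with hK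
  have hKc : IsCompact K := (isCompact_closedBall a δ).of_isClosed_subset
    ((hf.mono hδΩ).preimage_isClosed_of_isClosed Metric.isClosed_closedBall isClosed_singleton)
    inter_subset_left
  have : CompactSpace K := isCompact_iff_compactSpace.mp hKc
  have : TotallyDisconnectedSpace K := totallyDisconnectedSpace_subtype_iff.mpr
    fun t ht => hl t (ht.trans (inter_subset_inter_left _ hδΩ))
  obtain ⟨V, hV, haV, hVb⟩ := compact_exists_isClopen_in_isOpen (X := K)
    (x := ⟨a, by simp [hδ0.le], rfl⟩) (U := Subtype.val ⁻¹' Metric.ball a δ)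
    (Metric.isOpen_ball.preimage continuous_subtype_val) (by simpa using hδ0)
  have h1 : IsCompact (Subtype.val '' V) := hV.isClosed.isCompact.image continuous_subtype_val
  have h2 : IsCompact (Subtype.val '' Vᶜ) :=
    hV.compl.isClosed.isCompact.image continuous_subtype_val
  obtain ⟨u, v, hu, hv, hVu, hVv, huv⟩ := SeparatedNhds.of_isCompact_isCompact h1 h2
    (disjoint_image_of_injective Subtype.val_injective disjoint_compl_right)
  have hcl : closure (u ∩ Metric.ball a δ) ⊆ Metric.closedBall a δ :=
    (closure_mono inter_subset_right).trans Metric.closure_ball_subset_closedBall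
  have hNo : IsOpen (u ∩ Metric.ball a δ) := hu.inter Metric.isOpen_ball
  refine ⟨u ∩ Metric.ball a δ, hNo, ⟨hVu ⟨_, haV, rfl⟩, by simpa using hδ0⟩,
    inter_subset_right.trans (Metric.ball_subset_ball (min_le_right _ _)), hcl.trans hδΩ, ?_⟩
  intro x hx hxa
  rw [frontier, hNo.interior_eq] at hx
  have hxK : x ∈ K := ⟨hcl hx.1, hxa⟩
  by_cases hxV : (⟨x, hxK⟩ : K) ∈ V
  · exact hx.2 ⟨hVu ⟨_, hxV, rfl⟩, hVb hxV⟩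
  · obtain ⟨w, hwv, hw⟩ := mem_closure_iff.mp hx.1 v hv (hVv ⟨_, hxV, rfl⟩)
    exact huv.le_bot ⟨hw.1, hwv⟩

/-- For a proper map to a disc, finitely many components cover what lies off the preimage of the
horizontal diameter: each maps onto an open half disc, so meets a fixed compact fibre. -/
lemma exists_finset_components {W : Set ℂ} (hW : IsOpen W) {F : ℂ → ℂ} (hF : ContinuousOn F W)
    (hFo : OpenOn F W) {c : ℂ} {r : ℝ} (hr : 0 < r) (hm : MapsTo F W (Metric.ball c r))
    (hp : ProperOver F W (Metric.ball c r)) (σ : ℝ) (hσ : σ * σ = 1) :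
    ∃ S : Finset ℂ, (∀ s ∈ S, s ∈ W ∧ (F s).im ≠ c.im) ∧ ∀ x ∈ W, 0 < σ * ((F x).im - c.im) →
      ∃ s ∈ S, x ∈ connectedComponentIn (W ∩ F ⁻¹' {w | w.im ≠ c.im}) s := by
  classical
  have hσ1 : |σ| = 1 := by
    have : |σ| * |σ| = 1 := by rw [abs_mul_abs_self, hσ]
    nlinarith [abs_nonneg σ]
  have hσ0 : σ ≠ 0 := fun h => by simp [h] at hσ
  set D : Set ℂ := W ∩ F ⁻¹' {w | w.im ≠ c.im} with hD
  have hDo : IsOpen D := hF.isOpen_inter_preimage hW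
    (isOpen_ne_fun Complex.continuous_im continuous_const)
  set O : Set ℂ := Metric.ball c r ∩ {w | 0 < σ * (w.im - c.im)} with hO
  have hOo : IsOpen O := Metric.isOpen_ball.inter (isOpen_lt continuous_const
    (continuous_const.mul (Complex.continuous_im.sub continuous_const)))
  have hOc : IsPreconnected O := by
    refine Convex.isPreconnected ((convex_ball c r).inter ?_)
    have : {w : ℂ | 0 < σ * (w.im - c.im)} = {w : ℂ | σ * c.im < (σ • Complex.imLm) w} := by
      ext w; simp [mul_sub]
    rw [this]
    exact convex_halfSpace_gt (LinearMap.isLinear _) _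
  have hOD : W ∩ F ⁻¹' O ⊆ D := fun x hx => ⟨hx.1, fun h => by
    have := hx.2.2
    simp only [mem_ofPred_eq] at this h
    simp [h] at this⟩
  set o : ℂ := c + ((σ * (r / 2) : ℝ) : ℂ) * Complex.I with ho
  have hoim : o.im = c.im + σ * (r / 2) := by simp [ho]
  have hoO : o ∈ O := by
    refine ⟨?_, ?_⟩
    · rw [Metric.mem_ball, dist_eq_norm, ho, add_sub_cancel_left, norm_mul, Complex.norm_real,
        Complex.norm_I, Real.norm_eq_abs, abs_mul, hσ1, abs_of_pos (by positivity)]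
      linarith
    · simp only [mem_ofPred_eq, hoim]
      rw [add_sub_cancel_left, ← mul_assoc, hσ]
      linarith
  have hK : IsCompact (W ∩ F ⁻¹' {o}) :=
    hp {o} (singleton_subset_iff.mpr hoO.1) isCompact_singleton
  have hKO : W ∩ F ⁻¹' {o} ⊆ W ∩ F ⁻¹' O :=
    inter_subset_inter_right _ (preimage_mono (singleton_subset_iff.mpr hoO))
  obtain ⟨t, ht⟩ := hK.elim_finite_subcover (fun s => connectedComponentIn D s)
    (fun s => hDo.connectedComponentIn)
    (fun x hx => mem_iUnion.mpr ⟨x, mem_connectedComponentIn (hOD (hKO hx))⟩)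
  refine ⟨t.filter (· ∈ D), fun s hs => (Finset.mem_filter.mp hs).2, fun x hx hxσ => ?_⟩
  have hxO : F x ∈ O := ⟨hm hx, hxσ⟩
  obtain ⟨p, hpx, hpo⟩ := subset_image_component hW hF hFo hp hOo hOc inter_subset_left hx hxO hoO
  have hpA := connectedComponentIn_subset _ _ hpx
  obtain ⟨s, hs, hps⟩ := mem_iUnion₂.mp (ht ⟨hpA.1, hpo⟩)
  have hsD : s ∈ D := connectedComponentIn_nonempty_iff.mp ⟨p, hps⟩
  refine ⟨s, Finset.mem_filter.mpr ⟨hs, hsD⟩, ?_⟩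
  rw [connectedComponentIn_eq hps, ← connectedComponentIn_eq (connectedComponentIn_mono x hOD hpx)]
  exact mem_connectedComponentIn (hOD ⟨hx, hxO⟩)

lemma fibre_finite {W : Set ℂ} (hW : IsOpen W) (hE : EndsAtInfinity Wᶜ) {F : ℂ → ℂ}
    (hF : ContinuousOn F W) (hFo : OpenOn F W) {c : ℂ} {r : ℝ} (hr : 0 < r)
    (hm : MapsTo F W (Metric.ball c r)) (hp : ProperOver F W (Metric.ball c r))
    (hK : ∀ a ∈ W, F a = c → ∀ ρ > 0, ∃ N : Set ℂ, IsOpen N ∧ a ∈ N ∧ N ⊆ Metric.ball a ρ ∧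
      ∀ x ∈ frontier N, x ∈ W → F x ≠ c) : (W ∩ F ⁻¹' {c}).Finite := by
  classical
  by_contra hinf
  have hinf : (W ∩ F ⁻¹' {c}).Infinite := hinf
  obtain ⟨S₁, hS₁, hS₁'⟩ := exists_finset_components hW hF hFo hr hm hp 1 (by norm_num)
  obtain ⟨S₂, hS₂, hS₂'⟩ := exists_finset_components hW hF hFo hr hm hp (-1) (by norm_num)
  have hcov : ∀ x ∈ W, (F x).im ≠ c.im → ∃ s ∈ S₁ ∪ S₂,
      x ∈ connectedComponentIn (W ∩ F ⁻¹' {w | w.im ≠ c.im}) s := by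
    intro x hx hne
    rcases hne.lt_or_gt with h | h
    · obtain ⟨s, hs, hxs⟩ := hS₂' x hx (by linarith)
      exact ⟨s, Finset.mem_union_right _ hs, hxs⟩
    · obtain ⟨s, hs, hxs⟩ := hS₁' x hx (by linarith)
      exact ⟨s, Finset.mem_union_left _ hs, hxs⟩
  obtain ⟨a, haW, hac⟩ := hinf.nonempty
  have hac : F a = c := hac
  obtain ⟨t, ht, x, hxW, hx⟩ := hFo.exists_add haW (hW.mem_nhds haW) Complex.I
  obtain ⟨s, hs, -⟩ := hcov x hxW (by simp [hx, hac, ht.ne'])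
  obtain ⟨T, hTs, hTc⟩ := hinf.exists_subset_card_eq (S₁ ∪ S₂).card
  have := fibre_card_lt hW hE hF hFo c hK (S₁ ∪ S₂) ⟨s, hs⟩
    (fun s hs => (Finset.mem_union.mp hs).elim (hS₁ s) (hS₂ s)) hcov T (fun a ha => hTs ha)
  omega

/-- The fibres of a light open map are discrete. -/
lemma exists_isolated {Ω : Set ℂ} (hΩ : IsOpen Ω) {f : ℂ → ℂ} (hf : ContinuousOn f Ω)
    (hfo : OpenOn f Ω) (hl : ∀ y, IsTotallyDisconnected (Ω ∩ f ⁻¹' {y})) {z : ℂ} (hz : z ∈ Ω) :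
    ∃ ε > 0, Metric.ball z ε ⊆ Ω ∧ ∀ x ∈ Metric.ball z ε, f x = f z → x = z := by
  obtain ⟨R, hR, hRΩ⟩ := Metric.isOpen_iff.mp hΩ z hz
  obtain ⟨N, hN, hzN, hNR, -, hNf⟩ := exists_nhd_frontier hΩ hf (hl _) hz (half_pos hR)
  obtain ⟨r, hr, W, hW, -, hzW, hWN, hE, hm, hp⟩ := exists_normal_domain (hf.mono hRΩ)
    (fun x hx => hfo x (hRΩ hx)) hN hzN
    (((closure_mono hNR).trans Metric.closure_ball_subset_closedBall).trans
      (Metric.closedBall_subset_ball (half_lt_self hR))) hNf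
  have hWΩ : W ⊆ Ω := hWN.trans ((hNR.trans (Metric.ball_subset_ball (half_le_self hR.le))).trans
    hRΩ)
  have hfin := fibre_finite hW hE (hf.mono hWΩ) (fun x hx => hfo x (hWΩ hx)) hr hm hp (by
    intro a ha haz ρ hρ
    obtain ⟨N', h1, h2, h3, -, h5⟩ := exists_nhd_frontier hΩ hf (hl _) (hWΩ ha) hρ
    exact ⟨N', h1, h2, h3, fun x hx _ => haz ▸ h5 x hx⟩)
  have hopen : IsOpen (W \ ((W ∩ f ⁻¹' {f z}) \ {z})) :=
    hW.sdiff (hfin.subset sdiff_subset).isClosed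
  obtain ⟨ε, hε, hsub⟩ := Metric.isOpen_iff.mp hopen z ⟨hzW, fun h => h.2 rfl⟩
  refine ⟨ε, hε, fun x hx => hWΩ (hsub hx).1, fun x hx hxz => ?_⟩
  by_contra hne
  exact (hsub hx).2 ⟨⟨(hsub hx).1, hxz⟩, hne⟩

/-! ### Logarithmic coordinates near a point -/

/-- The map `f`, with its only zero at the origin, is a proper open map from `W` to the disc of
radius `r`, and `G` represents it in logarithmic coordinates: `exp (G ζ) = f (exp ζ)`. The integer
`n` is the winding number of `f` around its zero. -/
structure LogLift (f G : ℂ → ℂ) (W : Set ℂ) (r : ℝ) (n : ℤ) : Prop where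
  r_pos : 0 < r
  isOpen : IsOpen W
  zero_mem : (0 : ℂ) ∈ W
  ends : EndsAtInfinity Wᶜ
  cont : ContinuousOn f W
  openOn : OpenOn f W
  maps : MapsTo f W (Metric.ball 0 r)
  proper : ProperOver f W (Metric.ball 0 r)
  map_zero : f 0 = 0
  isolated : ∀ x ∈ W, ∀ᶠ x' in 𝓝 x, f x' = f x → x' = x
  contG : Continuous G
  exp_G : ∀ ζ, Complex.exp ζ ∈ W → Complex.exp (G ζ) = f (Complex.exp ζ)
  period : ∀ ζ, G (ζ + 2 * Real.pi * Complex.I) = G ζ + n * (2 * Real.pi * Complex.I)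

/-- Any `ζ` can be moved to the strip `0 ≤ Im ≤ 2π` by a multiple of `2πi`. -/
lemma exists_strip (ζ : ℂ) : ∃ m : ℤ, 0 ≤ (ζ + m * (2 * Real.pi * Complex.I)).im ∧
    (ζ + m * (2 * Real.pi * Complex.I)).im ≤ 2 * Real.pi ∧
    (ζ + m * (2 * Real.pi * Complex.I)).re = ζ.re := by
  have hπ := Real.two_pi_pos
  refine ⟨-⌊ζ.im / (2 * Real.pi)⌋, ?_, ?_, by simp⟩
  · have := Int.floor_le (ζ.im / (2 * Real.pi))
    rw [le_div_iff₀ hπ] at this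
    simp
    linarith
  · have := Int.lt_floor_add_one (ζ.im / (2 * Real.pi))
    rw [div_lt_iff₀ hπ] at this
    simp
    linarith

lemma isCompact_box (a b : ℝ) :
    IsCompact {ζ : ℂ | (a ≤ ζ.re ∧ ζ.re ≤ b) ∧ 0 ≤ ζ.im ∧ ζ.im ≤ 2 * Real.pi} :=
  (isCompact_Icc (a := a) (b := b)).reProdIm (isCompact_Icc (a := 0) (b := 2 * Real.pi))

/-- A compact set off the origin lies in an annulus. -/
lemma exists_annulus {K : Set ℂ} (hK : IsCompact K) (h0 : (0 : ℂ) ∉ K) :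
    ∃ a b : ℝ, ∀ ζ, Complex.exp ζ ∈ K → a ≤ ζ.re ∧ ζ.re ≤ b := by
  have hc : IsCompact ((fun x : ℂ => Real.log ‖x‖) '' K) :=
    hK.image_of_continuousOn (continuous_norm.continuousOn.log
      fun x hx h => h0 (by rwa [norm_eq_zero.mp h] at hx))
  obtain ⟨a, ha⟩ := hc.bddBelow
  obtain ⟨b, hb⟩ := hc.bddAbove
  refine ⟨a, b, fun ζ hζ => ?_⟩
  have : Real.log ‖Complex.exp ζ‖ = ζ.re := by rw [Complex.norm_exp, Real.log_exp]
  exact ⟨this ▸ ha ⟨_, hζ, rfl⟩, this ▸ hb ⟨_, hζ, rfl⟩⟩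

namespace LogLift

variable {f G : ℂ → ℂ} {W : Set ℂ} {r : ℝ} {n : ℤ}

lemma period_int (h : LogLift f G W r n) (ζ : ℂ) (m : ℤ) :
    G (ζ + m * (2 * Real.pi * Complex.I)) = G ζ + n * m * (2 * Real.pi * Complex.I) := by
  induction m using Int.induction_on with
  | zero => simp
  | succ i ih =>
    have := h.period (ζ + (i : ℤ) * (2 * Real.pi * Complex.I))
    rw [ih] at this
    push_cast at this ⊢
    rw [show ζ + (i + 1) * (2 * Real.pi * Complex.I) =
      ζ + i * (2 * Real.pi * Complex.I) + 2 * Real.pi * Complex.I by ring, this]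
    ring
  | pred i ih =>
    have := h.period (ζ + (-(i : ℤ) - 1 : ℤ) * (2 * Real.pi * Complex.I))
    push_cast at this ih ⊢
    rw [show ζ + (-(i : ℂ) - 1) * (2 * Real.pi * Complex.I) + 2 * Real.pi * Complex.I =
      ζ + -i * (2 * Real.pi * Complex.I) by ring, ih] at this
    linear_combination -this

lemma exp_add_int (ζ : ℂ) (m : ℤ) :
    Complex.exp (ζ + m * (2 * Real.pi * Complex.I)) = Complex.exp ζ :=
  Complex.exp_eq_exp_iff_exists_int.mpr ⟨m, rfl⟩

lemma ne_zero (h : LogLift f G W r n) {x : ℂ} (hx : x ∈ W) (hx0 : x ≠ 0) : f x ≠ 0 := by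
  rw [← Complex.exp_log hx0, ← h.exp_G _ (by rwa [Complex.exp_log hx0])]
  exact Complex.exp_ne_zero _

lemma isOpen_pre (h : LogLift f G W r n) : IsOpen (Complex.exp ⁻¹' W) :=
  h.isOpen.preimage Complex.continuous_exp

lemma ends_pre (h : LogLift f G W r n) : EndsAtInfinity (Complex.exp ⁻¹' W)ᶜ := by
  intro H O hH hO hHO
  have := h.ends (Complex.exp '' H) (Complex.exp '' O) (hH.image Complex.continuous_exp)
    (Complex.isOpenMap_exp O hO) (by
      ext x
      constructor
      · rintro ⟨hx, ζ, hζ, rfl⟩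
        exact ⟨ζ, hHO ▸ ⟨hx, hζ⟩, rfl⟩
      · rintro ⟨ζ, hζ, rfl⟩
        rw [← hHO] at hζ
        exact ⟨hζ.1, ζ, hζ.2, rfl⟩)
  simpa using this

lemma eq_of_exp_eq {u v c : ℂ} (he : Complex.exp u = Complex.exp v)
    (hu : u ∈ Metric.ball c Real.pi) (hv : v ∈ Metric.ball c Real.pi) : u = v := by
  obtain ⟨m, hm⟩ := Complex.exp_eq_exp_iff_exists_int.mp he
  have hd : dist u v < 2 * Real.pi := by
    have := dist_triangle_right u v c
    rw [Metric.mem_ball] at hu hv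
    linarith
  rw [hm, dist_eq_norm, add_sub_cancel_left, norm_mul, norm_mul, norm_mul, Complex.norm_I,
    Complex.norm_real, Complex.norm_intCast, Real.norm_of_nonneg Real.pi_pos.le] at hd
  have h1 : |(m : ℝ)| < 1 := by
    have : |(m : ℝ)| * (2 * Real.pi) < 1 * (2 * Real.pi) := by simpa using hd
    exact lt_of_mul_lt_mul_right this Real.two_pi_pos.le
  have h2 : m = 0 := by
    have : |m| < 1 := by exact_mod_cast h1
    exact Int.abs_lt_one_iff.mp this
  simpa [h2] using hm

lemma openOn_G (h : LogLift f G W r n) : OpenOn G (Complex.exp ⁻¹' W) := by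
  intro ζ hζ N hN
  rw [mem_map] at hN
  have hM : G ⁻¹' N ∩ G ⁻¹' Metric.ball (G ζ) Real.pi ∩ Complex.exp ⁻¹' W ∈ 𝓝 ζ :=
    inter_mem (inter_mem hN (h.contG.continuousAt (Metric.ball_mem_nhds _ Real.pi_pos)))
      (h.isOpen_pre.mem_nhds hζ)
  set M := G ⁻¹' N ∩ G ⁻¹' Metric.ball (G ζ) Real.pi ∩ Complex.exp ⁻¹' W
  have h1 : Complex.exp '' M ∈ 𝓝 (Complex.exp ζ) := Complex.isOpenMap_exp.image_mem_nhds hM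
  have h2 : f '' (Complex.exp '' M) ∈ 𝓝 (f (Complex.exp ζ)) :=
    h.openOn _ hζ (image_mem_map h1)
  rw [← h.exp_G ζ hζ] at h2
  filter_upwards [Complex.continuous_exp.continuousAt h2, Metric.ball_mem_nhds _ Real.pi_pos]
    with w hw hwb
  obtain ⟨_, ⟨ξ, hξ, rfl⟩, he⟩ := hw
  rw [← h.exp_G ξ hξ.2] at he
  rw [← eq_of_exp_eq he hξ.1.2 hwb]
  exact hξ.1.1

lemma exists_bound (h : LogLift f G W r n) (a b : ℝ) :
    ∃ M, 0 ≤ M ∧ ∀ ζ : ℂ, a ≤ ζ.re → ζ.re ≤ b → ‖G ζ - n * ζ‖ ≤ M := by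
  obtain ⟨M, hM⟩ := (isCompact_box a b).exists_bound_of_continuousOn (f := fun ζ => G ζ - n * ζ)
    (h.contG.sub (by fun_prop)).continuousOn
  refine ⟨max M 0, le_max_right _ _, fun ζ ha hb => ?_⟩
  obtain ⟨m, h0, h1, h2⟩ := exists_strip ζ
  have := hM _ ⟨⟨h2.symm ▸ ha, h2.symm ▸ hb⟩, h0, h1⟩
  rw [h.period_int] at this
  rw [show G ζ - n * ζ = G ζ + n * m * (2 * Real.pi * Complex.I) -
    n * (ζ + m * (2 * Real.pi * Complex.I)) by ring]
  exact this.trans (le_max_left _ _)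

lemma norm_f (h : LogLift f G W r n) {ζ : ℂ} (hζ : Complex.exp ζ ∈ W) :
    ‖f (Complex.exp ζ)‖ = Real.exp (G ζ).re := by
  rw [← h.exp_G ζ hζ, Complex.norm_exp]

/-- The winding number is nonzero: otherwise `G` is periodic, so that `Im G` attains a maximum on
a level line of `Re G`, which contradicts openness. -/
lemma n_ne_zero (h : LogLift f G W r n) : n ≠ 0 := by
  intro hn
  have hW0 : ∃ x₀ ∈ W, x₀ ≠ 0 := by
    have : ∀ᶠ x in 𝓝[≠] (0 : ℂ), x ∈ W ∧ x ≠ 0 :=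
      inter_mem (mem_nhdsWithin_of_mem_nhds (h.isOpen.mem_nhds h.zero_mem)) self_mem_nhdsWithin
    exact this.exists
  obtain ⟨x₀, hx₀, hx₀0⟩ := hW0
  have hs : ‖f x₀‖ < r := by simpa using h.maps hx₀
  have hs0 : 0 < ‖f x₀‖ := norm_pos_iff.mpr (h.ne_zero hx₀ hx₀0)
  have hK := h.proper (Metric.sphere 0 ‖f x₀‖)
    (fun x hx => by rw [mem_sphere_zero_iff_norm] at hx; simpa [hx] using hs)
    (isCompact_sphere _ _)
  set K := W ∩ f ⁻¹' Metric.sphere 0 ‖f x₀‖ with hKdef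
  have hmemK : ∀ ζ, Complex.exp ζ ∈ W →
      (Complex.exp ζ ∈ K ↔ Real.exp (G ζ).re = ‖f x₀‖) := fun ζ hζ => by
    rw [← h.norm_f hζ]
    simp [hKdef, hζ]
  obtain ⟨a, b, hab⟩ := exists_annulus hK (fun h0 => by
    have := h0.2
    rw [mem_preimage, h.map_zero, mem_sphere_zero_iff_norm, norm_zero] at this
    exact hs0.ne this)
  set Q := {ζ : ℂ | (a ≤ ζ.re ∧ ζ.re ≤ b) ∧ 0 ≤ ζ.im ∧ ζ.im ≤ 2 * Real.pi} ∩ Complex.exp ⁻¹' K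
  have hQ : IsCompact Q := (isCompact_box a b).inter_right
    (hK.isClosed.preimage Complex.continuous_exp)
  have hred : ∀ ζ, Complex.exp ζ ∈ K → ∃ ζ' ∈ Q, G ζ' = G ζ := by
    intro ζ hζ
    obtain ⟨m, h0, h1, h2⟩ := exists_strip ζ
    refine ⟨ζ + m * (2 * Real.pi * Complex.I), ⟨⟨?_, h0, h1⟩, ?_⟩, ?_⟩
    · rw [h2]; exact hab ζ hζ
    · rwa [mem_preimage, exp_add_int]
    · rw [h.period_int, hn]; simp
  have hQne : Q.Nonempty := by
    obtain ⟨ζ', hζ', -⟩ := hred (Complex.log x₀) (by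
      rw [Complex.exp_log hx₀0]
      exact ⟨hx₀, by simp⟩)
    exact ⟨ζ', hζ'⟩
  obtain ⟨ζ, hζ, hmax⟩ := hQ.exists_isMaxOn hQne (f := fun ζ => (G ζ).im)
    (Complex.continuous_im.comp h.contG).continuousOn
  have hζW : Complex.exp ζ ∈ W := hζ.2.1
  obtain ⟨t, ht, ζ₁, hζ₁, he⟩ := h.openOn_G.exists_add hζW (h.isOpen_pre.mem_nhds hζW) Complex.I
  have hre : (G ζ₁).re = (G ζ).re := by simp [he]
  have him : (G ζ₁).im = (G ζ).im + t := by simp [he]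
  obtain ⟨ζ₂, hζ₂, he₂⟩ := hred ζ₁ (by
    rw [hmemK ζ₁ hζ₁, hre, ← hmemK ζ hζW]
    exact hζ.2)
  have := hmax hζ₂
  simp only [mem_ofPred_eq, he₂, him] at this
  linarith

/-- In logarithmic coordinates, properness over the disc becomes properness over a half plane. -/
lemma proper_G (h : LogLift f G W r n) :
    ProperOver G (Complex.exp ⁻¹' W) {w | w.re < Real.log r} := by
  intro C hC hCc
  have hK := h.proper (Complex.exp '' C) (by
    rintro _ ⟨w, hw, rfl⟩
    have : w.re < Real.log r := hC hw
    rw [mem_ball_zero_iff, Complex.norm_exp]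
    exact (Real.lt_log_iff_exp_lt h.r_pos).mp this) (hCc.image Complex.continuous_exp)
  set K := W ∩ f ⁻¹' (Complex.exp '' C)
  have heq : Complex.exp ⁻¹' W ∩ G ⁻¹' C = Complex.exp ⁻¹' K ∩ G ⁻¹' C := by
    ext ζ
    constructor
    · exact fun hζ => ⟨⟨hζ.1, G ζ, hζ.2, h.exp_G ζ hζ.1⟩, hζ.2⟩
    · exact fun hζ => ⟨hζ.1.1, hζ.2⟩
  obtain ⟨a, b, hab⟩ := exists_annulus hK (fun h0 => by
    obtain ⟨w, -, hw⟩ := h0.2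
    rw [h.map_zero] at hw
    exact Complex.exp_ne_zero _ hw)
  obtain ⟨M, hM0, hM⟩ := h.exists_bound a b
  obtain ⟨M', hM'⟩ := hCc.isBounded.exists_norm_le
  rw [heq]
  refine (isCompact_closedBall (0 : ℂ) (M + M')).of_isClosed_subset
    ((hK.isClosed.preimage Complex.continuous_exp).inter (hCc.isClosed.preimage h.contG)) ?_
  rintro ζ ⟨hζK, hζC⟩
  obtain ⟨ha, hb⟩ := hab ζ hζK
  have h1 := hM ζ ha hb
  have h2 := hM' _ hζC
  have h3 : ‖(n : ℂ) * ζ‖ ≤ M + M' := by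
    have : (n : ℂ) * ζ = G ζ - (G ζ - n * ζ) := by ring
    rw [this]
    exact (norm_sub_le _ _).trans (by linarith)
  rw [norm_mul, Complex.norm_intCast] at h3
  have h4 : (1 : ℝ) ≤ |(n : ℝ)| := by
    exact_mod_cast Int.one_le_abs h.n_ne_zero
  rw [mem_closedBall_zero_iff]
  nlinarith [norm_nonneg ζ]

/-- Points of `W` with small image are close to the origin. -/
lemma exists_small (h : LogLift f G W r n) {e : ℝ} (he : 0 < e) :
    ∃ m > 0, ∀ x ∈ W, ‖f x‖ < m → ‖x‖ < e := by
  have hr := h.r_pos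
  have hK := (h.proper (Metric.closedBall 0 (r / 2))
    (Metric.closedBall_subset_ball (by linarith)) (isCompact_closedBall _ _)).diff
    (Metric.isOpen_ball (x := (0 : ℂ)) (ε := e))
  set K := (W ∩ f ⁻¹' Metric.closedBall 0 (r / 2)) \ Metric.ball 0 e
  have h0 : (0 : ℂ) ∉ f '' K := by
    rintro ⟨x, hx, hx0⟩
    refine h.ne_zero hx.1.1 (fun hx0 => hx.2 ?_) hx0
    simpa [hx0] using he
  obtain ⟨m, hm, hball⟩ := Metric.isOpen_iff.mp
    (hK.image_of_continuousOn (h.cont.mono fun x hx => hx.1.1)).isClosed.isOpen_compl 0 h0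
  refine ⟨min m (r / 2), lt_min hm (by linarith), fun x hx hlt => ?_⟩
  by_contra! hxe
  refine hball (mem_ball_zero_iff.mpr (hlt.trans_le (min_le_left _ _))) ⟨x, ⟨⟨hx, ?_⟩, ?_⟩, rfl⟩
  · exact mem_closedBall_zero_iff.mpr (hlt.le.trans (min_le_right _ _))
  · simpa using hxe

/-- If the winding number is positive, the part of `W` (in logarithmic coordinates) on either side
of the preimage of a horizontal line is connected. Going far away from the line, each component
crosses a fixed vertical line `Re ζ = ℓ`, on which `Im (G ζ)` and `n Im ζ` differ by a bounded
amount. -/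
lemma exists_component (h : LogLift f G W r n) (hn : 0 < n) (y : ℝ) (σ : ℝ) (hσ : σ * σ = 1) :
    ∃ s, Complex.exp s ∈ W ∧ (G s).im ≠ y ∧ ∀ p, Complex.exp p ∈ W → 0 < σ * ((G p).im - y) →
      p ∈ connectedComponentIn (Complex.exp ⁻¹' W ∩ G ⁻¹' {w | w.im ≠ y}) s := by
  have hr := h.r_pos
  have hσ1 : |σ| = 1 := by
    have : |σ| * |σ| = 1 := by rw [abs_mul_abs_self, hσ]
    nlinarith [abs_nonneg σ]
  have hn' : (0 : ℝ) < n := by exact_mod_cast hn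
  obtain ⟨e, he, heW⟩ := Metric.nhds_basis_closedBall.mem_iff.mp (h.isOpen.mem_nhds h.zero_mem)
  set ℓ := Real.log e with hℓ
  have hexpl : Real.exp ℓ = e := Real.exp_log he
  -- On the disc of radius `e` the modulus of `f` is at most `m₂ < r`.
  obtain ⟨m₂, hm₂0, hm₂r, hm₂⟩ : ∃ m₂, 0 < m₂ ∧ m₂ < r ∧
      ∀ x ∈ Metric.closedBall (0 : ℂ) e, ‖f x‖ ≤ m₂ := by
    obtain ⟨x, hx, hmax⟩ := (isCompact_closedBall (0 : ℂ) e).exists_isMaxOn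
      ⟨0, by simp [he.le]⟩ (f := fun x => ‖f x‖) (h.cont.mono heW).norm
    have hlt : ‖f x‖ < r := mem_ball_zero_iff.mp (h.maps (heW hx))
    exact ⟨max ‖f x‖ (r / 2), lt_max_of_lt_right (by linarith), max_lt hlt (by linarith),
      fun x' hx' => (hmax hx').trans (le_max_left _ _)⟩
  obtain ⟨m₁, hm₁0, hm₁⟩ := h.exists_small he
  obtain ⟨M, hM0, hM⟩ := h.exists_bound ℓ ℓ
  have hMim : ∀ ζ : ℂ, ζ.re = ℓ → |σ * (G ζ).im - σ * (n * ζ.im)| ≤ M := by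
    intro ζ hζ
    rw [← mul_sub, abs_mul, hσ1, one_mul]
    have h1 := (Complex.abs_im_le_norm _).trans (hM ζ hζ.ge hζ.le)
    simpa using h1
  have hΓW : ∀ ζ : ℂ, ζ.re = ℓ → Complex.exp ζ ∈ W := fun ζ hζ => heW (by
    rw [mem_closedBall_zero_iff, Complex.norm_exp, hζ, hexpl])
  set D : Set ℂ := Complex.exp ⁻¹' W ∩ G ⁻¹' {w | w.im ≠ y} with hD
  set Γ : Set ℂ := {ζ | ζ.re = ℓ} ∩ {ζ | σ * y + M < (((σ * n : ℝ)) • Complex.imLm) ζ} with hΓ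
  have hΓc : IsPreconnected Γ := by
    refine Convex.isPreconnected (Convex.inter ?_ (convex_halfSpace_gt (LinearMap.isLinear _) _))
    exact convex_hyperplane (f := Complex.reLm) (LinearMap.isLinear _) ℓ
  have hmemΓ : ∀ ζ : ℂ, ζ ∈ Γ ↔ ζ.re = ℓ ∧ σ * y + M < σ * n * ζ.im := fun ζ => by simp [hΓ]
  have hΓD : Γ ⊆ D := by
    intro ζ hζ
    obtain ⟨h1, h2⟩ := (hmemΓ ζ).mp hζ
    refine ⟨hΓW ζ h1, fun hy : (G ζ).im = y => ?_⟩
    have h3 := (abs_le.mp (hMim ζ h1)).1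
    rw [hy] at h3
    nlinarith
  set s : ℂ := ⟨ℓ, σ * (σ * y + M + 1) / n⟩ with hs
  have hsΓ : s ∈ Γ := by
    refine (hmemΓ s).mpr ⟨rfl, ?_⟩
    have : σ * n * s.im = (σ * σ) * (σ * y + M + 1) := by
      simp only [hs]
      field_simp
    rw [this, hσ]
    linarith
  refine ⟨s, (hΓD hsΓ).1, (hΓD hsΓ).2, fun p hp hpσ => ?_⟩
  -- The quarter planes `σ Im w > t`, `Re w < log r`.
  set O : ℝ → Set ℂ := fun t => {w | w.re < Real.log r} ∩ {w | t < (σ • Complex.imLm) w} with hO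
  have hmemO : ∀ t w, w ∈ O t ↔ w.re < Real.log r ∧ t < σ * w.im := fun t w => by simp [hO]
  have hOo : ∀ t, IsOpen (O t) := fun t =>
    (isOpen_lt Complex.continuous_re continuous_const).inter
      (isOpen_lt continuous_const (continuous_const.mul Complex.continuous_im))
  have hOc : ∀ t, IsPreconnected (O t) := fun t => Convex.isPreconnected <|
    (convex_halfSpace_lt (f := Complex.reLm) (LinearMap.isLinear _) _).inter
      (convex_halfSpace_gt (LinearMap.isLinear _) _)
  have hOH : ∀ t, O t ⊆ {w | w.re < Real.log r} := fun t => inter_subset_left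
  have hOD : ∀ t, σ * y ≤ t → Complex.exp ⁻¹' W ∩ G ⁻¹' O t ⊆ D := fun t ht x hx =>
    ⟨hx.1, fun hy : (G x).im = y => by
      have := ((hmemO _ _).mp hx.2).2
      rw [hy] at this
      linarith⟩
  have hre : ∀ ζ, Complex.exp ζ ∈ W → (G ζ).re < Real.log r := fun ζ hζ => by
    rw [Real.lt_log_iff_exp_lt hr, ← h.norm_f hζ]
    exact mem_ball_zero_iff.mp (h.maps hζ)
  have hsurj := fun t x hx hxO => subset_image_component h.isOpen_pre h.contG.continuousOn h.openOn_G
    h.proper_G (hOo t) (hOc t) (hOH t) (x := x) hx hxO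
  have hval : ∀ (t : ℝ) (u : ℝ), u < Real.log r → (⟨u, σ * (t + 1)⟩ : ℂ) ∈ O t := fun t u hu => by
    refine (hmemO _ _).mpr ⟨hu, ?_⟩
    change t < σ * (σ * (t + 1))
    rw [← mul_assoc, hσ]
    linarith
  have hpD : p ∈ D := ⟨hp, fun hy : (G p).im = y => by
    simp [hy] at hpσ⟩
  set t := σ * y + 2 * M with ht
  obtain ⟨p₁, hp₁c, hp₁⟩ := hsurj (σ * y) p hp ((hmemO _ _).mpr ⟨hre p hp, by linarith⟩)
    ((hmemO _ _).mpr ((hmemO _ _).mp (hval t (Real.log r - 1) (by linarith)) |>.imp_right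
      fun hlt => by linarith))
  have hp₁W := (connectedComponentIn_subset _ _ hp₁c).1
  have hp₁O : G p₁ ∈ O t := hp₁ ▸ hval t _ (by linarith)
  obtain ⟨u, hu₁, hu₂⟩ := exists_between (Real.log_lt_log hm₂0 hm₂r)
  obtain ⟨q₁, hq₁c, hq₁⟩ := hsurj t p₁ hp₁W hp₁O (hval t u hu₂)
  obtain ⟨q₂, hq₂c, hq₂⟩ := hsurj t p₁ hp₁W hp₁O
    (hval t (min (Real.log m₁) (Real.log r) - 1) (by linarith [min_le_right (Real.log m₁) (Real.log r)]))
  have hq₁W := (connectedComponentIn_subset _ _ hq₁c).1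
  have hq₂W := (connectedComponentIn_subset _ _ hq₂c).1
  have hq₁ℓ : ℓ ≤ q₁.re := by
    by_contra! hlt
    have h1 := hm₂ (Complex.exp q₁) (by
      rw [mem_closedBall_zero_iff, Complex.norm_exp, ← hexpl]
      exact Real.exp_le_exp.mpr hlt.le)
    rw [h.norm_f hq₁W, ← Real.le_log_iff_exp_le hm₂0, hq₁] at h1
    change u ≤ _ at h1
    linarith
  have hq₂ℓ : q₂.re ≤ ℓ := by
    have h1 := hm₁ (Complex.exp q₂) hq₂W (by
      rw [h.norm_f hq₂W, ← Real.lt_log_iff_exp_lt hm₁0, hq₂]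
      change min (Real.log m₁) (Real.log r) - 1 < _
      linarith [min_le_left (Real.log m₁) (Real.log r)])
    rw [Complex.norm_exp, ← hexpl] at h1
    exact (Real.exp_lt_exp.mp h1).le
  obtain ⟨q, hqc, hqℓ⟩ := isPreconnected_connectedComponentIn.intermediate_value hq₂c hq₁c
    Complex.continuous_re.continuousOn ⟨hq₂ℓ, hq₁ℓ⟩
  have hqO := (hmemO _ _).mp (connectedComponentIn_subset _ _ hqc).2
  have hqΓ : q ∈ Γ := by
    refine (hmemΓ q).mpr ⟨hqℓ, ?_⟩
    have h3 := (abs_le.mp (hMim q hqℓ)).2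
    nlinarith [hqO.2]
  have e₁ := connectedComponentIn_eq (connectedComponentIn_mono p (hOD (σ * y) le_rfl) hp₁c)
  have e₂ := connectedComponentIn_eq (connectedComponentIn_mono p₁ (hOD t (by linarith)) hqc)
  have e₃ := connectedComponentIn_eq (hΓc.subset_connectedComponentIn hqΓ hΓD hsΓ)
  rw [← e₃, ← e₂, ← e₁]
  exact mem_connectedComponentIn hpD

lemma exists_ball_frontier (h : LogLift f G W r n) {a : ℂ} (ha : Complex.exp a ∈ W) {ρ : ℝ}
    (hρ : 0 < ρ) : ∃ N : Set ℂ, IsOpen N ∧ a ∈ N ∧ N ⊆ Metric.ball a ρ ∧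
      ∀ x ∈ frontier N, Complex.exp x ∈ W → G x ≠ G a := by
  have hev : ∀ᶠ ζ in 𝓝 a, (f (Complex.exp ζ) = f (Complex.exp a) →
      Complex.exp ζ = Complex.exp a) ∧ ζ ∈ Metric.ball a Real.pi :=
    (Complex.continuous_exp.continuousAt.eventually (h.isolated _ ha)).and
      (Metric.ball_mem_nhds _ Real.pi_pos)
  obtain ⟨ε, hε, hsub⟩ := Metric.nhds_basis_closedBall.mem_iff.mp hev
  have hmin : 0 < min ε ρ := lt_min hε hρ
  refine ⟨Metric.ball a (min ε ρ), Metric.isOpen_ball, Metric.mem_ball_self hmin,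
    Metric.ball_subset_ball (min_le_right _ _), fun x hx hxW hxa => ?_⟩
  rw [frontier_ball a hmin.ne'] at hx
  obtain ⟨h1, h2⟩ := hsub (Metric.closedBall_subset_closedBall (min_le_left _ _)
    (Metric.sphere_subset_closedBall hx))
  have := eq_of_exp_eq (h1 (by rw [← h.exp_G x hxW, ← h.exp_G a ha, hxa])) h2
    (Metric.mem_ball_self Real.pi_pos)
  rw [this, Metric.mem_sphere, dist_self] at hx
  exact hmin.ne hx

/-- With only two components off the preimage of a line, the fibres of `G` are singletons. -/
lemma injOn_G (h : LogLift f G W r n) (hn : 0 < n) : InjOn G (Complex.exp ⁻¹' W) := by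
  classical
  intro a ha b hb hab
  by_contra hne
  obtain ⟨s₁, hs₁W, hs₁y, hs₁⟩ := h.exists_component hn (G a).im 1 (by norm_num)
  obtain ⟨s₂, hs₂W, hs₂y, hs₂⟩ := h.exists_component hn (G a).im (-1) (by norm_num)
  have := fibre_card_lt h.isOpen_pre h.ends_pre h.contG.continuousOn h.openOn_G (G a)
    (fun c hc hca ρ hρ => hca ▸ h.exists_ball_frontier hc hρ) {s₁, s₂} ⟨s₁, by simp⟩
    (by
      intro s hs
      rcases Finset.mem_insert.mp hs with rfl | hs
      · exact ⟨hs₁W, hs₁y⟩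
      · rw [Finset.mem_singleton.mp hs]
        exact ⟨hs₂W, hs₂y⟩)
    (by
      intro x hx hxy
      rcases hxy.lt_or_gt with hlt | hgt
      · exact ⟨s₂, by simp, hs₂ x hx (by linarith)⟩
      · exact ⟨s₁, by simp, hs₁ x hx (by linarith)⟩)
    {a, b} (by
      intro c hc
      rcases Finset.mem_insert.mp hc with rfl | hc
      · exact ⟨ha, rfl⟩
      · rw [Finset.mem_singleton.mp hc]
        exact ⟨hb, hab.symm⟩)
  rw [Finset.card_pair hne] at this
  exact absurd (this.trans_le Finset.card_le_two) (lt_irrefl _)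

lemma surjOn_G (h : LogLift f G W r n) {w : ℂ} (hw : w.re < Real.log r) :
    ∃ ζ, Complex.exp ζ ∈ W ∧ G ζ = w := by
  obtain ⟨e, he, heW⟩ := Metric.nhds_basis_closedBall.mem_iff.mp (h.isOpen.mem_nhds h.zero_mem)
  have hx : Complex.exp (Real.log e : ℝ) ∈ W := heW (by
    rw [mem_closedBall_zero_iff, Complex.norm_exp, Complex.ofReal_re, Real.exp_log he])
  obtain ⟨ζ, hζ, he⟩ := subset_image_component h.isOpen_pre h.contG.continuousOn h.openOn_G h.proper_G
    (isOpen_lt Complex.continuous_re continuous_const)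
    (convex_halfSpace_lt (f := Complex.reLm) (LinearMap.isLinear _) (Real.log r)).isPreconnected
    Subset.rfl hx (by
      change (G _).re < Real.log r
      rw [Real.lt_log_iff_exp_lt h.r_pos, ← h.norm_f hx]
      exact mem_ball_zero_iff.mp (h.maps hx)) hw
  exact ⟨ζ, (connectedComponentIn_subset _ _ hζ).1, he⟩

lemma conj (h : LogLift f G W r n) :
    LogLift (fun x => starRingEnd ℂ (f x)) (fun ζ => starRingEnd ℂ (G ζ)) W r (-n) where
  r_pos := h.r_pos
  isOpen := h.isOpen
  zero_mem := h.zero_mem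
  ends := h.ends
  cont := Complex.continuous_conj.comp_continuousOn h.cont
  openOn x hx := by
    have h1 : 𝓝 (starRingEnd ℂ (f x)) ≤ map (starRingEnd ℂ) (𝓝 (f x)) :=
      Complex.conjLIE.toHomeomorph.isOpenMap.nhds_le (f x)
    exact h1.trans (map_mono (h.openOn x hx))
  maps x hx := by simpa using h.maps hx
  proper C hC hCc := by
    refine h.proper (starRingEnd ℂ ⁻¹' C) (fun x hx => ?_) ?_
    · simpa using hC hx
    · exact Complex.conjLIE.toHomeomorph.isCompact_preimage.mpr hCc
  map_zero := by simp [h.map_zero]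
  isolated x hx := by
    filter_upwards [h.isolated x hx] with x' hx' he
    exact hx' ((starRingEnd ℂ).injective he)
  contG := Complex.continuous_conj.comp h.contG
  exp_G ζ hζ := by rw [Complex.exp_conj, h.exp_G ζ hζ]
  period ζ := by simp [h.period, Complex.conj_ofNat]

/-- The `n`-th root `exp ((G - log r) / n)` of `f / r`, as a function on `W`. The value of
`Complex.log` matters only modulo `2πi`, by periodicity of `G`. -/
noncomputable def root (G : ℂ → ℂ) (r : ℝ) (k : ℕ) (x : ℂ) : ℂ :=
  open Classical in if x = 0 then 0 else Complex.exp ((G (Complex.log x) - Real.log r) / k)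

lemma root_zero : root G r k 0 = 0 := if_pos rfl

lemma root_exp {k : ℕ} (hk : 0 < k) (h : LogLift f G W r k) (ζ : ℂ) :
    root G r k (Complex.exp ζ) = Complex.exp ((G ζ - Real.log r) / k) := by
  have hk' : (k : ℂ) ≠ 0 := by exact_mod_cast hk.ne'
  rw [root, if_neg (Complex.exp_ne_zero ζ)]
  obtain ⟨m, hm⟩ := Complex.exp_eq_exp_iff_exists_int.mp
    (Complex.exp_log (Complex.exp_ne_zero ζ))
  rw [hm, h.period_int]
  refine Complex.exp_eq_exp_iff_exists_int.mpr ⟨m, ?_⟩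
  field_simp
  push_cast
  ring

lemma root_pow {k : ℕ} (hk : 0 < k) (h : LogLift f G W r k) {x : ℂ} (hx : x ∈ W) :
    root G r k x ^ k = f x / r := by
  have hk' : (k : ℂ) ≠ 0 := by exact_mod_cast hk.ne'
  by_cases hx0 : x = 0
  · rw [hx0, root_zero, h.map_zero, zero_pow hk.ne', zero_div]
  · rw [← Complex.exp_log hx0] at hx ⊢
    rw [root_exp hk h, ← Complex.exp_nat_mul, mul_div_cancel₀ _ hk', Complex.exp_sub, h.exp_G _ hx,
      ← Complex.ofReal_exp, Real.exp_log h.r_pos]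

lemma norm_root_pow {k : ℕ} (hk : 0 < k) (h : LogLift f G W r k) {x : ℂ} (hx : x ∈ W) :
    ‖root G r k x‖ ^ k = ‖f x‖ / r := by
  rw [← norm_pow, root_pow hk h hx, norm_div, Complex.norm_real, Real.norm_of_nonneg h.r_pos.le]

lemma root_ne_zero {k : ℕ} {x : ℂ} (hx : x ≠ 0) : root G r k x ≠ 0 := by
  rw [root, if_neg hx]
  exact Complex.exp_ne_zero _

lemma root_continuousOn {k : ℕ} (hk : 0 < k) (h : LogLift f G W r k) :
    ContinuousOn (root G r k) W := by
  have hr := h.r_pos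
  intro x hx
  refine ContinuousAt.continuousWithinAt ?_
  by_cases hx0 : x = 0
  · subst hx0
    rw [Metric.continuousAt_iff']
    intro ε hε
    have hf0 : Tendsto f (𝓝 0) (𝓝 0) := by
      simpa [ContinuousAt, h.map_zero] using h.cont.continuousAt (h.isOpen.mem_nhds hx)
    filter_upwards [h.isOpen.mem_nhds hx,
      hf0 (Metric.ball_mem_nhds _ (by positivity : 0 < r * ε ^ k))] with x' hx' hfx'
    rw [mem_preimage, mem_ball_zero_iff] at hfx'
    rw [root_zero, dist_zero_right]
    refine lt_of_pow_lt_pow_left₀ k hε.le ?_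
    rw [norm_root_pow hk h hx', div_lt_iff₀ hr]
    linarith
  · have hmap : map Complex.exp (𝓝 (Complex.log x)) = 𝓝 x := by
      rw [(Complex.hasStrictDerivAt_exp (Complex.log x)).map_nhds_eq (Complex.exp_ne_zero _),
        Complex.exp_log hx0]
    have hc : Continuous (fun ζ => Complex.exp ((G ζ - Real.log r) / k)) :=
      Complex.continuous_exp.comp ((h.contG.sub continuous_const).div_const _)
    rw [ContinuousAt, ← hmap, tendsto_map'_iff]
    have h1 : root G r k ∘ Complex.exp = fun ζ => Complex.exp ((G ζ - Real.log r) / k) :=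
      funext fun ζ => root_exp hk h ζ
    have h2 : root G r k x = Complex.exp ((G (Complex.log x) - Real.log r) / k) := if_neg hx0
    rw [h1, h2]
    exact hc.tendsto _

lemma root_injOn {k : ℕ} (hk : 0 < k) (h : LogLift f G W r k) : InjOn (root G r k) W := by
  have hk' : (k : ℂ) ≠ 0 := by exact_mod_cast hk.ne'
  intro x hx x' hx' he
  by_cases hx0 : x = 0
  · subst hx0
    by_contra hne
    exact root_ne_zero (Ne.symm hne) (he.symm.trans root_zero)
  by_cases hx0' : x' = 0
  · subst hx0'
    exact absurd (he.trans root_zero) (root_ne_zero hx0)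
  rw [← Complex.exp_log hx0] at hx he ⊢
  rw [← Complex.exp_log hx0'] at hx' he ⊢
  rw [root_exp hk h, root_exp hk h] at he
  obtain ⟨m, hm⟩ := Complex.exp_eq_exp_iff_exists_int.mp he
  have hG : G (Complex.log x) = G (Complex.log x' + m * (2 * Real.pi * Complex.I)) := by
    rw [h.period_int]
    field_simp at hm
    push_cast
    linear_combination hm
  rw [h.injOn_G (by exact_mod_cast hk) hx (by rwa [mem_preimage, exp_add_int]) hG, exp_add_int]

lemma root_image {k : ℕ} (hk : 0 < k) (h : LogLift f G W r k) :
    root G r k '' W = Metric.ball 0 1 := by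
  have hr := h.r_pos
  have hk' : (k : ℂ) ≠ 0 := by exact_mod_cast hk.ne'
  have hkr : (0 : ℝ) < k := by exact_mod_cast hk
  apply Subset.antisymm
  · rintro _ ⟨x, hx, rfl⟩
    rw [mem_ball_zero_iff]
    refine lt_of_pow_lt_pow_left₀ k zero_le_one ?_
    rw [norm_root_pow hk h hx, one_pow, div_lt_one hr]
    exact mem_ball_zero_iff.mp (h.maps hx)
  · intro w hw
    by_cases hw0 : w = 0
    · exact ⟨0, h.zero_mem, by rw [root_zero, hw0]⟩
    · obtain ⟨ζ, hζ, hG⟩ := h.surjOn_G (w := k * Complex.log w + Real.log r) (by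
        have h1 : Real.log ‖w‖ < 0 :=
          Real.log_neg (norm_pos_iff.mpr hw0) (mem_ball_zero_iff.mp hw)
        have h2 : (k * Complex.log w + Real.log r : ℂ).re = k * Real.log ‖w‖ + Real.log r := by
          simp [Complex.log_re]
        rw [h2]
        nlinarith)
      refine ⟨Complex.exp ζ, hζ, ?_⟩
      rw [root_exp hk h, hG, add_sub_cancel_right, mul_div_cancel_left₀ _ hk', Complex.exp_log hw0]

lemma root_openOn {k : ℕ} (hk : 0 < k) (h : LogLift f G W r k) : OpenOn (root G r k) W := by
  have hr := h.r_pos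
  have hk' : (k : ℂ) ≠ 0 := by exact_mod_cast hk.ne'
  intro x hx
  by_cases hx0 : x = 0
  · subst hx0
    intro N hN
    rw [mem_map] at hN
    obtain ⟨e, he, hsub⟩ := Metric.mem_nhds_iff.mp hN
    obtain ⟨m, hm, hsmall⟩ := h.exists_small he
    have hlim : Tendsto (fun w : ℂ => r * ‖w‖ ^ k) (𝓝 0) (𝓝 0) := by
      have : Continuous (fun w : ℂ => r * ‖w‖ ^ k) := by fun_prop
      simpa [hk.ne'] using this.tendsto 0
    rw [root_zero]
    filter_upwards [Metric.ball_mem_nhds (0 : ℂ) one_pos, hlim (Iio_mem_nhds hm)] with w hw hwm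
    rw [← root_image hk h] at hw
    obtain ⟨x, hx, rfl⟩ := hw
    refine hsub (mem_ball_zero_iff.mpr (hsmall x hx ?_))
    rw [mem_preimage, mem_Iio, norm_root_pow hk h hx, mul_div_cancel₀ _ hr.ne'] at hwm
    exact hwm
  · rw [← Complex.exp_log hx0] at hx ⊢
    set ζ := Complex.log x
    have hmap : map Complex.exp (𝓝 ζ) = 𝓝 (Complex.exp ζ) :=
      (Complex.hasStrictDerivAt_exp ζ).map_nhds_eq (Complex.exp_ne_zero _)
    have h1 : root G r k ∘ Complex.exp =
        (fun w => Complex.exp ((w - Real.log r) / k)) ∘ G :=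
      funext fun ζ => root_exp hk h ζ
    have h2 : map (fun w => Complex.exp ((w - Real.log r) / k)) (𝓝 (G ζ)) =
        𝓝 (Complex.exp ((G ζ - Real.log r) / k)) := by
      have hd : HasStrictDerivAt (fun w : ℂ => (w - Real.log r) / k) (1 / k) (G ζ) := by
        have h3 := ((hasStrictDerivAt_id (G ζ)).sub
          (hasStrictDerivAt_const (G ζ) (Real.log r : ℂ))).div_const (k : ℂ)
        rw [sub_zero] at h3
        exact h3
      exact hd.cexp.map_nhds_eq (mul_ne_zero (Complex.exp_ne_zero _) (one_div_ne_zero hk'))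
    rw [← hmap, map_map, h1, ← map_map, root_exp hk h, ← h2]
    exact map_mono (h.openOn_G ζ hx)

lemma image_eq (h : LogLift f G W r n) : f '' W = Metric.ball 0 r := by
  refine Subset.antisymm (image_subset_iff.mpr h.maps) ?_
  exact (subset_image_component h.isOpen h.cont h.openOn h.proper Metric.isOpen_ball
    (convex_ball (0 : ℂ) r).isPreconnected Subset.rfl h.zero_mem (by simp [h.map_zero, h.r_pos])).trans
    (image_mono ((connectedComponentIn_subset _ _).trans inter_subset_left))

end LogLift

/-- Near an isolated zero, an open map has a lift to logarithmic coordinates. -/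
lemma exists_logLift {f : ℂ → ℂ} {R : ℝ} (hR : 0 < R) (hf : ContinuousOn f (Metric.ball 0 R))
    (hfo : OpenOn f (Metric.ball 0 R)) (h0 : f 0 = 0)
    (hne : ∀ x ∈ Metric.ball (0 : ℂ) R, f x = 0 → x = 0)
    (hiso : ∀ x ∈ Metric.ball (0 : ℂ) R, ∀ᶠ x' in 𝓝 x, f x' = f x → x' = x) :
    ∃ G W r n, W ⊆ Metric.ball 0 R ∧ LogLift f G W r n := by
  have hR2 : R / 2 < R := by linarith
  obtain ⟨r, hr, W, hW, -, hzW, hWN, hE, hm, hp⟩ := exists_normal_domain hf hfo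
    (N := Metric.ball 0 (R / 2)) Metric.isOpen_ball (by simpa using hR)
    (Metric.closure_ball_subset_closedBall.trans (Metric.closedBall_subset_ball hR2))
    (fun x hx hx0 => by
      rw [frontier_ball _ (by linarith), mem_sphere_zero_iff_norm] at hx
      rw [h0] at hx0
      have := hne x (mem_ball_zero_iff.mpr (by linarith)) hx0
      rw [this, norm_zero] at hx
      linarith)
  rw [h0] at hm hp
  set L := Real.log (R / 2) with hL
  have hLexp : Real.exp L = R / 2 := Real.exp_log (by linarith)
  -- Retraction of the plane to the half plane `Re ζ ≤ L`.
  set c : ℂ → ℂ := fun ζ => (min ζ.re L : ℝ) + ζ.im * Complex.I with hc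
  have hcc : Continuous c := by fun_prop
  have hcre : ∀ ζ, (c ζ).re = min ζ.re L := fun ζ => by simp [hc]
  have hcb : ∀ ζ, Complex.exp (c ζ) ∈ Metric.ball (0 : ℂ) R := fun ζ => by
    rw [mem_ball_zero_iff, Complex.norm_exp, hcre]
    calc Real.exp (min ζ.re L) ≤ Real.exp L := Real.exp_le_exp.mpr (min_le_right _ _)
      _ < R := by rw [hLexp]; exact hR2
  have hcid : ∀ ζ, Complex.exp ζ ∈ W → c ζ = ζ := fun ζ hζ => by
    have h1 := hWN hζ
    rw [mem_ball_zero_iff, Complex.norm_exp, ← hLexp, Real.exp_lt_exp] at h1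
    simp [hc, min_eq_left h1.le]
  obtain ⟨G, hGc, hGe⟩ := exists_log (F := fun ζ => f (Complex.exp (c ζ)))
    (hf.comp_continuous (Complex.continuous_exp.comp hcc) hcb)
    (fun ζ hζ => Complex.exp_ne_zero _ (hne _ (hcb ζ) hζ))
  have hper : ∀ ζ, Complex.exp (G (ζ + 2 * Real.pi * Complex.I)) = Complex.exp (G ζ) := by
    intro ζ
    have h1 : c (ζ + 2 * Real.pi * Complex.I) = c ζ + 2 * Real.pi * Complex.I := by
      simp [hc]
      ring
    rw [hGe, hGe, h1, Complex.exp_periodic]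
  obtain ⟨n, hn⟩ := Complex.exp_eq_exp_iff_exists_int.mp (hper 0)
  refine ⟨G, W, r, n, hWN.trans (Metric.ball_subset_ball hR2.le), ?_⟩
  have hWR : W ⊆ Metric.ball 0 R := hWN.trans (Metric.ball_subset_ball hR2.le)
  exact
    { r_pos := hr
      isOpen := hW
      zero_mem := hzW
      ends := hE
      cont := hf.mono hWR
      openOn := fun x hx => hfo x (hWR hx)
      maps := hm
      proper := hp
      map_zero := h0
      isolated := fun x hx => hiso x (hWR hx)
      contG := hGc
      exp_G := fun ζ hζ => by rw [hGe, hcid ζ hζ]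
      period := fun ζ => by
        have := log_sub_const (S := univ) isPreconnected_univ
          (u := fun ζ => G (ζ + 2 * Real.pi * Complex.I)) (v := G)
          (hGc.comp (by fun_prop)).continuousOn hGc.continuousOn (fun ζ _ => hper ζ)
          (mem_univ ζ) (mem_univ 0)
        simp only [hn] at this
        linear_combination this }

/-! ### The local normal form -/

lemma exists_partialHomeomorph {W B : Set ℂ} {ψ : ℂ → ℂ} (hW : IsOpen W) (hc : ContinuousOn ψ W)
    (hi : InjOn ψ W) (hB : ψ '' W = B) (ho : OpenOn ψ W) :
    ∃ e : PartialHomeomorph ℂ ℂ, e.source = W ∧ e.target = B ∧ ∀ x, e x = ψ x := by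
  subst hB
  refine ⟨{ toPartialEquiv := hi.toPartialEquiv ψ W
            continuousOn_toFun := hc
            continuousOn_invFun := ?_ }, rfl, rfl, fun x => rfl⟩
  rintro _ ⟨x, hx, rfl⟩
  refine ContinuousAt.continuousWithinAt ?_
  have hinv : ∀ x ∈ W, Function.invFunOn ψ W (ψ x) = x := hi.leftInvOn_invFunOn
  intro N hN
  change Function.invFunOn ψ W ⁻¹' N ∈ 𝓝 (ψ x)
  change N ∈ 𝓝 (Function.invFunOn ψ W (ψ x)) at hN
  rw [hinv x hx] at hN
  filter_upwards [ho x hx (image_mem_map (inter_mem hN (hW.mem_nhds hx)))]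
  rintro _ ⟨x', hx', rfl⟩
  rw [mem_preimage, hinv x' hx'.2]
  exact hx'.1

/-- The power structure at a zero, up to complex conjugation in the target. -/
lemma exists_power {f : ℂ → ℂ} {R : ℝ} (hR : 0 < R) (hf : ContinuousOn f (Metric.ball 0 R))
    (hfo : OpenOn f (Metric.ball 0 R)) (h0 : f 0 = 0)
    (hne : ∀ x ∈ Metric.ball (0 : ℂ) R, f x = 0 → x = 0)
    (hiso : ∀ x ∈ Metric.ball (0 : ℂ) R, ∀ᶠ x' in 𝓝 x, f x' = f x → x' = x) :
    ∃ k : ℕ, 0 < k ∧ ∃ (W : Set ℂ) (r : ℝ) (τ : ℂ ≃ₜ ℂ) (ψ : ℂ → ℂ), 0 < r ∧ IsOpen W ∧ 0 ∈ W ∧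
      W ⊆ Metric.ball 0 R ∧ f '' W = Metric.ball 0 r ∧ (∀ w, ‖τ w‖ = ‖w‖) ∧
      ContinuousOn ψ W ∧ InjOn ψ W ∧ ψ '' W = Metric.ball 0 1 ∧ OpenOn ψ W ∧
      ∀ x ∈ W, ψ x ^ k = τ (f x) / r := by
  obtain ⟨G, W, r, n, hWR, h⟩ := exists_logLift hR hf hfo h0 hne hiso
  rcases h.n_ne_zero.lt_or_gt with hn | hn
  · obtain ⟨k, hk⟩ := Int.eq_ofNat_of_zero_le (a := -n) (by omega)
    have hk0 : 0 < k := by omega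
    have h' := h.conj
    rw [hk] at h'
    exact ⟨k, hk0, W, r, Complex.conjLIE.toHomeomorph, _, h.r_pos, h.isOpen, h.zero_mem, hWR,
      h.image_eq, fun w => Complex.conjLIE.norm_map w, LogLift.root_continuousOn hk0 h',
      LogLift.root_injOn hk0 h', LogLift.root_image hk0 h', LogLift.root_openOn hk0 h',
      fun x hx => LogLift.root_pow hk0 h' hx⟩
  · obtain ⟨k, rfl⟩ := Int.eq_ofNat_of_zero_le hn.le
    have hk0 : 0 < k := by omega
    exact ⟨k, hk0, W, r, Homeomorph.refl ℂ, _, h.r_pos, h.isOpen, h.zero_mem, hWR,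
      h.image_eq, fun w => rfl, LogLift.root_continuousOn hk0 h,
      LogLift.root_injOn hk0 h, LogLift.root_image hk0 h, LogLift.root_openOn hk0 h,
      fun x hx => LogLift.root_pow hk0 h hx⟩

end Stoilow

open Set Filter Topology in
/-- **Stoïlow's local normal form.** A continuous, light, open map on a planar domain
is locally modelled on the power map `z ↦ z ^ k`: for each point `z` of the domain
there are `k ≥ 1`, an open neighbourhood `U` of `z` and homeomorphisms
`ψ : U → 𝔻` and `φ : f(U) → 𝔻` onto the open unit disk such that
`φ (f x) = (ψ x) ^ k` on `U`. -/
theorem stoilow_local_power_map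
    (Ω : Set ℂ) (hΩopen : IsOpen Ω) (hΩconn : IsConnected Ω)
    (f : ℂ → ℂ)
    (hcont : ContinuousOn f Ω)
    (hlight : ∀ y : ℂ, IsTotallyDisconnected (Ω ∩ f ⁻¹' {y}))
    (hopen : ∀ U : Set ℂ, U ⊆ Ω → IsOpen U → IsOpen (f '' U)) :
    ∀ z ∈ Ω, ∃ k : ℕ, 0 < k ∧ ∃ U : Set ℂ, IsOpen U ∧ z ∈ U ∧ U ⊆ Ω ∧
      ∃ ψ φ : PartialHomeomorph ℂ ℂ,
        ψ.source = U ∧ ψ.target = Metric.ball (0 : ℂ) 1 ∧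
        φ.source = f '' U ∧ φ.target = Metric.ball (0 : ℂ) 1 ∧
        ∀ x ∈ U, φ (f x) = (ψ x) ^ k := by
  intro z hz
  have hfo : Stoilow.OpenOn f Ω := by
    intro x hx N hN
    rw [mem_map] at hN
    obtain ⟨V, hVN, hV, hxV⟩ := mem_nhds_iff.mp (inter_mem hN (hΩopen.mem_nhds hx))
    refine mem_of_superset ((hopen V (hVN.trans inter_subset_right) hV).mem_nhds ⟨x, hxV, rfl⟩) ?_
    rintro _ ⟨x', hx', rfl⟩
    exact (hVN hx').1
  have hiso : ∀ x ∈ Ω, ∀ᶠ x' in 𝓝 x, f x' = f x → x' = x := by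
    intro x hx
    obtain ⟨ε, hε, -, h⟩ := Stoilow.exists_isolated hΩopen hcont hfo hlight hx
    exact mem_of_superset (Metric.ball_mem_nhds x hε) h
  obtain ⟨R, hR, hRΩ, hRz⟩ := Stoilow.exists_isolated hΩopen hcont hfo hlight hz
  have hmem : ∀ x ∈ Metric.ball (0 : ℂ) R, z + x ∈ Metric.ball z R := fun x hx => by
    simpa using hx
  have htr : ∀ x : ℂ, map (fun x => z + x) (𝓝 x) = 𝓝 (z + x) := fun x =>
    (Homeomorph.addLeft z).map_nhds_eq x
  have htr' : ∀ x : ℂ, map (fun x => x - z) (𝓝 x) = 𝓝 (x - z) := fun x =>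
    (Homeomorph.subRight z).map_nhds_eq x
  obtain ⟨k, hk, W, r, τ, ψ, hr, hW, h0W, hWR, hfW, hτ, hψc, hψi, hψW, hψo, hψf⟩ :=
    Stoilow.exists_power (f := fun x => f (z + x) - f z) hR
      ((hcont.comp (by fun_prop) fun x hx => hRΩ (hmem x hx)).sub continuousOn_const)
      (fun x hx => by
        have h1 := hfo _ (hRΩ (hmem x hx))
        have h2 : map (fun x => f (z + x) - f z) (𝓝 x) =
            map (fun y => y - f z) (map f (𝓝 (z + x))) := by
          rw [← htr, map_map, map_map]
          rfl
        rw [h2, ← show map (fun y => y - f z) (𝓝 (f (z + x))) = 𝓝 (f (z + x) - f z) from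
          (Homeomorph.subRight (f z)).map_nhds_eq _]
        exact map_mono h1)
      (by simp)
      (fun x hx he => by simpa using hRz (z + x) (hmem x hx) (sub_eq_zero.mp he))
      (fun x hx => by
        have h1 := hiso _ (hRΩ (hmem x hx))
        rw [← htr, eventually_map] at h1
        filter_upwards [h1] with x' hx' he
        exact add_left_cancel (hx' (sub_left_injective he)))
  have hr' : (r : ℂ) ≠ 0 := by exact_mod_cast hr.ne'
  set U : Set ℂ := (fun x => x - z) ⁻¹' W with hU
  have hUo : IsOpen U := hW.preimage (by fun_prop)
  have hUim : (fun x => x - z) '' U = W :=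
    image_preimage_eq _ (Homeomorph.subRight z).surjective
  have hfU : f '' U = Metric.ball (f z) r := by
    ext y
    have h1 : y ∈ Metric.ball (f z) r ↔ y - f z ∈ (fun x => f (z + x) - f z) '' W := by
      rw [hfW, mem_ball_zero_iff, Metric.mem_ball, dist_eq_norm]
    rw [h1]
    constructor
    · rintro ⟨x, hx, rfl⟩
      exact ⟨x - z, hx, by simp⟩
    · rintro ⟨x, hx, he⟩
      exact ⟨z + x, by simpa [hU] using hx, sub_left_injective he⟩
  obtain ⟨ψ', hψs, hψt, hψ'⟩ := Stoilow.exists_partialHomeomorph (W := U)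
    (B := Metric.ball (0 : ℂ) 1) (ψ := fun x => ψ (x - z)) hUo
    (hψc.comp (by fun_prop) fun x hx => hx)
    (fun x hx x' hx' he => sub_left_injective (hψi hx hx' he))
    (by rw [← hψW, ← hUim, image_image])
    (fun x hx => by
      have h1 := hψo (x - z) hx
      rw [← htr', map_map] at h1
      exact h1)
  refine ⟨k, hk, U, hUo, by simpa [hU] using h0W, fun x hx => hRΩ ?_, ψ',
    { toFun := fun y => τ (y - f z) / r
      invFun := fun w => τ.symm (w * r) + f z
      source := f '' U
      target := Metric.ball 0 1
      map_source' := ?_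
      map_target' := ?_
      left_inv' := fun y _ => by simp [div_mul_cancel₀ _ hr']
      right_inv' := fun w _ => by simp [mul_div_cancel_right₀ _ hr']
      continuousOn_toFun := ?_
      continuousOn_invFun := ?_ }, hψs, hψt, rfl, rfl, fun x hx => ?_⟩
  · have := hWR hx
    rwa [mem_ball_zero_iff, ← dist_eq_norm] at this
  · intro y hy
    rw [hfU, Metric.mem_ball, dist_eq_norm] at hy
    rw [mem_ball_zero_iff, norm_div, hτ, Complex.norm_real, Real.norm_of_nonneg hr.le,
      div_lt_one hr]
    exact hy
  · intro w hw
    rw [mem_ball_zero_iff] at hw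
    rw [hfU, Metric.mem_ball, dist_eq_norm, add_sub_cancel_right, ← hτ, τ.apply_symm_apply,
      norm_mul, Complex.norm_real, Real.norm_of_nonneg hr.le]
    nlinarith
  · exact ((τ.continuous.comp (continuous_id.sub continuous_const)).div_const _).continuousOn
  · exact ((τ.symm.continuous.comp (continuous_id.mul continuous_const)).add
      continuous_const).continuousOn
  · rw [hψ' x, hψf (x - z) hx]
    change τ (f x - f z) / r = _
    simp
end

section
/- Let C be a closed and totally disconnected subset of ℂ. Then every point x ∈ C has a neighborhood basis consisting of open neighborhoods U with C ∩ ∂U = ∅, where ∂U denotes the topological boundary of U. That is, for every x ∈ C and every neighborhood V of x there exists an open neighborhood U of x with U ⊆ V and C ∩ ∂U = ∅. -/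
/-!
The subspace `C` is locally compact, Hausdorff and totally disconnected, so its clopen sets form a
basis (`loc_compact_Haus_tot_disc_of_zero_dim`). Choose a clopen `W ∋ x` of `C` inside the interior
of `V`. Since `C` is closed in `ℂ`, both `W` and `C \ W` are closed in `ℂ`, so normality of `ℂ`
gives an open `U ⊇ W` whose closure lies in `interior V \ (C \ W)`. A point of `C ∩ frontier U`
is outside `C \ W` because it lies in `closure U`, and outside `W` because it is not in `U`.
-/

/-- A closed, totally disconnected subset `C` of the plane has topological dimension
zero: every point of `C` has a neighbourhood basis of open neighbourhoods `U` whose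
boundary misses `C`. -/
theorem totallyDisconnected_closed_nhds_basis
    (C : Set ℂ) (hCclosed : IsClosed C) (hCtd : IsTotallyDisconnected C) :
    ∀ x ∈ C, ∀ V ∈ nhds x,
      ∃ U : Set ℂ, IsOpen U ∧ x ∈ U ∧ U ⊆ V ∧ C ∩ frontier U = ∅ := by
  intro x hx V hV
  have : TotallyDisconnectedSpace C := totallyDisconnectedSpace_subtype_iff.2 hCtd
  have : LocallyCompactSpace C := hCclosed.isClosedEmbedding_subtypeVal.locallyCompactSpace
  obtain ⟨W, hW, hxW, hWV⟩ := loc_compact_Haus_tot_disc_of_zero_dim.exists_subset_of_mem_open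
    (a := (⟨x, hx⟩ : C)) (u := Subtype.val ⁻¹' interior V)
    (mem_interior_iff_mem_nhds.2 hV) (isOpen_interior.preimage continuous_subtype_val)
  have hW : IsClopen W := hW
  have hA : IsClosed (Subtype.val '' W : Set ℂ) :=
    hCclosed.isClosedEmbedding_subtypeVal.isClosedMap _ hW.isClosed
  have hB : IsClosed (Subtype.val '' Wᶜ : Set ℂ) :=
    hCclosed.isClosedEmbedding_subtypeVal.isClosedMap _ hW.compl.isClosed
  obtain ⟨U, hU, hAU, hUO⟩ := normal_exists_closure_subset hA
    (isOpen_interior.inter hB.isOpen_compl : IsOpen (interior V ∩ (Subtype.val '' Wᶜ)ᶜ)) (by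
      rintro _ ⟨y, hy, rfl⟩
      refine ⟨hWV hy, ?_⟩
      rintro ⟨z, hz, hzy⟩
      exact hz (Subtype.ext hzy ▸ hy))
  refine ⟨U, hU, hAU ⟨_, hxW, rfl⟩,
    fun y hy => interior_subset (hUO (subset_closure hy)).1, ?_⟩
  rw [Set.eq_empty_iff_forall_notMem]
  rintro y ⟨hyC, hyU⟩
  rw [hU.frontier_eq] at hyU
  by_cases hyW : (⟨y, hyC⟩ : C) ∈ W
  · exact hyU.2 (hAU ⟨_, hyW, rfl⟩)
  · exact (hUO hyU.1).2 ⟨_, hyW, rfl⟩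
end

section
/- Let Ω be a domain (open connected set) in ℂ, let f : Ω → ℂ be a continuous, light, and open mapping, and let x ∈ Ω. Then there exists a radius r_x > 0 such that for all r with 0 < r ≤ r_x the set U(x,f,r), defined as the connected component containing x of f⁻¹(B(f(x),r)), is an open connected set whose closure is compact and contained in Ω, satisfies f(∂U(x,f,r)) = ∂(f(U(x,f,r))), and satisfies f(U(x,f,r)) = B(f(x),r), where B(f(x),r) denotes the open disk of radius r centered at f(x). -/
/-!
The fibre of `f x` inside a small closed disk `K ⊆ Ω` around `x` is compact and totally
disconnected, hence has a clopen neighbourhood of `x` in the interior of `K`. Fattening it gives an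
open `W ∋ x`, compactly contained in `Ω`, whose frontier misses the fibre
(`exists_isOpen_frontier_avoids_fiber`). By compactness `|f - f x|` is at least some `δ > 0` on
that frontier, so for `r ≤ δ` the connected set `U = U(x,f,r)` cannot leave `W`.

Compact containment then gives the rest: a point of `closure U` mapped into the disk `B(f x, r)`
already lies in the component `U`, so `f U = f (closure U) ∩ B(f x, r)` is open and relatively
closed in the disk, hence the whole disk, and the frontier of `U` is mapped onto the bounding
circle.
-/

/-- Lightness isolates `x` in its fibre in a weak sense: `x` has a neighbourhood, compactly
contained in `Ω`, whose frontier avoids the fibre through `x`. -/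
lemma exists_isOpen_frontier_avoids_fiber {Ω : Set ℂ} (hΩopen : IsOpen Ω) {f : ℂ → ℂ}
    (hcont : ContinuousOn f Ω)
    {x : ℂ} (hlight : IsTotallyDisconnected (Ω ∩ f ⁻¹' {f x})) (hx : x ∈ Ω) :
    ∃ W : Set ℂ, IsOpen W ∧ x ∈ W ∧ IsCompact (closure W) ∧ closure W ⊆ Ω ∧
      ∀ z ∈ frontier W, f z ≠ f x := by
  obtain ⟨ρ, hρ, hball⟩ := Metric.nhds_basis_closedBall.mem_iff.1 (hΩopen.mem_nhds hx)
  set F : Set ℂ := Metric.closedBall x ρ ∩ f ⁻¹' {f x} with hF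
  have hFclosed : IsClosed F :=
    (hcont.mono hball).preimage_isClosed_of_isClosed Metric.isClosed_closedBall isClosed_singleton
  have hFcomp : IsCompact F :=
    (isCompact_closedBall x ρ).of_isClosed_subset hFclosed Set.inter_subset_left
  have hFtd : IsTotallyDisconnected F := fun t ht => hlight t
    (ht.trans (Set.inter_subset_inter_left _ hball))
  have hxF : x ∈ F := ⟨Metric.mem_closedBall_self hρ.le, rfl⟩
  have : CompactSpace F := isCompact_iff_compactSpace.1 hFcomp
  have : TotallyDisconnectedSpace F := totallyDisconnectedSpace_subtype_iff.2 hFtd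
  obtain ⟨V, hV, hxV, hVb⟩ := compact_exists_isClopen_in_isOpen
    (U := (Subtype.val ⁻¹' Metric.ball x ρ : Set F))
    (Metric.isOpen_ball.preimage continuous_subtype_val) (x := ⟨x, hxF⟩)
    (Metric.mem_ball_self hρ)
  have hVc : IsCompact (Subtype.val '' V : Set ℂ) :=
    hV.isClosed.isCompact.image continuous_subtype_val
  have hVc' : IsCompact (Subtype.val '' Vᶜ : Set ℂ) :=
    hV.compl.isClosed.isCompact.image continuous_subtype_val
  -- The rest of the fibre is compact, so its complement in the open disk is open.
  have hO : IsOpen (Metric.ball x ρ \ (Subtype.val '' Vᶜ : Set ℂ)) :=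
    Metric.isOpen_ball.sdiff hVc'.isClosed
  have hVO : (Subtype.val '' V : Set ℂ) ⊆ Metric.ball x ρ \ (Subtype.val '' Vᶜ : Set ℂ) := by
    rintro _ ⟨v, hv, rfl⟩
    refine ⟨hVb hv, ?_⟩
    rintro ⟨w, hw, hwv⟩
    exact hw (Subtype.ext hwv ▸ hv)
  obtain ⟨W, hWo, hVW, hWO⟩ := hVc.exists_isOpen_closure_subset (hO.mem_nhdsSet.2 hVO)
  have hWK : closure W ⊆ Metric.closedBall x ρ := fun z hz =>
    Metric.ball_subset_closedBall (hWO hz).1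
  refine ⟨W, hWo, hVW ⟨_, hxV, rfl⟩,
    (isCompact_closedBall x ρ).of_isClosed_subset isClosed_closure hWK, hWK.trans hball, ?_⟩
  intro z hz hzf
  rw [hWo.frontier_eq] at hz
  have hzF : z ∈ F := ⟨hWK hz.1, hzf⟩
  by_cases hzV : (⟨z, hzF⟩ : F) ∈ V
  · exact hz.2 (hVW ⟨_, hzV, rfl⟩)
  · exact (hWO hz.1).2 ⟨_, hzV, rfl⟩

/-- A component of `G` is relatively closed in `G`. -/
lemma mem_connectedComponentIn_of_mem_closure {G : Set ℂ} {x z : ℂ} (hx : x ∈ G) (hz : z ∈ G)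
    (hzc : z ∈ closure (connectedComponentIn G x)) : z ∈ connectedComponentIn G x := by
  have hxU := mem_connectedComponentIn hx
  have hp : IsPreconnected (insert z (connectedComponentIn G x)) :=
    isPreconnected_connectedComponentIn.subset_closure (Set.subset_insert _ _)
      (Set.insert_subset hzc subset_closure)
  exact hp.subset_connectedComponentIn (Set.mem_insert_of_mem _ hxU)
    (Set.insert_subset hz (connectedComponentIn_subset G x)) (Set.mem_insert _ _)


/-- **Existence of normal domains.** For a continuous, light, open map `f` on a planar
domain `Ω` and `x ∈ Ω` there is `r_x > 0` such that for every `0 < r ≤ r_x` the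
component `U(x,f,r)` of `f⁻¹(B(f(x),r))` containing `x` is a precompact normal domain
of `x` and `f(U(x,f,r)) = B(f(x),r)`. -/
theorem normal_domain_exists
    (Ω : Set ℂ) (hΩopen : IsOpen Ω) (hΩconn : IsConnected Ω)
    (f : ℂ → ℂ)
    (hcont : ContinuousOn f Ω)
    (hlight : ∀ y : ℂ, IsTotallyDisconnected (Ω ∩ f ⁻¹' {y}))
    (hopen : ∀ U : Set ℂ, U ⊆ Ω → IsOpen U → IsOpen (f '' U))
    (x : ℂ) (hx : x ∈ Ω) :
    ∃ rx : ℝ, 0 < rx ∧ ∀ r : ℝ, 0 < r → r ≤ rx →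
      IsOpen (connectedComponentIn (Ω ∩ f ⁻¹' Metric.ball (f x) r) x) ∧
      IsConnected (connectedComponentIn (Ω ∩ f ⁻¹' Metric.ball (f x) r) x) ∧
      IsCompact (closure (connectedComponentIn (Ω ∩ f ⁻¹' Metric.ball (f x) r) x)) ∧
      closure (connectedComponentIn (Ω ∩ f ⁻¹' Metric.ball (f x) r) x) ⊆ Ω ∧
      f '' frontier (connectedComponentIn (Ω ∩ f ⁻¹' Metric.ball (f x) r) x) =
        frontier (f '' connectedComponentIn (Ω ∩ f ⁻¹' Metric.ball (f x) r) x) ∧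
      f '' connectedComponentIn (Ω ∩ f ⁻¹' Metric.ball (f x) r) x =
        Metric.ball (f x) r := by
  obtain ⟨W, hWo, hxW, hWc, hWΩ, hWf⟩ :=
    exists_isOpen_frontier_avoids_fiber hΩopen hcont (hlight (f x)) hx
  have hfrW : frontier W ⊆ closure W := frontier_subset_closure
  obtain ⟨δ, hδ, hδW⟩ : ∃ δ : ℝ, 0 < δ ∧ ∀ z ∈ frontier W, δ ≤ dist (f z) (f x) := by
    have hc : IsCompact (f '' frontier W) :=
      (hWc.of_isClosed_subset isClosed_frontier hfrW).image_of_continuousOn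
        (hcont.mono (hfrW.trans hWΩ))
    have hnot : f x ∈ (f '' frontier W)ᶜ := by
      rintro ⟨z, hz, hzx⟩
      exact hWf z hz hzx
    obtain ⟨δ, hδ, hsub⟩ := Metric.isOpen_iff.1 hc.isClosed.isOpen_compl _ hnot
    refine ⟨δ, hδ, fun z hz => le_of_not_gt fun hlt => hsub (Metric.mem_ball.2 hlt) ⟨z, hz, rfl⟩⟩
  refine ⟨δ, hδ, fun r hr hrδ => ?_⟩
  set G : Set ℂ := Ω ∩ f ⁻¹' Metric.ball (f x) r with hG
  set U : Set ℂ := connectedComponentIn G x with hU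
  have hGo : IsOpen G := hcont.isOpen_inter_preimage hΩopen Metric.isOpen_ball
  have hxG : x ∈ G := ⟨hx, Metric.mem_ball_self hr⟩
  have hxU : x ∈ U := mem_connectedComponentIn hxG
  have hUG : U ⊆ G := connectedComponentIn_subset G x
  have hUo : IsOpen U := hGo.connectedComponentIn
  have hUW : U ⊆ W := isPreconnected_connectedComponentIn.subset_of_closure_inter_subset hWo
    ⟨x, hxU, hxW⟩ fun z hz => by_contra fun hzW =>
      (hδW z (hWo.frontier_eq ▸ ⟨hz.1, hzW⟩)).not_gt
        ((Metric.mem_ball.1 (hUG hz.2).2).trans_le hrδ)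
  have hUcW : closure U ⊆ closure W := closure_mono hUW
  have hUc : IsCompact (closure U) := hWc.of_isClosed_subset isClosed_closure hUcW
  have hUΩ : closure U ⊆ Ω := hUcW.trans hWΩ
  have hfcU : IsCompact (f '' closure U) := hUc.image_of_continuousOn (hcont.mono hUΩ)
  have hback : ∀ z ∈ closure U, f z ∈ Metric.ball (f x) r → z ∈ U := fun z hz hzb =>
    mem_connectedComponentIn_of_mem_closure hxG ⟨hUΩ hz, hzb⟩ hz
  have hfU : f '' U = Metric.ball (f x) r := by
    refine Set.Subset.antisymm (Set.image_subset_iff.2 fun z hz => (hUG hz).2) ?_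
    -- The disk is covered by the disjoint open sets `f U` and the complement of `f (closure U)`.
    refine (convex_ball (f x) r).isPreconnected.subset_left_of_subset_union
      (hopen U (subset_closure.trans hUΩ) hUo) hfcU.isClosed.isOpen_compl
      (disjoint_compl_right.mono_left (Set.image_mono subset_closure)) ?_
      ⟨f x, Metric.mem_ball_self hr, x, hxU, rfl⟩
    intro y hy
    by_cases hyc : y ∈ f '' closure U
    · obtain ⟨z, hz, rfl⟩ := hyc
      exact Or.inl ⟨z, hback z hz hy, rfl⟩
    · exact Or.inr hyc
  have hfcl : f '' closure U = Metric.closedBall (f x) r := by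
    rw [← closure_ball (f x) hr.ne', ← hfU]
    exact Set.Subset.antisymm ((hcont.mono hUΩ).image_closure)
      (closure_minimal (Set.image_mono subset_closure) hfcU.isClosed)
  refine ⟨hUo, isConnected_connectedComponentIn_iff.2 hxG, hUc, hUΩ, ?_, hfU⟩
  rw [hfU, Metric.isOpen_ball.frontier_eq, closure_ball (f x) hr.ne', ← hfcl, hUo.frontier_eq]
  ext y
  constructor
  · rintro ⟨z, ⟨hz, hzU⟩, rfl⟩
    exact ⟨⟨z, hz, rfl⟩, fun hb => hzU (hback z hz hb)⟩
  · rintro ⟨⟨z, hz, rfl⟩, hb⟩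
    exact ⟨z, ⟨hz, fun hzU => hb (hUG hzU).2⟩, rfl⟩
end

section
/- Let Ω be a domain in ℂ, let f : Ω → ℂ be a continuous, light, and open mapping, and let U ⊆ Ω be a normal domain, i.e. an open connected set whose closure is compact and contained in Ω and which satisfies f(∂U) = ∂(f(U)). Then the restriction f|_U : U → f(U) is a proper map: for every compact set K ⊆ f(U), the set U ∩ f⁻¹(K) is compact. -/
/-!
Since `f(U)` is open, it is disjoint from its frontier `f(∂U)`, so no point of `∂U` is mapped
into a set `K ⊆ f(U)`. Hence `U ∩ f⁻¹(K) = closure U ∩ f⁻¹(K)`, and for compact `K` the latter is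
relatively closed in the compact set `closure U`, on which `f` is continuous.
-/

/-- The restriction of a continuous, light, open map to a normal domain `U` is a
proper map `U → f(U)`: preimages in `U` of compact subsets of `f(U)` are compact. -/
theorem normal_domain_restriction_proper
    (Ω : Set ℂ) (hΩopen : IsOpen Ω) (hΩconn : IsConnected Ω)
    (f : ℂ → ℂ)
    (hcont : ContinuousOn f Ω)
    (hlight : ∀ y : ℂ, IsTotallyDisconnected (Ω ∩ f ⁻¹' {y}))
    (hopen : ∀ V : Set ℂ, V ⊆ Ω → IsOpen V → IsOpen (f '' V))
    (U : Set ℂ)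
    (hUopen : IsOpen U) (hUconn : IsConnected U)
    (hUcpt : IsCompact (closure U)) (hUcl : closure U ⊆ Ω)
    (hUnormal : f '' frontier U = frontier (f '' U)) :
    ∀ K : Set ℂ, K ⊆ f '' U → IsCompact K → IsCompact (U ∩ f ⁻¹' K) := by
  intro K hK hKc
  have hfU : IsOpen (f '' U) := hopen U (subset_closure.trans hUcl) hUopen
  have heq : U ∩ f ⁻¹' K = closure U ∩ f ⁻¹' K := by
    refine Set.Subset.antisymm (Set.inter_subset_inter_left _ subset_closure) ?_
    rintro x ⟨hx, hxK⟩
    refine ⟨?_, hxK⟩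
    by_contra hxU
    have hxfr : x ∈ frontier U := by
      rw [hUopen.frontier_eq]
      exact ⟨hx, hxU⟩
    have hfx : f x ∈ frontier (f '' U) := hUnormal ▸ Set.mem_image_of_mem f hxfr
    rw [hfU.frontier_eq] at hfx
    exact hfx.2 (hK hxK)
  rw [heq]
  exact hUcpt.of_isClosed_subset
    ((hcont.mono hUcl).preimage_isClosed_of_isClosed isClosed_closure hKc.isClosed)
    Set.inter_subset_left
end

section
/- Let Ω ⊆ ℂ be a domain and f : Ω → ℂ a continuous, light, and open mapping. Let U be a normal domain compactly contained in Ω. Then for any path β : [0,1] → f(U) and any point x₀ ∈ U with f(x₀) = β(0), there exists a path α : [0,1] → U with α(0) = x₀ and f ∘ α = β. -/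
/-!
Pull `f` back along `β`: let `X` be the set of pairs `(t, x)` with `x ∈ closure U` and
`f x = β t`. Since `f(∂U) = ∂ f(U)` misses the open set `f(U)`, such an `x` lies in `U`. Hence `X`
is compact and the projection `p : X → [0,1]` is open with totally disconnected fibers. A lift of
`β` starting at `x₀` is the same as a continuous section of `p` through `(0, x₀)`, so the theorem
follows from `exists_section_of_light_open`, which holds for every compact metric space `X`.

To build the section, note that `p` is uniformly open by compactness
(`exists_uniform_open`). Therefore, for each `k`, there are `N` and a sequence
`x₀, x₁, …` in `X` with steps of size `< 1 / (k + 1)` whose `i`-th term lies over the grid point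
`i / N` (`exists_chain`). Reading this sequence as a step function gives an approximate section
`α k`, and `α` is the pointwise limit of the `α k` along an ultrafilter. Lightness makes the
limit continuous: by `exists_trap`, each `y : X` has arbitrarily small neighbourhoods from
which a sequence with small steps cannot escape while it stays over points close to `p y`. Applied
at `y = α t`, this confines `α k s` to a small ball about `α t`, for all `s` near `t` and for
almost all `k`.
-/

open Set Filter Topology Metric

/-- A small neighbourhood `V` of `y` that chains with short steps cannot leave while they stay over
points close to `p y`. It is a thickening of a small clopen piece of the fiber through `y`; nearby
fibers lie in the union of this thickening with one of the complementary piece. -/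
lemma exists_trap {X Y : Type*} [MetricSpace X] [CompactSpace X] [MetricSpace Y]
    (p : X → Y) (hp : Continuous p) (hl : ∀ t, IsTotallyDisconnected (p ⁻¹' {t}))
    (y : X) {ε : ℝ} (hε : 0 < ε) :
    ∃ V : Set X, IsOpen V ∧ y ∈ V ∧ V ⊆ ball y ε ∧ ∃ r > 0, ∀ x ∈ V, ∀ x',
      dist x x' < r → dist (p x') (p y) < r → x' ∈ V := by
  set F : Set X := p ⁻¹' {p y} with hF
  have hFc : IsCompact F := (isClosed_singleton.preimage hp).isCompact
  have : CompactSpace F := isCompact_iff_compactSpace.mp hFc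
  have : TotallyDisconnectedSpace F := totallyDisconnectedSpace_subtype_iff.mpr (hl (p y))
  obtain ⟨C, hC, hyC, hCε⟩ := compact_exists_isClopen_in_isOpen
    (U := ((↑) : F → X) ⁻¹' ball y ε) (isOpen_ball.preimage continuous_subtype_val)
    (x := ⟨y, rfl⟩) (mem_ball_self hε)
  set K : Set X := (↑) '' C with hK
  set L : Set X := (↑) '' Cᶜ with hL
  have hKc : IsCompact K := hC.1.isCompact.image continuous_subtype_val
  have hLc : IsCompact L := hC.compl.1.isCompact.image continuous_subtype_val
  have hKL : Disjoint K L := disjoint_compl_right.image Subtype.val_injective.injOn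
    (subset_univ _) (subset_univ _)
  obtain ⟨d, hd, hdisj⟩ := hKL.exists_thickenings hKc hLc.isClosed
  obtain ⟨e, he, hKe⟩ := hKc.exists_thickening_subset_open isOpen_ball
    (image_subset_iff.mpr hCε)
  set c := min (d / 2) e with hc
  have hc0 : 0 < c := lt_min (half_pos hd) he
  have hcd : c + c ≤ d := by have := min_le_left (d / 2) e; linarith
  have hZ : IsClosed (thickening c K ∪ thickening c L)ᶜ :=
    (isOpen_thickening.union isOpen_thickening).isClosed_compl
  have hpZ : IsClosed (p '' (thickening c K ∪ thickening c L)ᶜ) :=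
    (hZ.isCompact.image hp).isClosed
  have hyZ : p y ∈ (p '' (thickening c K ∪ thickening c L)ᶜ)ᶜ := by
    rintro ⟨z, hz, hzy⟩
    apply hz
    by_cases h : (⟨z, hzy⟩ : F) ∈ C
    · exact Or.inl (self_subset_thickening hc0 _ ⟨_, h, rfl⟩)
    · exact Or.inr (self_subset_thickening hc0 _ ⟨_, h, rfl⟩)
  obtain ⟨r, hr, hball⟩ := Metric.isOpen_iff.mp hpZ.isOpen_compl _ hyZ
  refine ⟨thickening c K, isOpen_thickening, self_subset_thickening hc0 _ ⟨_, hyC, rfl⟩,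
    (thickening_mono (min_le_right _ _) _).trans hKe, min c r, lt_min hc0 hr, ?_⟩
  intro x hx x' hxx' hpx'
  have h1 : x' ∈ thickening c K ∪ thickening c L := by
    by_contra h
    exact hball (mem_ball.mpr (hpx'.trans_le (min_le_right _ _))) ⟨x', h, rfl⟩
  refine h1.resolve_right fun hL' => ?_
  obtain ⟨z, hz, hxz⟩ := mem_thickening_iff.mp hx
  refine disjoint_left.mp hdisj (mem_thickening_iff.mpr ⟨z, hz, ?_⟩)
    (thickening_mono (by linarith) _ hL')
  have := dist_triangle_left x' z x
  have := hxx'.trans_le (min_le_left c r)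
  linarith

lemma exists_uniform_open {X Y : Type*} [MetricSpace X] [CompactSpace X] [MetricSpace Y]
    (p : X → Y) (hp : Continuous p) (ho : IsOpenMap p) {η : ℝ} (hη : 0 < η) :
    ∃ δ > 0, ∀ x s, dist s (p x) < δ → ∃ y, p y = s ∧ dist x y < η := by
  have key : ∀ x : X, ∃ δ > 0, ∀ s, dist s (p x) < δ → ∃ y, p y = s ∧ dist x y < η / 2 := by
    intro x
    obtain ⟨δ, hδ, h⟩ := Metric.isOpen_iff.mp (ho _ (isOpen_ball (x := x) (ε := η / 2))) (p x)
      ⟨x, mem_ball_self (half_pos hη), rfl⟩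
    refine ⟨δ, hδ, fun s hs => ?_⟩
    obtain ⟨y, hy, hys⟩ := h hs
    exact ⟨y, hys, by rwa [dist_comm]⟩
  choose δ hδ h using key
  obtain ⟨T, hT⟩ := isCompact_univ.elim_finite_subcover
    (fun x => ball x (η / 2) ∩ p ⁻¹' ball (p x) (δ x / 2))
    (fun x => isOpen_ball.inter (isOpen_ball.preimage hp))
    (fun x _ => mem_iUnion.mpr
      ⟨x, mem_ball_self (half_pos hη), mem_ball_self (half_pos (hδ x))⟩)
  obtain ⟨m, hm, hmT⟩ : ∃ m > 0, ∀ x ∈ T, m ≤ δ x / 2 := by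
    have := (Filter.eventually_all_finset (l := 𝓝[>] (0 : ℝ)) T
      (p := fun x m => m ≤ δ x / 2)).mpr fun x _ =>
        (Filter.Eventually.filter_mono nhdsWithin_le_nhds
          (Iic_mem_nhds (half_pos (hδ x))))
    obtain ⟨m, h1, h2⟩ := (this.and self_mem_nhdsWithin).exists
    exact ⟨m, h2, h1⟩
  refine ⟨m, hm, fun x s hs => ?_⟩
  obtain ⟨z, hzT, hxz, hpz⟩ : ∃ z ∈ T, dist x z < η / 2 ∧ dist (p x) (p z) < δ z / 2 := by
    simpa [and_left_comm] using hT (mem_univ x)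
  obtain ⟨y, hy, hzy⟩ := h z s (by
    have := dist_triangle s (p x) (p z)
    have := hmT z hzT
    linarith)
  exact ⟨y, hy, by have := dist_triangle x z y; linarith⟩

/-- The grid point `min (i / N) 1` of the unit interval. -/
noncomputable def gridPoint (N i : ℕ) : unitInterval :=
  projIcc (0 : ℝ) 1 zero_le_one ((i : ℝ) / N)

lemma dist_projIcc_le (a b : ℝ) :
    dist (projIcc (0 : ℝ) 1 zero_le_one a) (projIcc (0 : ℝ) 1 zero_le_one b) ≤ |a - b| := by
  have := (LipschitzWith.projIcc (zero_le_one : (0 : ℝ) ≤ 1)).dist_le_mul a b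
  simpa [Real.dist_eq] using this

lemma exists_chain {X : Type*} [MetricSpace X] [CompactSpace X]
    (p : X → unitInterval) (hp : Continuous p) (ho : IsOpenMap p)
    (x₀ : X) (hx₀ : p x₀ = 0) {η : ℝ} (hη : 0 < η) :
    ∃ N : ℕ, 0 < N ∧ (1 : ℝ) / N < η ∧ ∃ x : ℕ → X, x 0 = x₀ ∧
      (∀ i, p (x i) = gridPoint N i) ∧ ∀ i, dist (x i) (x (i + 1)) < η := by
  obtain ⟨δ, hδ, h⟩ := exists_uniform_open p hp ho hη
  obtain ⟨n, hn⟩ := exists_nat_one_div_lt (lt_min hδ hη)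
  have hn' : (1 : ℝ) / ((n + 1 : ℕ) : ℝ) < min δ η := by exact_mod_cast hn
  have step : ∀ i : ℕ, ∀ x, p x = gridPoint (n + 1) i →
      ∃ y, p y = gridPoint (n + 1) (i + 1) ∧ dist x y < η := by
    intro i x hx
    refine h x _ ?_
    rw [hx]
    refine (dist_projIcc_le _ _).trans_lt ?_
    rw [← sub_div, Nat.cast_add i 1, add_sub_cancel_left, Nat.cast_one,
      abs_of_nonneg (by positivity)]
    exact hn'.trans_le (min_le_left _ _)
  choose! g hg hgd using step
  have h0 : gridPoint (n + 1) 0 = 0 := by simp [gridPoint]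
  let x : ℕ → X := fun i => Nat.rec x₀ (fun i z => g i z) i
  have hx : ∀ i, p (x i) = gridPoint (n + 1) i := by
    intro i
    induction i with
    | zero => rw [h0]; exact hx₀
    | succ i ih => exact hg i _ ih
  exact ⟨n + 1, n.succ_pos, hn'.trans_le (min_le_right _ _), x, rfl, hx,
    fun i => hgd i _ (hx i)⟩

/-- A chain that starts at index `a` in a set which is stable under its steps stays there up to
index `b`, whether `b` comes before or after `a`. -/
lemma mem_of_steps {X : Type*} (x : ℕ → X) (V : Set X) (a b : ℕ) (ha : x a ∈ V)
    (hup : ∀ i, a ≤ i → i < b → x i ∈ V → x (i + 1) ∈ V)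
    (hdown : ∀ i, b ≤ i → i < a → x (i + 1) ∈ V → x i ∈ V) : x b ∈ V := by
  rcases le_total a b with hab | hab
  · induction b, hab using Nat.le_induction with
    | base => exact ha
    | succ n hn ih =>
      exact hup n hn n.lt_succ_self (ih (fun i h1 h2 => hup i h1 (by omega))
        (fun i h1 h2 => by omega))
  · induction a, hab using Nat.le_induction with
    | base => exact ha
    | succ n hn ih =>
      exact ih (hdown n hn n.lt_succ_self ha) (fun i h1 h2 => by omega)
        (fun i h1 h2 => hdown i h1 (by omega))

/-- Grid points whose index lies between those of `s` and `t` are close to `t`. -/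
lemma dist_gridPoint_between (N : ℕ) (hN : 0 < N) (s t : unitInterval) (i : ℕ)
    (hi : i ∈ Set.uIcc ⌊(t : ℝ) * N⌋₊ ⌊(s : ℝ) * N⌋₊) :
    dist (gridPoint N i) t ≤ dist s t + 1 / N := by
  have hN' : (0 : ℝ) < N := by exact_mod_cast hN
  conv_lhs => rw [(projIcc_val zero_le_one t).symm]
  refine (dist_projIcc_le _ _).trans ?_
  have h1 := Nat.floor_le (mul_nonneg t.2.1 hN'.le)
  have h2 := Nat.lt_floor_add_one ((t : ℝ) * N)
  have h3 := Nat.floor_le (mul_nonneg s.2.1 hN'.le)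
  have hd : dist s t = |(s : ℝ) - t| := rfl
  have h5 := le_abs_self ((s : ℝ) - t)
  have h6 := neg_abs_le ((s : ℝ) - t)
  have h7 := Nat.lt_floor_add_one ((s : ℝ) * N)
  rw [hd]
  have key : |(i : ℝ) - t * N| ≤ |(s : ℝ) - t| * N + 1 := by
    have h8 : (s : ℝ) * N - t * N ≤ |(s : ℝ) - t| * N := by
      rw [← sub_mul]; exact mul_le_mul_of_nonneg_right h5 hN'.le
    have h9 : -(|(s : ℝ) - t| * N) ≤ (s : ℝ) * N - t * N := by
      rw [← sub_mul, ← neg_mul]; exact mul_le_mul_of_nonneg_right h6 hN'.le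
    have h10 : 0 ≤ |(s : ℝ) - t| * N := by positivity
    rcases Set.mem_uIcc.mp hi with ⟨ha, hb⟩ | ⟨ha, hb⟩
    all_goals
      have ha' : ((_ : ℕ) : ℝ) ≤ _ := Nat.cast_le (α := ℝ) |>.mpr ha
      have hb' : ((_ : ℕ) : ℝ) ≤ _ := Nat.cast_le (α := ℝ) |>.mpr hb
      rw [abs_le]
      constructor <;> linarith
  have : (i : ℝ) / N - t = (i - t * N) / N := by field_simp
  rw [this, abs_div, abs_of_pos hN', div_le_iff₀ hN', add_mul, div_mul_cancel₀ _ hN'.ne']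
  exact key

lemma dist_gridPoint_floor (N : ℕ) (hN : 0 < N) (t : unitInterval) :
    dist (gridPoint N ⌊(t : ℝ) * N⌋₊) t ≤ 1 / N := by
  simpa using dist_gridPoint_between N hN t t _ Set.left_mem_uIcc

/-- A light open map from a compact metric space to `[0,1]` has a continuous section through each
point over `0`. -/
lemma exists_section_of_light_open {X : Type*} [MetricSpace X] [CompactSpace X]
    (p : X → unitInterval) (hp : Continuous p) (ho : IsOpenMap p)
    (hl : ∀ t, IsTotallyDisconnected (p ⁻¹' {t})) (x₀ : X) (hx₀ : p x₀ = 0) :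
    ∃ α : unitInterval → X, Continuous α ∧ α 0 = x₀ ∧ ∀ t, p (α t) = t := by
  have hη : ∀ k : ℕ, (0 : ℝ) < 1 / (k + 1) := fun k => Nat.one_div_pos_of_nat
  choose N hN hNη x hx0 hpx hxd using fun k => exists_chain p hp ho x₀ hx₀ (hη k)
  let A : ℕ → unitInterval → X := fun k t => x k ⌊(t : ℝ) * N k⌋₊
  let u : Ultrafilter ℕ := hyperfilter ℕ
  have hu : Tendsto (fun k : ℕ => (1 : ℝ) / (k + 1)) u (𝓝 0) :=
    tendsto_one_div_add_atTop_nhds_zero_nat.mono_left Nat.hyperfilter_le_atTop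
  have hlim : ∀ t, ∃ a, Tendsto (fun k => A k t) u (𝓝 a) := by
    intro t
    obtain ⟨a, -, ha⟩ := isCompact_univ.ultrafilter_le_nhds (u.map fun k => A k t) (by simp)
    exact ⟨a, ha⟩
  choose α hα using hlim
  have hpα : ∀ t, p (α t) = t := by
    intro t
    refine tendsto_nhds_unique ((hp.tendsto _).comp (hα t)) ?_
    rw [tendsto_iff_dist_tendsto_zero]
    refine squeeze_zero (fun _ => dist_nonneg) (fun k => ?_) hu
    simp only [Function.comp, A, hpx]
    exact (dist_gridPoint_floor _ (hN k) t).trans (hNη k).le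
  refine ⟨α, ?_, ?_, hpα⟩
  · rw [continuous_iff_continuousAt]
    intro t
    rw [ContinuousAt, Metric.tendsto_nhds]
    intro ε hε
    obtain ⟨V, hVo, hyV, hVε, r, hr, hstep⟩ := exists_trap p hp hl (α t) (half_pos hε)
    filter_upwards [ball_mem_nhds t (half_pos hr)] with s hs
    have hev : ∀ᶠ k in (u : Filter ℕ), A k s ∈ closedBall (α t) (ε / 2) := by
      filter_upwards [(hα t).eventually (hVo.mem_nhds hyV),
        hu.eventually (Iio_mem_nhds (half_pos hr))] with k hk hkr
      have hkr' : (1 : ℝ) / (k + 1) < r / 2 := hkr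
      have hd : ∀ i ∈ Set.uIcc ⌊(t : ℝ) * N k⌋₊ ⌊(s : ℝ) * N k⌋₊,
          dist (p (x k i)) (p (α t)) < r := by
        intro i hi
        rw [hpx, hpα]
        have h1 := dist_gridPoint_between _ (hN k) s t i hi
        have h2 := hNη k
        have h3 : dist s t < r / 2 := hs
        linarith
      refine ball_subset_closedBall (hVε ?_)
      refine mem_of_steps (x k) V _ _ hk (fun i h1 h2 hi => ?_) (fun i h1 h2 hi => ?_)
      · refine hstep _ hi _ ((hxd k i).trans (by linarith)) (hd _ ?_)
        rw [Set.mem_uIcc]; omega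
      · refine hstep _ hi _ (by rw [dist_comm]; exact (hxd k i).trans (by linarith)) (hd _ ?_)
        rw [Set.mem_uIcc]; omega
    have := isClosed_closedBall.mem_of_tendsto (hα s) hev
    exact (mem_closedBall.mp this).trans_lt (half_lt_self hε)
  · refine tendsto_nhds_unique (hα 0) ?_
    simp [A, hx0]

/-- **Path lifting (Floyd–Stoïlow).** Let `f` be a continuous, light, open map on a
planar domain `Ω` and let `U` be a normal domain compactly contained in `Ω`. Every
path `β : [0,1] → f(U)` lifts, from any prescribed starting point
`x₀ ∈ U ∩ f⁻¹({β 0})`, to a path `α : [0,1] → U` with `f ∘ α = β`. -/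
theorem stoilow_path_lifting
    (Ω : Set ℂ) (hΩopen : IsOpen Ω) (hΩconn : IsConnected Ω)
    (f : ℂ → ℂ)
    (hcont : ContinuousOn f Ω)
    (hlight : ∀ y : ℂ, IsTotallyDisconnected (Ω ∩ f ⁻¹' {y}))
    (hopen : ∀ V : Set ℂ, V ⊆ Ω → IsOpen V → IsOpen (f '' V))
    (U : Set ℂ)
    (hUopen : IsOpen U) (hUconn : IsConnected U)
    (hUcpt : IsCompact (closure U)) (hUcl : closure U ⊆ Ω)
    (hUnormal : f '' frontier U = frontier (f '' U))
    (β : unitInterval → ℂ) (hβcont : Continuous β)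
    (hβmem : ∀ t, β t ∈ f '' U)
    (x₀ : ℂ) (hx₀ : x₀ ∈ U) (hfx₀ : f x₀ = β 0) :
    ∃ α : unitInterval → ℂ, Continuous α ∧ (∀ t, α t ∈ U) ∧
      α 0 = x₀ ∧ ∀ t, f (α t) = β t := by
  have hfUo : IsOpen (f '' U) := hopen U (subset_closure.trans hUcl) hUopen
  have hmemU : ∀ x ∈ closure U, f x ∈ f '' U → x ∈ U := by
    intro x hx hfx
    by_contra hxU
    have h1 : f x ∈ frontier (f '' U) := by
      rw [← hUnormal]
      exact ⟨x, ⟨hx, by rwa [hUopen.interior_eq]⟩, rfl⟩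
    exact h1.2 (by rwa [hfUo.interior_eq])
  let S : Set (unitInterval × ℂ) := {q | q.2 ∈ closure U ∧ f q.2 = β q.1}
  have hS : IsCompact S := by
    have hK : IsCompact ((univ : Set unitInterval) ×ˢ closure U) := isCompact_univ.prod hUcpt
    have hg : ContinuousOn (fun q : unitInterval × ℂ => f q.2 - β q.1)
        ((univ : Set unitInterval) ×ˢ closure U) :=
      ((hcont.mono hUcl).comp continuousOn_snd fun q hq => hq.2).sub
        (hβcont.comp continuous_fst).continuousOn
    have := hg.preimage_isClosed_of_isClosed hK.isClosed (isClosed_singleton (x := (0 : ℂ)))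
    convert hK.of_isClosed_subset this inter_subset_left using 1
    ext q
    simp [S, sub_eq_zero]
  have : CompactSpace S := isCompact_iff_compactSpace.mp hS
  have hSU : ∀ q : S, q.1.2 ∈ U := fun q =>
    hmemU _ q.2.1 (by rw [q.2.2]; exact hβmem _)
  let p : S → unitInterval := fun q => q.1.1
  have hp : Continuous p := continuous_fst.comp continuous_subtype_val
  have ho : IsOpenMap p := by
    rw [isOpenMap_iff_nhds_le]
    intro q W hW
    obtain ⟨e, he, hW⟩ := Metric.mem_nhds_iff.mp hW
    have hV : IsOpen (f '' (U ∩ ball q.1.2 e)) :=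
      hopen _ (inter_subset_left.trans (subset_closure.trans hUcl)) (hUopen.inter isOpen_ball)
    have hq : β (p q) ∈ f '' (U ∩ ball q.1.2 e) :=
      ⟨q.1.2, ⟨hSU q, mem_ball_self he⟩, q.2.2⟩
    filter_upwards [hβcont.continuousAt.preimage_mem_nhds (hV.mem_nhds hq),
      ball_mem_nhds (p q) he] with s hs hse
    obtain ⟨x, ⟨hxU, hxe⟩, hfx⟩ := hs
    have : (⟨(s, x), subset_closure hxU, hfx⟩ : S) ∈ p ⁻¹' W :=
      hW (mem_ball.mpr (max_lt hse hxe))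
    exact this
  have hl : ∀ t, IsTotallyDisconnected (p ⁻¹' {t}) := by
    intro t T hT hTc a ha b hb
    have hsnd : Continuous fun q : S => q.1.2 := continuous_snd.comp continuous_subtype_val
    have hsub := hlight (β t) ((fun q : S => q.1.2) '' T) (by
      rintro _ ⟨q, hq, rfl⟩
      have hqt : q.1.1 = t := hT hq
      exact ⟨hUcl q.2.1, by rw [mem_preimage, mem_singleton_iff, q.2.2, hqt]⟩)
      (hTc.image _ hsnd.continuousOn)
    have h2 : a.1.2 = b.1.2 := hsub ⟨a, ha, rfl⟩ ⟨b, hb, rfl⟩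
    have h1 : a.1.1 = b.1.1 := (hT ha : a.1.1 = t).trans (hT hb : b.1.1 = t).symm
    exact Subtype.ext (Prod.ext h1 h2)
  obtain ⟨γ, hγ, hγ0, hpγ⟩ := exists_section_of_light_open p hp ho hl
    ⟨(0, x₀), subset_closure hx₀, hfx₀⟩ rfl
  refine ⟨fun t => (γ t).1.2, continuous_snd.comp (continuous_subtype_val.comp hγ),
    fun t => hSU _, by simp [hγ0], fun t => ?_⟩
  rw [(γ t).2.2]
  exact congrArg β (hpγ t)
end

section
/- Let Ω ⊆ ℂ be a domain, f : Ω → ℂ a continuous, light, and open mapping, and U a normal domain compactly contained in Ω. Then for every ε > 0 there exists δ > 0 such that for every continuum (nonempty compact connected set) C ⊆ f(U) with diam(C) < δ, every connected component of U ∩ f⁻¹(C) has diameter strictly less than ε. -/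
/-!
Let `K = closure U`, a compact set on which `f` is continuous and light.

Fix two distinct points `a, b` of `K`. Points near `a` and `b` cannot be joined by a connected
subset of `K ∩ f⁻¹(C)` when `diam C` is small (`exists_nhds_not_joined`). If `f a ≠ f b`, this is
because `f` takes values near both `f a` and `f b` in `C`. If `f a = f b = y`, the fiber
`K ∩ f⁻¹(y)` is compact and totally disconnected, so disjoint open sets `V ∋ a` and `W ∋ b` cover it
(`exists_open_separation`); by compactness `V ∪ W` contains `K ∩ f⁻¹(B(y, r))` for some `r > 0`, and
a connected subset of `V ∪ W` cannot meet both pieces. Compactness of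
`{(a, b) ∈ K × K | ε / 2 ≤ dist a b}` makes the bound on `diam C` uniform.
-/

open Set Metric Topology

theorem exists_open_separation {F : Set ℂ} (hF : IsCompact F) (hd : IsTotallyDisconnected F)
    {a b : ℂ} (ha : a ∈ F) (hb : b ∈ F) (hab : a ≠ b) :
    ∃ V W : Set ℂ, IsOpen V ∧ IsOpen W ∧ a ∈ V ∧ b ∈ W ∧ F ⊆ V ∪ W ∧ Disjoint V W := by
  have : CompactSpace F := isCompact_iff_compactSpace.mp hF
  have : TotallyDisconnectedSpace F := totallyDisconnectedSpace_subtype_iff.mpr hd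
  obtain ⟨Z, hZ, haZ, hbZ⟩ := exists_isClopen_of_totally_separated
    (α := F) (i := ⟨a, ha⟩) (j := ⟨b, hb⟩) (fun h => hab (congrArg Subtype.val h))
  have h1 : IsCompact (Subtype.val '' Z : Set ℂ) :=
    hZ.isClosed.isCompact.image continuous_subtype_val
  have h2 : IsCompact (Subtype.val '' Zᶜ : Set ℂ) :=
    hZ.compl.isClosed.isCompact.image continuous_subtype_val
  have h3 : Disjoint (Subtype.val '' Z : Set ℂ) (Subtype.val '' Zᶜ) :=
    (disjoint_image_iff Subtype.val_injective).mpr disjoint_compl_right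
  obtain ⟨V, W, hV, hW, hZV, hZW, hVW⟩ := SeparatedNhds.of_isCompact_isCompact h1 h2 h3
  refine ⟨V, W, hV, hW, hZV ⟨_, haZ, rfl⟩, hZW ⟨_, hbZ, rfl⟩, fun x hx => ?_, hVW⟩
  by_cases hxZ : (⟨x, hx⟩ : F) ∈ Z
  · exact Or.inl (hZV ⟨_, hxZ, rfl⟩)
  · exact Or.inr (hZW ⟨_, hxZ, rfl⟩)

/-- For every bounded set `C` of diameter less than `δ`, no connected subset of `K ∩ f⁻¹(C)` contains
both coordinates of a pair in `s`. -/
def NotJoined (f : ℂ → ℂ) (K : Set ℂ) (δ : ℝ) (s : Set (ℂ × ℂ)) : Prop :=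
  ∀ C : Set ℂ, Bornology.IsBounded C → diam C < δ →
    ∀ S : Set ℂ, S ⊆ K ∩ f ⁻¹' C → IsPreconnected S → ∀ p ∈ s, p.1 ∈ S → p.2 ∉ S

/-- The local form of the lemma, near a single pair of distinct points of `K`. -/
theorem exists_nhds_not_joined {f : ℂ → ℂ} {K : Set ℂ} (hK : IsCompact K) (hf : ContinuousOn f K)
    (hd : ∀ y, IsTotallyDisconnected (K ∩ f ⁻¹' {y}))
    {a b : ℂ} (ha : a ∈ K) (hb : b ∈ K) (hab : a ≠ b) :
    ∃ t ∈ 𝓝[K ×ˢ K] (a, b), ∃ δ > 0, NotJoined f K δ t := by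
  rw [nhdsWithin_prod_eq]
  by_cases hy : f a = f b
  · have hFc : IsCompact (K ∩ f ⁻¹' {f a}) :=
      hK.of_isClosed_subset (hf.preimage_isClosed_of_isClosed hK.isClosed isClosed_singleton)
        inter_subset_left
    obtain ⟨V, W, hV, hW, haV, hbW, hFVW, hVW⟩ :=
      exists_open_separation hFc (hd (f a)) ⟨ha, rfl⟩ ⟨hb, hy.symm⟩ hab
    have hcl : IsClosed (f '' (K \ (V ∪ W))) :=
      ((hK.diff (hV.union hW)).image_of_continuousOn (hf.mono sdiff_subset)).isClosed
    have hmem : f a ∈ (f '' (K \ (V ∪ W)))ᶜ := by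
      rintro ⟨x, ⟨hxK, hx⟩, hfx⟩
      exact hx (hFVW ⟨hxK, hfx⟩)
    obtain ⟨r, hr, hball⟩ := Metric.isOpen_iff.mp hcl.isOpen_compl _ hmem
    have hVn : V ∩ f ⁻¹' ball (f a) (r / 2) ∈ 𝓝[K] a :=
      Filter.inter_mem (mem_nhdsWithin_of_mem_nhds (hV.mem_nhds haV))
        ((hf a ha) (ball_mem_nhds _ (by positivity)))
    refine ⟨_, Filter.prod_mem_prod hVn (mem_nhdsWithin_of_mem_nhds (hW.mem_nhds hbW)),
      r / 2, by positivity, ?_⟩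
    rintro C hCb hC S hS hSc ⟨p, q⟩ ⟨⟨hpV, hpf⟩, hqW⟩ hpS hqS
    -- `C` meets `B(f a, r / 2)` and has diameter less than `r / 2`, so it lies in `B(f a, r)`.
    have hSVW : S ⊆ V ∪ W := by
      intro z hz
      by_contra hzVW
      refine hball (a := f z) ?_ ⟨z, ⟨(hS hz).1, hzVW⟩, rfl⟩
      have h1 := dist_le_diam_of_mem hCb (hS hz).2 (hS hpS).2
      have h2 : dist (f p) (f a) < r / 2 := hpf
      have h3 := dist_triangle (f z) (f p) (f a)
      rw [mem_ball]
      linarith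
    obtain ⟨z, -, hzV, hzW⟩ := hSc V W hV hW hSVW ⟨p, hpS, hpV⟩ ⟨q, hqS, hqW⟩
    exact disjoint_left.mp hVW hzV hzW
  · have hpos : 0 < dist (f a) (f b) := dist_pos.mpr hy
    refine ⟨_, Filter.prod_mem_prod
      ((hf a ha) (ball_mem_nhds _ (show 0 < dist (f a) (f b) / 3 by positivity)))
      ((hf b hb) (ball_mem_nhds _ (show 0 < dist (f a) (f b) / 3 by positivity))),
      dist (f a) (f b) / 3, by positivity, ?_⟩
    rintro C hCb hC S hS - ⟨p, q⟩ ⟨hp, hq⟩ hpS hqS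
    have h1 := dist_le_diam_of_mem hCb (hS hpS).2 (hS hqS).2
    have hp' : dist (f p) (f a) < dist (f a) (f b) / 3 := hp
    have hq' : dist (f q) (f b) < dist (f a) (f b) / 3 := hq
    have h2 := dist_triangle4 (f a) (f p) (f q) (f b)
    rw [dist_comm (f a) (f p)] at h2
    dsimp only at h1
    linarith

/-- **Floyd's diameter lemma.** Let `f` be a continuous, light, open map on a planar
domain `Ω` and `U` a normal domain compactly contained in `Ω`. For every `ε > 0`
there is `δ > 0` such that for every continuum `C ⊆ f(U)` of diameter `< δ`, every
connected component of `U ∩ f⁻¹(C)` has diameter `< ε`. -/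
theorem floyd_diameter_lemma
    (Ω : Set ℂ) (hΩopen : IsOpen Ω) (hΩconn : IsConnected Ω)
    (f : ℂ → ℂ)
    (hcont : ContinuousOn f Ω)
    (hlight : ∀ y : ℂ, IsTotallyDisconnected (Ω ∩ f ⁻¹' {y}))
    (hopen : ∀ V : Set ℂ, V ⊆ Ω → IsOpen V → IsOpen (f '' V))
    (U : Set ℂ)
    (hUopen : IsOpen U) (hUconn : IsConnected U)
    (hUcpt : IsCompact (closure U)) (hUcl : closure U ⊆ Ω)
    (hUnormal : f '' frontier U = frontier (f '' U)) :
    ∀ ε : ℝ, 0 < ε → ∃ δ : ℝ, 0 < δ ∧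
      ∀ C : Set ℂ, C ⊆ f '' U → IsCompact C → IsConnected C → Metric.diam C < δ →
        ∀ x ∈ U ∩ f ⁻¹' C,
          Metric.diam (connectedComponentIn (U ∩ f ⁻¹' C) x) < ε := by
  intro ε hε
  have hf := hcont.mono hUcl
  have hd : ∀ y, IsTotallyDisconnected (closure U ∩ f ⁻¹' {y}) := fun y t ht =>
    hlight y t (ht.trans (inter_subset_inter_left _ hUcl))
  have hKc : IsCompact ((closure U ×ˢ closure U) ∩ {p : ℂ × ℂ | ε / 2 ≤ dist p.1 p.2}) :=
    (hUcpt.prod hUcpt).inter_right (isClosed_le continuous_const (by fun_prop))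
  obtain ⟨δ, hδ, H⟩ : ∃ δ > 0, NotJoined f (closure U) δ
      ((closure U ×ˢ closure U) ∩ {p : ℂ × ℂ | ε / 2 ≤ dist p.1 p.2}) := by
    refine hKc.induction_on (p := fun s => ∃ δ > 0, NotJoined f (closure U) δ s) ?_ ?_ ?_ ?_
    · exact ⟨1, one_pos, fun _ _ _ _ _ _ p hp => hp.elim⟩
    · rintro s t hst ⟨δ, hδ, h⟩
      exact ⟨δ, hδ, fun C hCb hC S hS hSc p hp => h C hCb hC S hS hSc p (hst hp)⟩
    · rintro s t ⟨δ, hδ, h⟩ ⟨η, hη, h'⟩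
      refine ⟨min δ η, lt_min hδ hη, fun C hCb hC S hS hSc p hp => ?_⟩
      rcases hp with hp | hp
      · exact h C hCb (hC.trans_le (min_le_left _ _)) S hS hSc p hp
      · exact h' C hCb (hC.trans_le (min_le_right _ _)) S hS hSc p hp
    · rintro ⟨a, b⟩ ⟨⟨ha, hb⟩, hab⟩
      have hne : a ≠ b := by
        rintro rfl
        have : ε / 2 ≤ dist a a := hab
        rw [dist_self] at this
        linarith
      obtain ⟨t, ht, h⟩ := exists_nhds_not_joined hUcpt hf hd ha hb hne
      exact ⟨t, nhdsWithin_mono _ inter_subset_left ht, h⟩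
  refine ⟨δ, hδ, fun C _ hCc _ hCδ x _ => ?_⟩
  have hsub : connectedComponentIn (U ∩ f ⁻¹' C) x ⊆ closure U ∩ f ⁻¹' C :=
    (connectedComponentIn_subset _ _).trans (inter_subset_inter_left _ subset_closure)
  refine (diam_le_of_forall_dist_le (half_pos hε).le fun p hp q hq => ?_).trans_lt (half_lt_self hε)
  by_contra hpq
  exact H C hCc.isBounded hCδ _ hsub isPreconnected_connectedComponentIn (p, q)
    ⟨⟨(hsub hp).1, (hsub hq).1⟩, (not_le.mp hpq).le⟩ hp hq
end

section
/- Let Ω ⊆ ℂ be a simply connected domain and let c : S¹ → Ω be an injective continuous map from the unit circle into Ω. Then Ω \ c(S¹) has exactly two connected components, exactly one of which has compact closure contained in Ω, and both of these components have the image c(S¹) as their topological boundary (relative to Ω). -/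
/-!
The proof is Eilenberg's approach through continuous logarithms. Since `exp` is a covering map of
`ℂ \ {0}`, zero-free functions on simply connected spaces have continuous logarithms, and these are
unique up to a constant on connected sets.

* If `U` is a bounded component of the complement of a compact set `K` and `p ∈ U`,
  `q ∉ closure U`, then `(z - p) ^ n / (z - q) ^ m` with `n ≠ 0` has no logarithm on `K`
  (`eq_zero_of_log`): a Tietze extension of it would give a zero-free function on `ℂ` equal to
  `(z - p) ^ n` near infinity.
* On an arc every zero-free function has a logarithm, so arcs do not separate the plane
  (`isPreconnected_compl_arc`). Therefore each component of the complement of a Jordan curve has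
  the whole curve as boundary (`frontier_eq_range`).
* Zero-free functions on the circle are classified by an integer degree (`exists_degree`), so for
  points `p`, `q` in two distinct bounded components a nontrivial combination
  `(z - p) ^ m / (z - q) ^ n` would have a logarithm. Hence there is at most one bounded component.
* A Jordan curve does separate (`not_isPreconnected_compl`): split it into arcs from `a` to `b`;
  logarithms of `(z - a) / (z - b)` off each arc would glue to one on `ℂ \ {a, b}`.

In a simply connected domain `Ω`, the functions `z - p` with `p ∉ Ω` have logarithms on `Ω`, so the
bounded component `U` lies in `Ω`. The unbounded component `W` then satisfies `W ∪ Ω = ℂ`, and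
`W ∩ Ω` is connected by unicoherence of the plane (`isPreconnected_inter_of_cover`).
-/

open Set Filter Topology Complex Metric

namespace JordanLog

/-! ### Continuous logarithms -/

/-- A continuous function with `exp ∘ h` constant is constant on preconnected sets, because `exp`
is a covering map of `ℂ \ {0}`. -/
lemma const_of_exp_const {X : Type*} [TopologicalSpace X] {S : Set X} (hS : IsPreconnected S)
    {h : X → ℂ} (hc : ContinuousOn h S) {w : ℂ} (he : ∀ x ∈ S, exp (h x) = w)
    {x y : X} (hx : x ∈ S) (hy : y ∈ S) : h x = h y :=
  isCoveringMap_exp.constOn_of_comp hS hc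
    (fun a ha b hb => Subtype.ext ((he a ha).trans (he b hb).symm)) hx hy

lemma exists_log_of_convex {E : Type*} [NormedAddCommGroup E] [NormedSpace ℝ E] {S : Set E}
    (hS : Convex ℝ S) (hne : S.Nonempty) (ho : IsOpen S) {f : E → ℂ} (hf : ContinuousOn f S)
    (h0 : ∀ x ∈ S, f x ≠ 0) : ∃ g : E → ℂ, ContinuousOn g S ∧ ∀ x ∈ S, exp (g x) = f x := by
  have : ContractibleSpace S := hS.contractibleSpace hne
  have hsc : IsSimplyConnected S := by
    unfold IsSimplyConnected
    infer_instance
  obtain ⟨g, hg, hg'⟩ := exists_continuousOn_eqOn_exp_comp hsc ho hf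
    (by rintro ⟨x, hx, h⟩; exact h0 x hx h)
  exact ⟨g, hg, fun x hx => hg' hx⟩

/-- If a path `γ` avoids `S`, then `z ↦ (z - γ 1) / (z - γ 0)` has a continuous logarithm on `S`:
the homotopy `(z - γ t) / (z - γ 0)` starts at the constant `1` and lifts through `exp`. -/
lemma exists_log_of_path {S : Set ℂ} (γ : C(unitInterval, ℂ)) (hγ : ∀ t, γ t ∉ S) :
    ∃ g : ℂ → ℂ, ContinuousOn g S ∧ ∀ z ∈ S, exp (g z) = (z - γ 1) / (z - γ 0) := by
  classical
  have hne : ∀ (t : unitInterval) (z : S), (z : ℂ) - γ t ≠ 0 := fun t z h =>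
    hγ t (by rw [← sub_eq_zero.1 h]; exact z.2)
  let H : C(unitInterval × S, {z : ℂ // z ≠ 0}) :=
    ⟨fun x => ⟨((x.2 : ℂ) - γ x.1) / ((x.2 : ℂ) - γ 0), div_ne_zero (hne _ _) (hne _ _)⟩, by
      refine Continuous.subtype_mk (Continuous.div (by fun_prop) (by fun_prop) ?_) _
      exact fun x => hne _ _⟩
  have H0 : ∀ a : S, H (0, a) = ⟨exp ((ContinuousMap.const S (0 : ℂ)) a), exp_ne_zero _⟩ := by
    intro a
    apply Subtype.ext
    simp [H, div_self (hne 0 a)]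
  let G := isCoveringMap_exp.liftHomotopy H (ContinuousMap.const S 0) H0
  have hG := isCoveringMap_exp.liftHomotopy_lifts H (ContinuousMap.const S 0) H0
  refine ⟨fun z => if hz : z ∈ S then G (1, ⟨z, hz⟩) else 0, ?_, fun z hz => ?_⟩
  · rw [continuousOn_iff_continuous_domRestrict]
    have : Continuous fun z : S => G (1, z) := by fun_prop
    convert this using 2 with z
    simp [Set.domRestrict]
  · have := congrArg Subtype.val (congrFun hG (1, ⟨z, hz⟩))
    simpa [hz, H, G] using this

/-- The power `(z - p) ^ n` with `n ≠ 0` has no continuous logarithm on a circle around `p`. -/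
lemma eq_zero_of_log_circle {L : ℂ → ℂ} {p : ℂ} {R : ℝ} (hR : 0 < R) {n : ℤ}
    (hL : ContinuousOn L (sphere p R)) (he : ∀ z ∈ sphere p R, exp (L z) = (z - p) ^ n) :
    n = 0 := by
  have hmem : ∀ θ : ℝ, p + R * exp (θ * I) ∈ sphere p R := fun θ => by
    simp [norm_exp_ofReal_mul_I, abs_of_pos hR]
  have hc : Continuous fun θ : ℝ => L (p + R * exp (θ * I)) - n * (θ * I) :=
    (hL.comp_continuous (by fun_prop) hmem).sub (by fun_prop)
  have key := const_of_exp_const (h := fun θ : ℝ => L (p + R * exp (θ * I)) - n * (θ * I))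
    (w := (R : ℂ) ^ n) isPreconnected_univ hc.continuousOn (fun θ _ => by
      have h1 : exp (θ * I) ^ n ≠ 0 := zpow_ne_zero _ (exp_ne_zero _)
      rw [exp_sub, he _ (hmem θ), exp_int_mul, add_sub_cancel_left, mul_zpow]
      field_simp) (mem_univ (0 : ℝ)) (mem_univ (2 * Real.pi))
  have h2 : exp (((2 * Real.pi : ℝ) : ℂ) * I) = 1 := by
    push_cast; exact exp_two_pi_mul_I
  simp only [h2] at key
  have h3 : (n : ℂ) * (2 * Real.pi * I) = 0 := by
    simp at key
    linear_combination key
  simpa [Real.pi_ne_zero] using h3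

/-! ### Bounded complementary regions -/

/-- The power `(z - p) ^ n` on the boundary of a bounded open set containing `p` extends without
zeros to the inside only if `n = 0`: otherwise gluing with `(z - p) ^ n` outside gives
a zero-free function on the plane, whose logarithm restricts to a large circle. -/
lemma eq_zero_of_extension {U : Set ℂ} (hU : IsOpen U) (hb : Bornology.IsBounded U) {p : ℂ}
    (hp : p ∈ U) {n : ℤ} {h : ℂ → ℂ} (hc : ContinuousOn h (closure U))
    (h0 : ∀ z ∈ closure U, h z ≠ 0) (hfr : ∀ z ∈ frontier U, h z = (z - p) ^ n) : n = 0 := by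
  classical
  have hout : ∀ z, z ∉ U → z - p ≠ 0 := fun z hz h => hz (by rwa [sub_eq_zero.1 h])
  have hcl : closure Uᶜ = Uᶜ := hU.isClosed_compl.closure_eq
  have hF : Continuous (U.piecewise h fun z => (z - p) ^ n) := by
    refine continuous_piecewise hfr hc ?_
    rw [hcl]
    intro z hz
    have : ContinuousAt (fun z => (z - p) ^ n) z :=
      ContinuousAt.zpow₀ (by fun_prop) n (Or.inl (hout z hz))
    exact this.continuousWithinAt
  obtain ⟨L, hL, hLe⟩ := exists_log_of_convex (S := univ) convex_univ univ_nonempty isOpen_univ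
    hF.continuousOn (fun z _ => by
      by_cases hz : z ∈ U
      · simpa [hz] using h0 z (subset_closure hz)
      · simpa [hz] using zpow_ne_zero n (hout z hz))
  obtain ⟨R, hR, hsub⟩ := hb.subset_ball_lt 0 p
  refine eq_zero_of_log_circle (p := p) hR (hL.mono (subset_univ _)) fun z hz => ?_
  have hzU : z ∉ U := fun h => by
    have h1 := mem_ball.1 (hsub h)
    rw [mem_sphere.1 hz] at h1
    exact lt_irrefl _ h1
  rw [hLe z (mem_univ _), piecewise_eq_of_notMem _ _ _ hzU]

/-- If `U` is a bounded open set whose boundary lies on the closed set `range e`, and `p ∈ U`,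
`q ∉ closure U`, then `(z - p) ^ n / (z - q) ^ m` has no continuous logarithm on `range e`
unless `n = 0`. -/
lemma eq_zero_of_log {X : Type*} [TopologicalSpace X] {e : X → ℂ} (he : IsClosedEmbedding e)
    {U : Set ℂ} (hU : IsOpen U) (hb : Bornology.IsBounded U) (hfr : frontier U ⊆ range e) {p q : ℂ}
    (hp : p ∈ U) (hq : q ∉ closure U) {n m : ℤ} (g : C(X, ℂ))
    (hg : ∀ x, (e x - p) ^ n = (e x - q) ^ m * exp (g x)) : n = 0 := by
  obtain ⟨G, hG⟩ := ContinuousMap.exists_extension he g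
  have hqne : ∀ z ∈ closure U, z - q ≠ 0 := fun z hz h => hq (by rwa [← sub_eq_zero.1 h])
  refine eq_zero_of_extension hU hb hp (h := fun z => (z - q) ^ m * exp (G z)) ?_ ?_ ?_
  · intro z hz
    have : ContinuousAt (fun z => (z - q) ^ m) z :=
      ContinuousAt.zpow₀ (by fun_prop) m (Or.inl (hqne z hz))
    exact (this.mul (by fun_prop)).continuousWithinAt
  · exact fun z hz => mul_ne_zero (zpow_ne_zero _ (hqne z hz)) (exp_ne_zero _)
  · intro z hz
    obtain ⟨x, rfl⟩ := hfr hz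
    have : G (e x) = g x := congrFun (congrArg DFunLike.coe hG) x
    rw [hg, this]

/-- The special case of `eq_zero_of_log` without the second factor. -/
lemma no_log_sub {X : Type*} [TopologicalSpace X] {e : X → ℂ} (he : IsClosedEmbedding e)
    {U : Set ℂ} (hU : IsOpen U) (hb : Bornology.IsBounded U) (hfr : frontier U ⊆ range e) {p : ℂ}
    (hp : p ∈ U) (g : C(X, ℂ)) (hg : ∀ x, e x - p = exp (g x)) : False := by
  have hne : (closure U) ≠ univ := fun h => by
    have := hb.closure
    rw [h] at this
    exact NormedSpace.unbounded_univ ℝ ℂ this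
  obtain ⟨q, hq⟩ := (ne_univ_iff_exists_notMem _).1 hne
  have := eq_zero_of_log he hU hb hfr hp hq (n := 1) (m := 0) g (by simpa using hg)
  omega

/-! ### Components of the complement of a compact set -/

lemma frontier_component_subset {K : Set ℂ} (hK : IsClosed K) (p : ℂ) :
    frontier (connectedComponentIn Kᶜ p) ⊆ K := by
  intro x hx
  by_contra hxK
  have ho : IsOpen (connectedComponentIn Kᶜ p) := hK.isOpen_compl.connectedComponentIn
  have hxo : IsOpen (connectedComponentIn Kᶜ x) := hK.isOpen_compl.connectedComponentIn
  rw [ho.frontier_eq] at hx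
  obtain ⟨y, hy, hy'⟩ := mem_closure_iff.1 hx.1 _ hxo (mem_connectedComponentIn hxK)
  apply hx.2
  rw [connectedComponentIn_eq hy', ← connectedComponentIn_eq hy]
  exact mem_connectedComponentIn hxK

lemma component_eq_of_mem {K : Set ℂ} {p q x : ℂ} (hp : x ∈ connectedComponentIn Kᶜ p)
    (hq : x ∈ connectedComponentIn Kᶜ q) :
    connectedComponentIn Kᶜ p = connectedComponentIn Kᶜ q :=
  (connectedComponentIn_eq hp).trans (connectedComponentIn_eq hq).symm

lemma isPreconnected_norm_gt {R : ℝ} (hR : 0 ≤ R) : IsPreconnected {z : ℂ | R < ‖z‖} := by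
  have h : IsPreconnected ((fun x : ℝ × ℝ => (x.1 : ℂ) * exp (x.2 * I)) '' (Ioi R ×ˢ univ)) := by
    apply (isPreconnected_Ioi.prod isPreconnected_univ).image
    fun_prop
  convert h using 1
  ext z
  constructor
  · intro hz
    exact ⟨(‖z‖, arg z), ⟨hz, mem_univ _⟩, norm_mul_exp_arg_mul_I z⟩
  · rintro ⟨⟨r, θ⟩, ⟨hr, -⟩, rfl⟩
    have hr' : R < r := hr
    simp [norm_exp_ofReal_mul_I, abs_of_pos (lt_of_le_of_lt hR hr'), hr']

/-- The complement of a compact set has exactly one unbounded component. -/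
lemma exists_unbounded_component {K : Set ℂ} (hK : IsCompact K) :
    ∃ w ∉ K, ¬ Bornology.IsBounded (connectedComponentIn Kᶜ w) ∧
      ∀ p, p ∉ connectedComponentIn Kᶜ w → Bornology.IsBounded (connectedComponentIn Kᶜ p) := by
  obtain ⟨R, hR, hsub⟩ := hK.isBounded.subset_ball_lt 0 0
  have hE : {z : ℂ | R < ‖z‖} ⊆ Kᶜ := fun z hz hzK => by
    have := hsub hzK
    simp at this hz
    linarith
  have hw : ((R + 1 : ℝ) : ℂ) ∈ {z : ℂ | R < ‖z‖} := by
    have : |R + 1| = R + 1 := abs_of_pos (by linarith)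
    simp only [mem_ofPred_eq, norm_real, Real.norm_eq_abs, this]
    linarith
  have hEW := (isPreconnected_norm_gt hR.le).subset_connectedComponentIn hw hE
  refine ⟨_, hE hw, fun hb => ?_, fun p hp => ?_⟩
  · obtain ⟨r, hr, hr'⟩ := (hb.subset hEW).subset_ball_lt R 0
    have h1 : ((r + 1 : ℝ) : ℂ) ∈ {z : ℂ | R < ‖z‖} := by
      have : |r + 1| = r + 1 := abs_of_pos (by linarith)
      simp only [mem_ofPred_eq, norm_real, Real.norm_eq_abs, this]
      linarith
    have := hr' h1
    rw [mem_ball_zero_iff, norm_real, Real.norm_eq_abs] at this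
    linarith [le_abs_self (r + 1)]
  · refine (isBounded_closedBall (x := (0 : ℂ)) (r := R)).subset fun z hz => ?_
    by_contra hzR
    have hz' : R < ‖z‖ := by simpa using hzR
    apply hp
    rw [component_eq_of_mem (hEW hz') hz]
    by_cases hpK : p ∈ Kᶜ
    · exact mem_connectedComponentIn hpK
    · rw [connectedComponentIn_eq_empty hpK] at hz
      exact hz.elim

/-! ### Arcs do not separate the plane -/

lemma isPreconnected_compl_arc {e : unitInterval → ℂ} (hc : Continuous e)
    (hi : Function.Injective e) : IsPreconnected (range e)ᶜ := by
  have hcl : IsClosedEmbedding e := hc.isClosedEmbedding hi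
  obtain ⟨w, hw, -, hb⟩ := exists_unbounded_component (isCompact_range hc)
  suffices h : (range e)ᶜ = connectedComponentIn (range e)ᶜ w by
    rw [h]; exact isPreconnected_connectedComponentIn
  refine Subset.antisymm (fun p hp => ?_) (connectedComponentIn_subset _ _)
  by_contra hpw
  -- `e t - p` has a logarithm along the arc, by path lifting
  have hne : ∀ t, e t - p ≠ 0 := fun t h => hp ⟨t, sub_eq_zero.1 h⟩
  let γ : C(unitInterval, {z : ℂ // z ≠ 0}) := ⟨fun t => ⟨e t - p, hne t⟩, by fun_prop⟩
  obtain ⟨g, hg, -⟩ := isCoveringMap_exp.exists_path_lifts γ (log (e 0 - p))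
    (Subtype.ext (exp_log (hne 0)).symm)
  exact no_log_sub hcl hcl.isClosed_range.isOpen_compl.connectedComponentIn (hb p hpw)
    (frontier_component_subset hcl.isClosed_range p) (mem_connectedComponentIn hp) g
    (fun t => (congrArg Subtype.val (congrFun hg t)).symm)

/-! ### Separation by a closed curve -/

/-- Every zero-free function on the circle is `w ^ n` times an exponential; `n` is its degree. -/
lemma exists_degree {f : Circle → ℂ} (hf : Continuous f) (h0 : ∀ w, f w ≠ 0) :
    ∃ (n : ℤ) (g : C(Circle, ℂ)), ∀ w : Circle, f w = (w : ℂ) ^ n * exp (g w) := by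
  obtain ⟨L, hL, hLe⟩ := exists_log_of_convex (S := (univ : Set ℝ)) convex_univ univ_nonempty
    isOpen_univ (f := fun θ => f (Circle.exp θ)) (by fun_prop) (fun θ _ => h0 _)
  have hL' : Continuous L := continuousOn_univ.1 hL
  have hper : ∀ θ : ℝ, exp (L (θ + 2 * Real.pi) - L θ) = 1 := fun θ => by
    rw [exp_sub, hLe _ (mem_univ _), hLe _ (mem_univ _), Circle.periodic_exp θ, div_self (h0 _)]
  obtain ⟨n, hn⟩ := exp_eq_one_iff.1 (hper 0)
  have hconst : ∀ θ : ℝ, L (θ + 2 * Real.pi) - L θ = n * (2 * Real.pi * I) := fun θ => by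
    rw [← hn]
    exact const_of_exp_const (h := fun θ : ℝ => L (θ + 2 * Real.pi) - L θ) isPreconnected_univ
      (by fun_prop) (fun θ _ => hper θ) (mem_univ _) (mem_univ _)
  let M : ℝ → ℂ := fun θ => L θ - n * (θ * I)
  have hM : Function.Periodic M (2 * Real.pi) := fun θ => by
    simp only [M]
    push_cast
    linear_combination hconst θ
  have hMc : Continuous M := by fun_prop
  let G : AddCircle (2 * Real.pi) → ℂ := hM.lift
  have hG : Continuous G := continuous_coinduced_dom.2 hMc
  refine ⟨n, ⟨fun w => G (AddCircle.homeomorphCircle'.symm w), by fun_prop⟩, fun w => ?_⟩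
  obtain ⟨θ, rfl⟩ : ∃ θ : ℝ, Circle.exp θ = w := ⟨_, Circle.exp_arg w⟩
  have h1 : AddCircle.homeomorphCircle'.symm (Circle.exp θ) = (θ : AddCircle (2 * Real.pi)) := by
    rw [Homeomorph.symm_apply_eq, AddCircle.homeomorphCircle'_apply_mk]
  have h2 : G (θ : AddCircle (2 * Real.pi)) = M θ := hM.lift_coe θ
  simp only [ContinuousMap.coe_mk, h1, h2, M]
  rw [exp_sub, hLe θ (mem_univ _), exp_int_mul, Circle.coe_exp]
  have : exp (θ * I) ^ n ≠ 0 := zpow_ne_zero _ (exp_ne_zero _)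
  field_simp

/-- The complement of a closed curve is disconnected. With the curve split into two arcs `A`, `B`
from `a` to `b`, the function `(z - a) / (z - b)` has logarithms off `A` and off `B`. If the
complement of the curve were connected, they could be glued to a logarithm on `ℂ \ {a, b}`,
and none exists near `a`. -/
lemma not_isPreconnected_compl {c : Circle → ℂ} (hc : Continuous c)
    (hi : Function.Injective c) : ¬ IsPreconnected (range c)ᶜ := by
  classical
  intro hpre
  set a := c (Circle.exp 0) with ha
  set b := c (Circle.exp Real.pi) with hb
  let A : Set ℂ := c '' {w | 0 ≤ (w : ℂ).im}
  let B : Set ℂ := c '' {w | (w : ℂ).im ≤ 0}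
  have hA : IsClosed A := ((isClosed_le (by fun_prop) (by fun_prop)).isCompact.image hc).isClosed
  have hB : IsClosed B := ((isClosed_le (by fun_prop) (by fun_prop)).isCompact.image hc).isClosed
  have hAB : A ∪ B = range c := by
    rw [← image_union, ← image_univ]
    congr 1
    exact eq_univ_of_forall fun w => (le_total 0 (w : ℂ).im)
  have hInter : A ∩ B ⊆ {a, b} := by
    rw [← image_inter hi]
    rintro _ ⟨w, ⟨h1, h2⟩, rfl⟩
    have him : (w : ℂ).im = 0 := le_antisymm h2 h1
    have hn : (w : ℂ).re * (w : ℂ).re = 1 := by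
      have := Circle.normSq_coe w
      rw [normSq_apply, him] at this
      linarith
    rcases mul_self_eq_one_iff.1 hn with h | h
    · left
      rw [ha]; congr 1
      ext
      apply Complex.ext <;> simp [h, him]
    · right
      rw [hb]; congr 1
      ext
      apply Complex.ext <;> simp [h, him]
  have hab : a ≠ b := fun h => by
    have := congrArg (fun w : Circle => (w : ℂ).re) (hi h)
    norm_num at this
  obtain ⟨gA, hgA, hgA'⟩ := exists_log_of_path (S := Aᶜ)
    ⟨fun t : unitInterval => c (Circle.exp (Real.pi * (1 - t))), by fun_prop⟩
    (fun t => not_not.2 ⟨_, by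
      have := t.2.1
      have := t.2.2
      simp only [mem_ofPred_eq, Circle.coe_exp, exp_ofReal_mul_I_im]
      exact Real.sin_nonneg_of_nonneg_of_le_pi (by have := Real.pi_pos; bound)
        (by have := Real.pi_pos; nlinarith), rfl⟩)
  obtain ⟨gB, hgB, hgB'⟩ := exists_log_of_path (S := Bᶜ)
    ⟨fun t : unitInterval => c (Circle.exp (Real.pi * (1 + t))), by fun_prop⟩
    (fun t => not_not.2 ⟨_, by
      have := t.2.1
      have := t.2.2
      simp only [mem_ofPred_eq, Circle.coe_exp, exp_ofReal_mul_I_im]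
      rw [show Real.pi * (1 + (t : ℝ)) = Real.pi * t + Real.pi by ring, Real.sin_add_pi]
      have := Real.sin_nonneg_of_nonneg_of_le_pi (x := Real.pi * t)
        (by have := Real.pi_pos; bound) (by have := Real.pi_pos; nlinarith)
      linarith, rfl⟩)
  have h2pi : Circle.exp (Real.pi * (1 + 1)) = Circle.exp 0 := by
    rw [show Real.pi * (1 + 1) = 0 + 2 * Real.pi by ring, Circle.periodic_exp]
  simp only [ContinuousMap.coe_mk, Icc.coe_one, Icc.coe_zero, sub_self, mul_zero,
    sub_zero, mul_one, ← ha, ← hb, add_zero, h2pi] at hgA' hgB'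
  have hk : ∃ k : ℂ, exp k = 1 ∧ ∀ z ∈ (range c)ᶜ, gA z - gB z = k := by
    have hsubA : (range c)ᶜ ⊆ Aᶜ := compl_subset_compl.2 (by rw [← hAB]; exact subset_union_left)
    have hsubB : (range c)ᶜ ⊆ Bᶜ := compl_subset_compl.2 (by rw [← hAB]; exact subset_union_right)
    have hne : ∀ z ∈ (range c)ᶜ, exp (gA z - gB z) = 1 := fun z hz => by
      rw [exp_sub, hgA' z (hsubA hz), hgB' z (hsubB hz), div_self]
      refine div_ne_zero ?_ ?_ <;> intro h <;> rw [sub_eq_zero.1 h] at hz <;>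
        exact hz (mem_range_self _)
    rcases (range c)ᶜ.eq_empty_or_nonempty with h | ⟨y, hy⟩
    · exact ⟨0, exp_zero, by simp [h]⟩
    · exact ⟨gA y - gB y, hne y hy, fun z hz => const_of_exp_const (h := fun z => gA z - gB z) hpre
        ((hgA.mono hsubA).sub (hgB.mono hsubB)) hne hz hy⟩
  obtain ⟨k, hk1, hk⟩ := hk
  let G : ℂ → ℂ := fun z => if z ∈ Aᶜ then gA z else gB z + k
  have hGB : EqOn G (fun z => gB z + k) Bᶜ := fun z hz => by
    by_cases hzA : z ∈ A
    · simp [G, hzA]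
    · have : z ∈ (range c)ᶜ := by
        rw [← hAB]; exact fun h => h.elim hzA hz
      simp [G, hzA, ← hk z this]
  have hGA : EqOn G gA Aᶜ := fun z hz => if_pos hz
  have hGc : ∀ z, z ≠ a → z ≠ b → ContinuousAt G z ∧ exp (G z) = (z - a) / (z - b) := by
    intro z hza hzb
    have : z ∈ Aᶜ ∨ z ∈ Bᶜ := by
      by_contra! h
      rcases hInter ⟨not_not.1 h.1, not_not.1 h.2⟩ with h | h
      exacts [hza h, hzb h]
    rcases this with h | h
    · refine ⟨(hgA.congr hGA).continuousAt (hA.isOpen_compl.mem_nhds h), ?_⟩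
      rw [hGA h, hgA' z h]
    · refine ⟨((hgB.add continuousOn_const).congr hGB).continuousAt
        (hB.isOpen_compl.mem_nhds h), ?_⟩
      rw [hGB h, exp_add, hgB' z h, hk1, mul_one]
  have hd : 0 < dist b a := dist_pos.2 hab.symm
  -- on the ball around `a` with `b` on its boundary, `z - b` has a logarithm
  obtain ⟨l, hl, hl'⟩ := exists_log_of_convex (convex_ball a (dist b a)) (nonempty_ball.2 hd)
    isOpen_ball (f := fun z => z - b) (by fun_prop) (fun z hz h => by
      rw [sub_eq_zero.1 h] at hz
      exact lt_irrefl _ (mem_ball.1 hz))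
  have hsph : ∀ z ∈ sphere a (dist b a / 2), z ∈ ball a (dist b a) ∧ z ≠ a ∧ z ≠ b := by
    intro z hz
    rw [mem_sphere] at hz
    refine ⟨mem_ball.2 (by linarith), fun h => ?_, fun h => ?_⟩
    · rw [h, dist_self] at hz; linarith
    · rw [h] at hz; linarith
  have := eq_zero_of_log_circle (L := fun z => G z + l z) (n := 1) (p := a) (half_pos hd)
    (ContinuousOn.add (fun z hz => (hGc z (hsph z hz).2.1 (hsph z hz).2.2).1.continuousWithinAt)
      (hl.mono fun z hz => (hsph z hz).1)) (fun z hz => by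
      obtain ⟨h1, h2, h3⟩ := hsph z hz
      rw [exp_add, (hGc z h2 h3).2, hl' z h1, zpow_one, div_mul_cancel₀ _ (sub_ne_zero.2 h3)])
  omega

/-! ### The Jordan curve theorem in the plane -/

/-- If the boundary of `U` missed a point of the curve, it would lie on an arc; as arcs do not
separate, `U` would be the whole complement of this arc. -/
lemma frontier_eq_range {c : Circle → ℂ} (hc : Continuous c) (hi : Function.Injective c)
    {U : Set ℂ} (hU : IsOpen U) (hne : U.Nonempty) (hd : Disjoint U (range c))
    (hfr : frontier U ⊆ range c) : frontier U = range c := by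
  refine Subset.antisymm hfr ?_
  rintro _ ⟨w₀, rfl⟩
  by_contra hw₀
  have hN : IsOpen {θ : ℝ | c (w₀ * Circle.exp θ) ∈ (frontier U)ᶜ} :=
    isClosed_frontier.isOpen_compl.preimage (by fun_prop)
  obtain ⟨δ, hδ, hball⟩ := Metric.isOpen_iff.1 hN 0 (by simpa using hw₀)
  have hpi := Real.pi_pos
  -- the arc of angles in `[d, 2π - d]` seen from `w₀`
  obtain ⟨d, hd0, hdδ, hdpi⟩ : ∃ d, 0 < d ∧ d < δ ∧ d < Real.pi :=
    ⟨min δ Real.pi / 2, by positivity, by linarith [min_le_left δ Real.pi, lt_min hδ hpi],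
      by linarith [min_le_right δ Real.pi, lt_min hδ hpi]⟩
  have hfar : ∀ θ : ℝ, c (w₀ * Circle.exp θ) ∈ frontier U → d ≤ |θ| := by
    intro θ hθ
    by_contra! h
    exact hball (by simpa using h.trans hdδ) hθ
  let e : unitInterval → ℂ := fun t => c (w₀ * Circle.exp (d + t * (2 * Real.pi - 2 * d)))
  have hec : Continuous e := by fun_prop
  have hlen : 0 < 2 * Real.pi - 2 * d := by linarith
  have hei : Function.Injective e := by
    intro s t hst
    obtain ⟨m, hm⟩ := Circle.exp_eq_exp.1 (mul_left_cancel (hi hst))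
    have hs0 := s.2.1
    have hs1 := s.2.2
    have ht0 := t.2.1
    have ht1 := t.2.2
    have hm1 : m < 1 := by
      have : (m : ℝ) < 1 := by
        by_contra! h
        nlinarith
      exact_mod_cast this
    have hm2 : -1 < m := by
      have : (-1 : ℝ) < m := by
        by_contra! h
        nlinarith
      exact_mod_cast this
    obtain rfl : m = 0 := by omega
    apply Subtype.ext
    apply mul_right_cancel₀ hlen.ne'
    rw [Int.cast_zero, zero_mul, add_zero] at hm
    linarith
  have hfe : frontier U ⊆ range e := by
    intro y hy
    obtain ⟨w, rfl⟩ := hfr hy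
    obtain ⟨θ, h1, h2, rfl⟩ : ∃ θ : ℝ, -Real.pi < θ ∧ θ ≤ Real.pi ∧ w₀ * Circle.exp θ = w :=
      ⟨arg (w / w₀ : Circle), neg_pi_lt_arg _, arg_le_pi _, by rw [Circle.exp_arg]; simp⟩
    have key : ∀ φ : ℝ, d ≤ φ → φ ≤ 2 * Real.pi - d → c (w₀ * Circle.exp φ) ∈ range e := by
      intro φ hφ1 hφ2
      refine ⟨⟨(φ - d) / (2 * Real.pi - 2 * d), div_nonneg (by linarith) hlen.le,
        (div_le_one hlen).2 (by linarith)⟩, ?_⟩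
      simp only [e]
      rw [div_mul_cancel₀ _ hlen.ne', add_sub_cancel]
    rcases le_abs.1 (hfar θ hy) with h | h
    · exact key θ h (by linarith)
    · rw [← Circle.periodic_exp θ]
      exact key _ (by linarith) (by linarith)
  have hw₀e : c w₀ ∈ (range e)ᶜ := by
    rintro ⟨t, ht⟩
    have h1 := hi ht
    rw [mul_eq_left] at h1
    obtain ⟨m, hm⟩ := Circle.exp_eq_exp.1 (h1.trans Circle.exp_zero.symm)
    have ht0 := t.2.1
    have ht1 := t.2.2
    have hm1 : m < 1 := by
      have : (m : ℝ) < 1 := by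
        by_contra! h
        nlinarith
      exact_mod_cast this
    have hm2 : 0 < m := by
      have : (0 : ℝ) < m := by
        by_contra! h
        nlinarith
      exact_mod_cast this
    omega
  have hee : range e ⊆ range c := by
    rintro _ ⟨t, rfl⟩
    exact mem_range_self _
  obtain ⟨u, hu⟩ := hne
  have hsub := (isPreconnected_compl_arc hec hei).subset_of_closure_inter_subset hU
    ⟨u, fun h => disjoint_left.1 hd hu (hee h), hu⟩ (fun x hx => by
      by_contra hxU
      exact hx.2 (hfe (by rw [hU.frontier_eq]; exact ⟨hx.1, hxU⟩)))
  exact disjoint_left.1 hd (hsub hw₀e) (mem_range_self _)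

/-- The Jordan curve theorem in `ℂ`. -/
theorem jordan_plane {c : Circle → ℂ} (hc : Continuous c) (hi : Function.Injective c) :
    ∃ U W : Set ℂ, IsOpen U ∧ IsOpen W ∧ IsConnected U ∧ IsConnected W ∧ Disjoint U W ∧
      U ∪ W = (range c)ᶜ ∧ Bornology.IsBounded U ∧ ¬ Bornology.IsBounded W ∧
      frontier U = range c ∧ frontier W = range c := by
  have hcl : IsClosedEmbedding c := hc.isClosedEmbedding hi
  have hK := isCompact_range hc
  obtain ⟨w, hw, hwb, hb⟩ := exists_unbounded_component hK
  set W := connectedComponentIn (range c)ᶜ w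
  have hWsub : W ⊆ (range c)ᶜ := connectedComponentIn_subset _ _
  obtain ⟨p, hp, hpW⟩ : ∃ p ∈ (range c)ᶜ, p ∉ W := by
    by_contra! h
    apply not_isPreconnected_compl hc hi
    rw [Subset.antisymm h hWsub]
    exact isPreconnected_connectedComponentIn
  have hopen : ∀ q, IsOpen (connectedComponentIn (range c)ᶜ q) := fun q =>
    hK.isClosed.isOpen_compl.connectedComponentIn
  have hfr : ∀ q, frontier (connectedComponentIn (range c)ᶜ q) ⊆ range c :=
    frontier_component_subset hK.isClosed
  have hdisj : ∀ q, Disjoint (connectedComponentIn (range c)ᶜ q) (range c) := fun q =>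
    disjoint_left.2 fun x hx => connectedComponentIn_subset _ _ hx
  -- with degrees `n`, `m` of `z - p`, `z - q` along the curve, `(z - p) ^ m / (z - q) ^ n` has degree `0`
  have huniq : ∀ q ∈ (range c)ᶜ, q ∉ W → q ∈ connectedComponentIn (range c)ᶜ p := by
    intro q hq hqW
    by_contra hqp
    have hqcl : q ∉ closure (connectedComponentIn (range c)ᶜ p) := by
      intro h
      obtain ⟨x, hx, hx'⟩ := mem_closure_iff.1 h _ (hopen q) (mem_connectedComponentIn hq)
      rw [component_eq_of_mem hx' hx] at hqp
      exact hqp (mem_connectedComponentIn hq)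
    have hpne : ∀ x, c x - p ≠ 0 := fun x h => hp ⟨x, sub_eq_zero.1 h⟩
    have hqne : ∀ x, c x - q ≠ 0 := fun x h => hq ⟨x, sub_eq_zero.1 h⟩
    obtain ⟨n, g, hg⟩ := exists_degree (f := fun x => c x - p) (by fun_prop) hpne
    obtain ⟨m, k, hk⟩ := exists_degree (f := fun x => c x - q) (by fun_prop) hqne
    have hm : m = 0 := by
      refine eq_zero_of_log hcl (hopen p) (hb p hpW) (hfr p) (mem_connectedComponentIn hp) hqcl
        (n := m) (m := n) ((m : ℂ) • g - (n : ℂ) • k) fun x => ?_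
      have hx : (x : ℂ) ≠ 0 := Circle.coe_ne_zero x
      simp only [ContinuousMap.sub_apply, ContinuousMap.smul_apply, smul_eq_mul]
      rw [hg, hk, mul_zpow, mul_zpow, exp_sub, exp_int_mul, exp_int_mul, ← zpow_mul, ← zpow_mul,
        mul_comm m n]
      have : exp (k x) ^ n ≠ 0 := zpow_ne_zero _ (exp_ne_zero _)
      field_simp
    exact no_log_sub hcl (hopen q) (hb q hqW) (hfr q) (mem_connectedComponentIn hq) k
      (by simpa [hm] using hk)
  refine ⟨connectedComponentIn (range c)ᶜ p, W, hopen p, hopen w,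
    isConnected_connectedComponentIn_iff.2 hp, isConnected_connectedComponentIn_iff.2 hw, ?_, ?_,
    hb p hpW, hwb, ?_, ?_⟩
  · refine disjoint_left.2 fun x hx hxW => hpW ?_
    rw [show W = _ from component_eq_of_mem hxW hx]
    exact mem_connectedComponentIn hp
  · refine Subset.antisymm (union_subset (connectedComponentIn_subset _ _) hWsub) fun q hq => ?_
    by_cases h : q ∈ W
    exacts [Or.inr h, Or.inl (huniq q hq h)]
  · exact frontier_eq_range hc hi (hopen p) ⟨p, mem_connectedComponentIn hp⟩ (hdisj p) (hfr p)
  · exact frontier_eq_range hc hi (hopen w) ⟨w, mem_connectedComponentIn hw⟩ (hdisj w) (hfr w)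

/-! ### Passing to a simply connected domain -/

lemma continuousAt_indicator_of {V₁ V₂ : Set ℂ} (h₁ : IsOpen V₁) (h₂ : IsOpen V₂)
    (hd : Disjoint V₁ V₂) {ρ : ℂ → ℝ} (hρ : Continuous ρ) {z : ℂ}
    (hz : z ∈ V₁ ∨ z ∈ V₂ ∨ ρ z = 0) : ContinuousAt (V₁.indicator ρ) z := by
  rcases hz with h | h | h
  · refine hρ.continuousAt.congr ?_
    filter_upwards [h₁.mem_nhds h] with x hx
    rw [indicator_of_mem hx]
  · refine (continuousAt_const (y := (0 : ℝ))).congr ?_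
    filter_upwards [h₂.mem_nhds h] with x hx
    rw [indicator_of_notMem (disjoint_right.1 hd hx)]
  · have h0 : V₁.indicator ρ z = 0 := by
      by_cases hz : z ∈ V₁ <;> simp [hz, h]
    rw [ContinuousAt, h0]
    refine squeeze_zero_norm (fun x => norm_indicator_le_norm_self ρ x) ?_
    have := hρ.norm.continuousAt (x := z)
    simpa [ContinuousAt, h] using this

/-- Unicoherence of the plane: if two connected open sets cover `ℂ`, their intersection is
connected. Given a separation `V₁ ⊔ V₂` of the intersection and a function `ρ` that is `0` off `Ω`
and `1` off `W`, the map equal to `exp (2πiρ)` on `V₁` and to `1` elsewhere is continuous. Comparing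
its logarithm with `2πiρ` on `W` and with `2πi(ρ - 1)` on `Ω` gives a contradiction. -/
lemma isPreconnected_inter_of_cover {W Ω : Set ℂ} (hWo : IsOpen W) (hΩo : IsOpen Ω)
    (hW : IsPreconnected W) (hΩ : IsPreconnected Ω) (hcov : W ∪ Ω = univ) :
    IsPreconnected (W ∩ Ω) := by
  classical
  intro u v hu hv hsub ⟨x₁, hx₁⟩ ⟨x₂, hx₂⟩
  by_contra hne
  set V₁ := W ∩ Ω ∩ u with hV₁
  set V₂ := W ∩ Ω ∩ v with hV₂
  have h₁ : IsOpen V₁ := (hWo.inter hΩo).inter hu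
  have h₂ : IsOpen V₂ := (hWo.inter hΩo).inter hv
  have hd : Disjoint V₁ V₂ := disjoint_left.2 fun x h h' => hne ⟨x, h.1, h.2, h'.2⟩
  have hV : ∀ z ∈ W, z ∈ Ω → z ∈ V₁ ∨ z ∈ V₂ := fun z h h' =>
    (hsub ⟨h, h'⟩).imp (fun k => ⟨⟨h, h'⟩, k⟩) (fun k => ⟨⟨h, h'⟩, k⟩)
  obtain ⟨ρ, hρ0, hρ1, -⟩ := exists_continuous_zero_one_of_isClosed hΩo.isClosed_compl
    hWo.isClosed_compl (by
      rw [disjoint_compl_left_iff_subset]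
      intro z hz
      exact ((hcov ▸ mem_univ z : z ∈ W ∪ Ω)).resolve_left hz)
  let σ : ℂ → ℝ := V₁.indicator ρ
  let τ : ℂ → ℝ := V₁.indicator fun z => ρ z - 1
  have hσ : ∀ z ∈ W, ContinuousAt σ z := fun z hz => by
    refine continuousAt_indicator_of h₁ h₂ hd ρ.continuous ?_
    by_cases hzΩ : z ∈ Ω
    · exact (hV z hz hzΩ).imp_right Or.inl
    · exact Or.inr (Or.inr (hρ0 hzΩ))
  have hτ : ∀ z ∈ Ω, ContinuousAt τ z := fun z hz => by
    refine continuousAt_indicator_of h₁ h₂ hd (by fun_prop) ?_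
    by_cases hzW : z ∈ W
    · exact (hV z hzW hz).imp_right Or.inl
    · have h1 : ρ z = 1 := hρ1 hzW
      exact Or.inr (Or.inr (by simp [h1]))
  have hστ : ∀ z, exp (2 * Real.pi * I * σ z) = exp (2 * Real.pi * I * τ z) := fun z => by
    by_cases hz : z ∈ V₁
    · simp only [σ, τ, indicator_of_mem hz]
      rw [← exp_periodic (2 * Real.pi * I * ((ρ z - 1 : ℝ) : ℂ))]
      push_cast
      ring_nf
    · simp only [σ, τ, indicator_of_notMem hz]
  have hF : Continuous fun z => exp (2 * Real.pi * I * σ z) := by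
    rw [continuous_iff_continuousAt]
    intro z
    rcases (hcov ▸ mem_univ z : z ∈ W ∪ Ω) with hz | hz
    · have := hσ z hz
      fun_prop
    · simp only [hστ]
      have := hτ z hz
      fun_prop
  obtain ⟨L, hL, hLe⟩ := exists_log_of_convex (S := univ) convex_univ univ_nonempty isOpen_univ
    hF.continuousOn (fun z _ => exp_ne_zero _)
  have hL' : Continuous L := continuousOn_univ.1 hL
  have e1 := const_of_exp_const (h := fun z => L z - 2 * Real.pi * I * σ z) (w := 1) hW
    (fun z hz => by
      have := hσ z hz
      exact ContinuousAt.continuousWithinAt (by fun_prop))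
    (fun z _ => by rw [exp_sub, hLe z (mem_univ _), div_self (exp_ne_zero _)]) hx₁.1.1 hx₂.1.1
  have e2 := const_of_exp_const (h := fun z => L z - 2 * Real.pi * I * τ z) (w := 1) hΩ
    (fun z hz => by
      have := hτ z hz
      exact ContinuousAt.continuousWithinAt (by fun_prop))
    (fun z _ => by rw [exp_sub, hLe z (mem_univ _), hστ, div_self (exp_ne_zero _)])
    hx₁.1.2 hx₂.1.2
  have hx₂' : x₂ ∉ V₁ := disjoint_right.1 hd hx₂
  simp only [σ, τ, indicator_of_mem hx₁, indicator_of_notMem hx₂'] at e1 e2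
  push_cast at e1 e2
  have : 2 * (Real.pi : ℂ) * I = 0 := by linear_combination e2 - e1
  simp [Real.pi_ne_zero] at this

end JordanLog

/-- **The Jordan curve theorem in a simply connected planar domain.** If `Ω ⊆ ℂ` is a
simply connected domain and `c : S¹ → Ω` is an injective continuous map, then
`Ω \ c(S¹)` consists of exactly two domains, exactly one of which has compact closure
contained in `Ω`, and both of them have `c(S¹)` as their boundary relative to `Ω`. -/
theorem jordan_curve_in_simply_connected_domain
    (Ω : Set ℂ) (hΩopen : IsOpen Ω) (hΩconn : IsConnected Ω)
    (hΩsc : SimplyConnectedSpace Ω)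
    (c : Metric.sphere (0 : ℂ) 1 → ℂ)
    (hccont : Continuous c) (hcinj : Function.Injective c)
    (hcmem : Set.range c ⊆ Ω) :
    ∃ U V : Set ℂ,
      U.Nonempty ∧ V.Nonempty ∧
      IsOpen U ∧ IsOpen V ∧ IsConnected U ∧ IsConnected V ∧
      U ∩ V = ∅ ∧ U ∪ V = Ω \ Set.range c ∧
      (IsCompact (closure U) ∧ closure U ⊆ Ω) ∧
      ¬(IsCompact (closure V) ∧ closure V ⊆ Ω) ∧
      Ω ∩ frontier U = Set.range c ∧
      Ω ∩ frontier V = Set.range c := by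
  let ι : Circle → Metric.sphere (0 : ℂ) 1 := fun w => ⟨w, by simp [Circle.norm_coe]⟩
  have hιs : Function.Surjective ι := fun z => ⟨⟨z, by
    simp [Submonoid.unitSphere]⟩, rfl⟩
  have hιi : Function.Injective ι := fun w w' h => Circle.ext (congrArg Subtype.val h)
  have hrange : range (c ∘ ι) = range c := hιs.range_comp c
  have hc : Continuous (c ∘ ι) := hccont.comp (by fun_prop)
  have hi : Function.Injective (c ∘ ι) := hcinj.comp hιi
  obtain ⟨U, W, hU, hW, hUc, hWc, hd, hun, hUb, hWb, hUf, hWf⟩ := JordanLog.jordan_plane hc hi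
  rw [hrange] at hun hUf hWf
  -- a logarithm of `z - p` on `Ω` for `p ∉ Ω` would restrict to the curve
  have hUΩ : U ⊆ Ω := by
    intro p hp
    by_contra hpΩ
    obtain ⟨g, hg, hg'⟩ := exists_continuousOn_eqOn_exp_comp (U := Ω) hΩsc hΩopen
      (g := fun z => z - p) (by fun_prop) (by
        rintro ⟨x, hx, h⟩
        exact hpΩ (by rwa [← sub_eq_zero.1 h]))
    have hm : ∀ x, (c ∘ ι) x ∈ Ω := fun x => hcmem (mem_range_self _)
    exact JordanLog.no_log_sub (hc.isClosedEmbedding hi) hU hUb (by rw [hUf, hrange]) hp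
      ⟨fun x => g ((c ∘ ι) x), hg.comp_continuous hc hm⟩ (fun x => (hg' (hm x)).symm)
  have hclU : closure U ⊆ Ω := by
    rw [closure_eq_self_union_frontier, hUf]
    exact union_subset hUΩ hcmem
  have hcov : W ∪ Ω = univ := by
    refine eq_univ_of_forall fun z => ?_
    by_cases hz : z ∈ range c
    · exact Or.inr (hcmem hz)
    · rcases (hun ▸ hz : z ∈ U ∪ W) with h | h
      exacts [Or.inr (hUΩ h), Or.inl h]
  have hfrV : Ω ∩ frontier (W ∩ Ω) = range c := by
    have h1 : Ω ∩ frontier (W ∩ Ω) = Ω ∩ frontier W := by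
      rw [(hW.inter hΩopen).frontier_eq, hW.frontier_eq]
      ext z
      constructor
      · rintro ⟨hz, h, h'⟩
        exact ⟨hz, closure_mono inter_subset_left h, fun k => h' ⟨k, hz⟩⟩
      · rintro ⟨hz, h, h'⟩
        refine ⟨hz, ?_, fun k => h' k.1⟩
        rw [inter_comm]
        exact hΩopen.inter_closure ⟨hz, h⟩
    rw [h1, hWf]
    exact inter_eq_right.2 hcmem
  have hVne : (W ∩ Ω).Nonempty := by
    have hx : c (ι 1) ∈ Ω ∩ frontier (W ∩ Ω) := hfrV ▸ mem_range_self _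
    exact closure_nonempty_iff.1 ⟨_, hx.2.1⟩
  refine ⟨U, W ∩ Ω, hUc.nonempty, hVne, hU, hW.inter hΩopen, hUc,
    ⟨hVne, JordanLog.isPreconnected_inter_of_cover hW hΩopen hWc.isPreconnected
      hΩconn.isPreconnected hcov⟩, ?_, ?_, ⟨hUb.isCompact_closure, hclU⟩, ?_, ?_, hfrV⟩
  · exact (hd.mono_right inter_subset_left).inter_eq
  · rw [← inter_eq_right.2 hUΩ, inter_comm Ω U, ← union_inter_distrib_right, hun, sdiff_eq,
      inter_comm]
  -- otherwise `W ∩ Ω` would be relatively closed in `W`, hence all of the unbounded set `W`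
  · rintro ⟨hcomp, hsub⟩
    have hWV : W ⊆ W ∩ Ω := by
      refine hWc.isPreconnected.subset_of_closure_inter_subset (hW.inter hΩopen)
        (by rwa [← inter_assoc, inter_self]) fun z hz => ⟨hz.2, hsub hz.1⟩
    exact hWb (hcomp.isBounded.subset (hWV.trans subset_closure))
  · rw [hUf]
    exact inter_eq_right.2 hcmem
end
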